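/- Up to isomorphism, there are exactly 92 distributive quasigroups of order 243 that are not medial. -/

import Mathlib

/-- A quasigroup: a set with a binary operation whose left and right
translations are bijections. -/
structure Quasigroup (Q : Type) where
  mul : Q → Q → Q
  leftBij : ∀ x, Function.Bijective fun y => mul x y
  rightBij : ∀ x, Function.Bijective fun y => mul y x

namespace Quasigroup

/-- Mediality: (x*y)*(u*v) = (x*u)*(y*v). -/
def Medial {Q : Type} (q : Quasigroup Q) : Prop :=
  ∀ x y u v, q.mul (q.mul x y) (q.mul u v) = q.mul (q.mul x u) (q.mul y v)

/-- Distributivity: both left and right self-distributivity. -/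
def Distributive {Q : Type} (q : Quasigroup Q) : Prop :=
  (∀ x y z, q.mul x (q.mul y z) = q.mul (q.mul x y) (q.mul x z)) ∧
  (∀ x y z, q.mul (q.mul x y) z = q.mul (q.mul x z) (q.mul y z))

/-- Idempotency: x*x = x. -/
def Idempotent {Q : Type} (q : Quasigroup Q) : Prop := ∀ x, q.mul x x = x

/-- Mendelsohn quasigroup: idempotent and semisymmetric. -/
def Mendelsohn {Q : Type} (q : Quasigroup Q) : Prop :=
  Idempotent q ∧ ∀ x y, q.mul y (q.mul x y) = x

/-- A subquasigroup: a subset closed under multiplication, left division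
and right division. -/
def IsSubquasigroup {Q : Type} (q : Quasigroup Q) (S : Set Q) : Prop :=
  (∀ x ∈ S, ∀ y ∈ S, q.mul x y ∈ S) ∧
  (∀ x ∈ S, ∀ z ∈ S, ∀ y, q.mul x y = z → y ∈ S) ∧
  (∀ y ∈ S, ∀ z ∈ S, ∀ x, q.mul x y = z → x ∈ S)

/-- The smallest subquasigroup containing `a`, `b`, `c`. -/
def genSet {Q : Type} (q : Quasigroup Q) (a b c : Q) : Set Q :=
  ⋂₀ {S : Set Q | IsSubquasigroup q S ∧ a ∈ S ∧ b ∈ S ∧ c ∈ S}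

/-- Trimediality: every subquasigroup generated by three elements is medial. -/
def Trimedial {Q : Type} (q : Quasigroup Q) : Prop :=
  ∀ a b c : Q, ∀ x ∈ genSet q a b c, ∀ y ∈ genSet q a b c,
    ∀ u ∈ genSet q a b c, ∀ v ∈ genSet q a b c,
      q.mul (q.mul x y) (q.mul u v) = q.mul (q.mul x u) (q.mul y v)

/-- Isomorphism of quasigroups. -/
def Iso {Q₁ Q₂ : Type} (q₁ : Quasigroup Q₁) (q₂ : Quasigroup Q₂) : Prop :=
  ∃ f : Q₁ ≃ Q₂, ∀ x y, f (q₁.mul x y) = q₂.mul (f x) (f y)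

end Quasigroup

/-!
By the theorem of Belousov and Soublin, a finite distributive quasigroup has the form
`x * y = (x + x - y) + θ y - θ x`, where `+` is a commutative Moufang loop and `θ` is an
endomorphism of the loop with central values; it is medial exactly when the loop is associative. In
a nonassociative loop of odd order at most 243, the associators generate a central subgroup of
order 3, and the associator is the determinant of three coordinates modulo 3. The loop is therefore
an abelian group whose addition is twisted by a cubic form in these coordinates. Such a quasigroup
is determined by an abelian group with a surjection `π` to `𝔽₃³`, an endomorphism `θ` and an
embedding `ι` of `𝔽₃`, and isomorphic quasigroups correspond to equivalent data.

In order 243 the kernel of `π` has order 9 and contains the image of `ι`, so multiplication by 3 and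
`θ` are described by two or four row vectors over `𝔽₃`, according to whether one of these two maps
is nonzero on the kernel or not. Equivalent data correspond to orbits of these tuples of rows under
`SL₃(𝔽₃)` and the changes of generator of the kernel. Reduced row echelon forms represent the orbits
of `SL₃(𝔽₃)`; minimal ones under the changes of generator are counted by computation.
-/

/-! ### Commutative Moufang loops -/

/-- A commutative Moufang loop, written additively. -/
class CommMoufangLoop (Q : Type*) extends AddZeroClass Q, AddCommMagma Q, Neg Q where
  neg_add_cancel_left (x y : Q) : -x + (x + y) = y
  moufang (x y z : Q) : (x + x) + (y + z) = (x + y) + (x + z)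

namespace CommMoufangLoop

variable {Q : Type*} [CommMoufangLoop Q]

theorem add_neg_cancel_left (x y : Q) : x + (-x + y) = y := by
  have h := congrArg (- -x + ·) (neg_add_cancel_left x (-x + y))
  rwa [neg_add_cancel_left, neg_add_cancel_left] at h

/-- Translation by `x`. -/
def T (x : Q) : Equiv.Perm Q where
  toFun y := x + y
  invFun y := -x + y
  left_inv y := neg_add_cancel_left x y
  right_inv y := add_neg_cancel_left x y

@[simp] theorem T_apply (x y : Q) : T x y = x + y := rfl

@[simp] theorem T_symm_apply (x y : Q) : (T x).symm y = -x + y := rfl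

theorem T_zero : T (0 : Q) = 1 := by ext; simp

theorem T_injective : Function.Injective (T : Q → Equiv.Perm Q) := fun x y h => by
  simpa using DFunLike.congr_fun h 0

theorem T_neg (x : Q) : T (-x) = (T x)⁻¹ := by ext; rfl

theorem neg_add_self (x : Q) : -x + x = 0 := by simpa using neg_add_cancel_left x 0

theorem add_neg_self (x : Q) : x + -x = 0 := by rw [add_comm, neg_add_self]

theorem neg_zero : -(0 : Q) = 0 := by simpa using neg_add_self (0 : Q)

theorem neg_neg (x : Q) : - -x = x := T_injective <| by simp [T_neg]

theorem neg_injective : Function.Injective (Neg.neg : Q → Q) := fun x y h => by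
  rw [← neg_neg x, h, neg_neg]

theorem eq_zero_of_add_eq_right {x y : Q} (h : x + y = y) : x = 0 := by
  rw [add_comm] at h
  simpa [h, neg_add_self] using (neg_add_cancel_left y x).symm

theorem add_neg_cancel_right (x y : Q) : (x + y) + -y = x := by
  rw [add_comm, add_comm x, neg_add_cancel_left]

theorem T_add_self (x : Q) : T (x + x) = T x * T x := by
  ext y; simpa [add_comm (x + y) x] using moufang x y 0

theorem add_self_add (x y : Q) : (x + x) + y = x + (x + y) := DFunLike.congr_fun (T_add_self x) y

theorem T_add (x y : Q) : T (x + y) = T x * T x * T y * (T x)⁻¹ := by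
  rw [eq_mul_inv_iff_mul_eq, ← T_add_self]
  ext z; exact (moufang x y z).symm

theorem T_add' (x y : Q) : T (x + y) = T y * T y * T x * (T y)⁻¹ := by rw [add_comm, T_add]

theorem neg_add (x y : Q) : -(x + y) = -x + -y := by
  have hy : x + -(x + y) = -y := by
    simpa [add_neg_cancel_right, add_comm] using neg_add_cancel_left (x + y) (-y)
  rw [← hy, neg_add_cancel_left]

/-- The inner map measuring the failure of associativity: `x + (y + z) = (x + y) + inner x y z`. -/
def inner (x y : Q) : Equiv.Perm Q := (T (x + y))⁻¹ * T x * T y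

theorem add_add_eq (x y z : Q) : x + (y + z) = (x + y) + inner x y z := by
  simp [inner, add_neg_cancel_left]

theorem inner_eq (x y : Q) : inner x y = T x * (T y)⁻¹ * (T x)⁻¹ * T y := by
  rw [inner, T_add]; group

theorem inner_zero (x y : Q) : inner x y 0 = 0 := by simp [inner, neg_add_self]

theorem inner_add (x y s t : Q) : inner x y (s + t) = inner x y s + inner x y t := by
  have add_add_add (x s t : Q) : x + (x + (s + t)) = (x + s) + (x + t) := by
    rw [← moufang, ← T_apply (x + x), T_add_self]; rfl
  have key (s t : Q) : (T x * T x * (T y)⁻¹ * (T y)⁻¹ * (T x)⁻¹ * (T x)⁻¹ * T y * T y) (s + t) =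
      inner x y s + inner x y t := by
    rw [inner_eq]
    simp only [← T_neg, Equiv.Perm.mul_apply, T_apply, add_add_add]
  have h := key (s + t) 0
  rwa [inner_zero, add_zero, add_zero, key, eq_comm] at h

theorem inner_neg (x y z : Q) : inner x y (-z) = -inner x y z := by
  have h : inner x y z + inner x y (-z) = 0 := by
    rw [← inner_add, add_comm, neg_add_self, inner_zero]
  rw [← neg_add_cancel_left (inner x y z) (inner x y (-z)), h, add_zero]

theorem inner_mul_T (x y z : Q) : inner x y * T z = T (inner x y z) * inner x y := by
  ext s; exact inner_add x y z s

theorem inner_left (x y : Q) : inner x y x = x := by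
  simp [inner, add_comm y x, add_comm x (x + y), neg_add_cancel_left]

theorem inner_right (x y : Q) : inner x y y = y := by
  have : x + (y + y) = (x + y) + y := by
    rw [add_comm x, add_comm (x + y), add_comm x, ← T_apply (y + y), T_add_self]; rfl
  simp [inner, this, neg_add_cancel_left]

theorem commute_inner_T_left (x y : Q) : Commute (inner x y) (T x) := by
  rw [Commute, SemiconjBy, inner_mul_T, inner_left]

theorem commute_inner_T_right (x y : Q) : Commute (inner x y) (T y) := by
  rw [Commute, SemiconjBy, inner_mul_T, inner_right]

theorem T_add_eq_mul_inner_inv (x y : Q) : T (x + y) = T x * T y * (inner x y)⁻¹ := by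
  rw [inner]; group

theorem inner_mul_T_mul_T (x y : Q) : inner x y * (T x * T y) = T y * T x := by
  have h := (T_add_eq_mul_inner_inv x y).symm.trans (T_add x y)
  have hx := (commute_inner_T_left x y).inv_left
  have hxy := (commute_inner_T_left x y).mul_right (commute_inner_T_right x y)
  generalize inner x y = D, T x = A, T y = B at *
  calc D * (A * B) = A⁻¹ * (A * A * B * A⁻¹) * A * D := by rw [hxy.eq]; group
    _ = B * (D⁻¹ * A) * D := by rw [← h]; group
    _ = B * A := by rw [hx.eq]; group

theorem inner_eq' (x y : Q) : inner x y = T y * T x * (T y)⁻¹ * (T x)⁻¹ := by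
  rw [← inner_mul_T_mul_T]; group

theorem inner_pow_three (x y : Q) : inner x y ^ 3 = 1 := by
  have h := (T_add_eq_mul_inner_inv x y).symm.trans (T_add' x y)
  have hBA := inner_mul_T_mul_T x y
  have hy := commute_inner_T_right x y
  have hxy := ((commute_inner_T_left x y).mul_right hy).inv_left
  generalize inner x y = D, T x = A, T y = B at *
  have hD : D * D * (A * B) = D⁻¹ * (A * B) :=
    calc D * D * (A * B) = D * (B * A) := by rw [← hBA]; group
      _ = B * (D * (A * B)) * B⁻¹ := by rw [← mul_assoc, hy.eq]; group
      _ = D⁻¹ * (A * B) := by rw [hxy.eq, h, hBA]; group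
  rw [pow_succ, pow_two, mul_right_cancel hD, inv_mul_cancel]

theorem inner_comm (x y : Q) : inner y x = (inner x y)⁻¹ := by
  rw [inner_eq' y x, inner_eq' x y]; group

theorem inner_add_self_right (x y : Q) : inner x (y + x) = inner x y := by
  have hx := commute_inner_T_left x y
  rw [inner_eq' x (y + x), add_comm y x, T_add_eq_mul_inner_inv]
  calc T x * T y * (inner x y)⁻¹ * T x * (T x * T y * (inner x y)⁻¹)⁻¹ * (T x)⁻¹
      = T x * T y * ((inner x y)⁻¹ * T x) * inner x y * (T y)⁻¹ * (T x)⁻¹ * (T x)⁻¹ := by group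
    _ = T x * (T y * T x * (T y)⁻¹ * (T x)⁻¹) * (T x)⁻¹ := by rw [hx.inv_left.eq]; group
    _ = inner x y := by rw [← inner_eq', ← hx.eq]; group

theorem inner_neg_right (x y : Q) : inner x (-y) = (inner x y)⁻¹ := by
  rw [inner_eq', T_neg, inner_eq]; group

theorem inner_inv_apply (x y z : Q) : (inner x y)⁻¹ z = inner y x z := by
  rw [inner_comm x y]

theorem inner_inner (x y z : Q) : inner x y (inner y x z) = z := by
  rw [inner_comm y x]
  exact Equiv.symm_apply_apply _ _

theorem inner_neg_add_apply (x y z : Q) :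
    inner x (-y) ((x + y) + z) = inner x z ((x + y) + z) := by
  have hyx : y + (x + z) = inner y x ((x + y) + z) := by
    rw [inner_add, inner_add, inner_left, inner_right, add_add_eq, add_comm y x]
  have hzx : z + (x + y) = inner z x (y + (x + z)) := by
    rw [inner_add, inner_add, inner_left, inner_right, add_add_eq, add_comm (z + x),
      add_comm z x]
  rw [inner_neg_right, inner_inv_apply, ← hyx, add_comm (x + y), hzx, inner_inner]

theorem inner_add_right_apply (x y z : Q) : inner x (y + z) z = inner x y z := by
  have h := inner_neg_add_apply x (-x + -y) (y + z)
  rwa [add_neg_cancel_left, neg_add_cancel_left, neg_add, neg_neg, neg_neg, add_comm x y,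
    inner_add_self_right, eq_comm] at h

/-- The associator, with `x + (y + z) = (x + y) + (z + associator x y z)`. -/
def associator (x y z : Q) : Q := -z + inner x y z

theorem inner_apply (x y z : Q) : inner x y z = z + associator x y z := by
  rw [associator, add_neg_cancel_left]

theorem associator_eq_of_inner_apply {x y z t : Q} (h : inner x y z = z + t) :
    associator x y z = t := by
  rw [associator, h, neg_add_cancel_left]

theorem associator_swap_right_eq_neg_inner (x y z : Q) :
    associator x z y = -(inner z y (associator x y z)) := by
  apply associator_eq_of_inner_apply
  have hfix : inner x (y + z) (y + z) = y + z := inner_right _ _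
  rw [inner_add, inner_add_right_apply, add_comm y z, inner_add_right_apply,
    inner_apply x y z] at hfix
  have h : inner x z y = (y + z) + (-z + -associator x y z) := by
    rw [add_comm y z, ← hfix, ← neg_add, add_neg_cancel_right]
  have hz : inner z y (-z + -associator x y z) = -z + -inner z y (associator x y z) := by
    rw [inner_add, inner_neg, inner_neg, inner_left]
  rw [h, ← inner_inner y z (-z + _), hz, ← add_add_eq, add_neg_cancel_left]

theorem inner_associator_swap_right (x y z : Q) :
    inner z y (associator x z y) = associator x z y := by
  have hassoc : associator x z (y + z) = associator x z y := by
    have h : associator x (y + z) z = associator x y z := by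
      rw [associator, inner_add_right_apply, associator]
    rw [associator_swap_right_eq_neg_inner, h, inner_add_self_right,
      associator_swap_right_eq_neg_inner x y z]
  have h : z + (y + associator x z y) = (z + y) + associator x z y := by
    rw [add_comm z, ← inner_apply, add_comm z y, ← hassoc, ← inner_apply, inner_add, inner_right]
  rw [add_add_eq] at h
  exact (T (z + y)).injective h

theorem associator_swap_right (x y z : Q) : associator x z y = -associator x y z := by
  apply (inner z y).injective
  rw [inner_associator_swap_right, inner_neg, ← associator_swap_right_eq_neg_inner]

theorem inner_associator_right (x y z : Q) : inner y z (associator x y z) = associator x y z :=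
  inner_associator_swap_right x z y

theorem inner_associator_left (x y z : Q) : inner x y (associator x y z) = associator x y z := by
  have hassoc : associator x z (y + x) = associator x z y := by
    rw [associator_swap_right, associator, inner_add_self_right, ← associator,
      ← associator_swap_right]
  have h : x + (y + associator x z y) = (x + y) + associator x z y := by
    rw [add_comm x, ← inner_apply, add_comm x y, ← hassoc, ← inner_apply, inner_add, inner_left]
  rw [add_add_eq] at h
  apply neg_injective
  rw [← inner_neg, ← associator_swap_right]
  exact (T (x + y)).injective h

theorem inner_associator_outer (x y z : Q) :
    inner x z (associator x y z) = associator x y z := by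
  apply neg_injective
  rw [← inner_neg, ← associator_swap_right, inner_associator_left]

theorem associator_swap_left (x y z : Q) : associator y x z = -associator x y z := by
  apply associator_eq_of_inner_apply
  apply (inner x y).injective
  rw [inner_inner, inner_add, inner_neg, inner_associator_left, inner_apply, add_neg_cancel_right]

theorem associator_rotate (x y z : Q) : associator y z x = associator x y z := by
  rw [associator_swap_right, associator_swap_left, neg_neg]

theorem inner_pow_apply (x y z : Q) (n : ℕ) :
    (inner x y ^ n) z = (T (associator x y z) ^ n) z := by
  induction n with
  | zero => rfl
  | succ n ih =>
    have hcomm : Commute (inner x y) (T (associator x y z)) := by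
      rw [Commute, SemiconjBy, inner_mul_T, inner_associator_left]
    rw [pow_succ', Equiv.Perm.mul_apply, ih, ← Equiv.Perm.mul_apply, (hcomm.pow_right n).eq,
      Equiv.Perm.mul_apply, inner_apply, add_comm, ← T_apply, ← Equiv.Perm.mul_apply, ← pow_succ]

theorem associator_add_associator_add_associator (x y z : Q) :
    associator x y z + (associator x y z + associator x y z) = 0 := by
  have h := inner_pow_apply x y z 3
  generalize associator x y z = a at *
  have hT : T (a + (a + a)) = T a ^ 3 := by
    rw [T_add, T_add_self, pow_succ', pow_two]; group
  apply eq_zero_of_add_eq_right (y := z)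
  rw [← T_apply, hT, ← h, inner_pow_three, Equiv.Perm.one_apply]

/-- The relation `x + (y + z) = (x + y) + z`, in the form of a fixed point. -/
def Associates (x y z : Q) : Prop := inner x y z = z

theorem associates_iff {x y z : Q} : Associates x y z ↔ associator x y z = 0 :=
  ⟨fun h => associator_eq_of_inner_apply (by rw [h, add_zero]),
    fun h => by rw [Associates, inner_apply, h, add_zero]⟩

theorem Associates.swap_left {x y z : Q} (h : Associates x y z) : Associates y x z := by
  rw [associates_iff] at *; rw [associator_swap_left, h, neg_zero]

theorem Associates.swap_right {x y z : Q} (h : Associates x y z) : Associates x z y := by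
  rw [associates_iff] at *; rw [associator_swap_right, h, neg_zero]

theorem Associates.rotate {x y z : Q} (h : Associates x y z) : Associates y z x :=
  h.swap_left.swap_right

theorem associates_iff_add_assoc {x y z : Q} : Associates x y z ↔ (x + y) + z = x + (y + z) := by
  rw [add_add_eq, eq_comm]
  exact (T (x + y)).injective.eq_iff.symm

/-- Subloops. -/
structure IsSubloop (S : Set Q) : Prop where
  zero_mem : 0 ∈ S
  add_mem {x y : Q} : x ∈ S → y ∈ S → x + y ∈ S
  neg_mem {x : Q} : x ∈ S → -x ∈ S

/-- The subloop generated by a set. -/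
def closure (s : Set Q) : Set Q := ⋂₀ {S | IsSubloop S ∧ s ⊆ S}

theorem isSubloop_closure (s : Set Q) : IsSubloop (closure s) where
  zero_mem _ hS := hS.1.zero_mem
  add_mem hx hy S hS := hS.1.add_mem (hx S hS) (hy S hS)
  neg_mem hx S hS := hS.1.neg_mem (hx S hS)

theorem subset_closure (s : Set Q) : s ⊆ closure s := fun _ hx _ hS => hS.2 hx

theorem isSubloop_univ : IsSubloop (Set.univ : Set Q) :=
  ⟨trivial, fun _ _ => trivial, fun _ => trivial⟩

theorem isSubloop_singleton_zero : IsSubloop ({0} : Set Q) where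
  zero_mem := rfl
  add_mem := by rintro _ _ rfl rfl; exact add_zero 0
  neg_mem := by rintro _ rfl; exact neg_zero

theorem IsSubloop.inter {S S' : Set Q} (hS : IsSubloop S) (hS' : IsSubloop S') :
    IsSubloop (S ∩ S') where
  zero_mem := ⟨hS.zero_mem, hS'.zero_mem⟩
  add_mem hx hy := ⟨hS.add_mem hx.1 hy.1, hS'.add_mem hx.2 hy.2⟩
  neg_mem hx := ⟨hS.neg_mem hx.1, hS'.neg_mem hx.2⟩

theorem IsSubloop.closure_subset {s S : Set Q} (hS : IsSubloop S) (h : s ⊆ S) : closure s ⊆ S :=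
  fun _ hx => hx S ⟨hS, h⟩

theorem IsSubloop.mem_of_add_mem {S : Set Q} (hS : IsSubloop S) {x y : Q} (hx : x ∈ S)
    (h : x + y ∈ S) : y ∈ S := by
  simpa [neg_add_cancel_left] using hS.add_mem (hS.neg_mem hx) h

theorem IsSubloop.inner_mem {S : Set Q} (hS : IsSubloop S) {x y z : Q} (hx : x ∈ S) (hy : y ∈ S)
    (hz : z ∈ S) : inner x y z ∈ S :=
  hS.mem_of_add_mem (hS.add_mem hx hy)
    (add_add_eq x y z ▸ hS.add_mem hx (hS.add_mem hy hz))

theorem IsSubloop.associator_mem {S : Set Q} (hS : IsSubloop S) {x y z : Q} (hx : x ∈ S)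
    (hy : y ∈ S) (hz : z ∈ S) : associator x y z ∈ S :=
  hS.add_mem (hS.neg_mem hz) (hS.inner_mem hx hy hz)

theorem isSubloop_setOf_associates (x y : Q) : IsSubloop {s | Associates x y s} where
  zero_mem := inner_zero x y
  add_mem {s t} hs ht := by
    simp only [Set.mem_ofPred_eq, Associates] at *; rw [inner_add, hs, ht]
  neg_mem {s} hs := by
    simp only [Set.mem_ofPred_eq, Associates] at *; rw [inner_neg, hs]

theorem associates_of_mem_closure {a : Q} {A : Set Q} (h : ∀ s ∈ A, ∀ t ∈ A, Associates a s t)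
    {s t : Q} (hs : s ∈ closure A) (ht : t ∈ closure A) : Associates a s t := by
  have hA {s t : Q} (hs : s ∈ A) (ht : t ∈ closure A) : Associates a s t :=
    (isSubloop_setOf_associates a s).closure_subset (h s hs) ht
  exact ((isSubloop_setOf_associates a t).closure_subset (fun s hs => (hA hs ht).swap_right)
    hs).swap_right

theorem associates_associator_of_mem_closure {x y z s t : Q} (hs : s ∈ closure {x, y, z})
    (ht : t ∈ closure {x, y, z}) : Associates (associator x y z) s t := by
  have hxy : Associates (associator x y z) x y :=
    .rotate (.rotate (inner_associator_left x y z))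
  have hxz : Associates (associator x y z) x z :=
    .rotate (.rotate (inner_associator_outer x y z))
  have hyz : Associates (associator x y z) y z :=
    .rotate (.rotate (inner_associator_right x y z))
  refine associates_of_mem_closure ?_ hs ht
  rintro s (rfl | rfl | rfl) t (rfl | rfl | rfl)
  exacts [inner_right _ _, hxy, hxz, hxy.swap_right, inner_right _ _, hyz, hxz.swap_right,
    hyz.swap_right, inner_right _ _]

theorem associates_zero (s t : Q) : Associates 0 s t :=
  .rotate (.rotate (inner_zero s t))

/-- The elements that associate with all pairs from `S`. -/
def centralizer (S : Set Q) : Set Q := {a | ∀ s ∈ S, ∀ t ∈ S, Associates a s t}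

theorem isSubloop_centralizer (S : Set Q) : IsSubloop (centralizer S) where
  zero_mem s _ t _ := associates_zero s t
  add_mem ha hb s hs t ht := ((isSubloop_setOf_associates s t).add_mem (ha s hs t ht).rotate
    (hb s hs t ht).rotate).rotate.rotate
  neg_mem ha s hs t ht :=
    ((isSubloop_setOf_associates s t).neg_mem (ha s hs t ht).rotate).rotate.rotate

/-- The elements that associate with all pairs. -/
def IsCentral (a : Q) : Prop := ∀ s t, Associates a s t

theorem isCentral_iff_mem_centralizer_univ {a : Q} : IsCentral a ↔ a ∈ centralizer Set.univ :=
  ⟨fun h s _ t _ => h s t, fun h s t => h s trivial t trivial⟩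

theorem isSubloop_setOf_isCentral : IsSubloop {a : Q | IsCentral a} := by
  simpa only [isCentral_iff_mem_centralizer_univ] using! isSubloop_centralizer (Set.univ : Set Q)

theorem IsCentral.add {a b : Q} (ha : IsCentral a) (hb : IsCentral b) : IsCentral (a + b) :=
  isSubloop_setOf_isCentral.add_mem ha hb

theorem IsCentral.neg {a : Q} (ha : IsCentral a) : IsCentral (-a) :=
  isSubloop_setOf_isCentral.neg_mem ha

theorem IsCentral.add_assoc {a : Q} (ha : IsCentral a) (x y : Q) : (a + x) + y = a + (x + y) :=
  associates_iff_add_assoc.mp (ha x y)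

theorem IsCentral.add_left_comm {a : Q} (ha : IsCentral a) (x y : Q) :
    x + (a + y) = a + (x + y) := by
  rw [add_comm x, ha.add_assoc, add_comm y]

theorem isCentral_of_forall_commute {f : Equiv.Perm Q} (hf : ∀ x, Commute (T x) f) :
    IsCentral (f 0) := fun s t => by
  have h (x : Q) : x + f 0 = f x := by simpa using DFunLike.congr_fun (hf x).eq 0
  refine .rotate (.rotate (associates_iff_add_assoc.mpr ?_))
  rw [h, h]
  exact (DFunLike.congr_fun (hf s).eq t).symm

end CommMoufangLoop

/-! ### Distributive quasigroups as isotopes of loops -/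

/-- The loop isotope `x + y = R⁻¹ x * L⁻¹ y` of a distributive quasigroup at a base point `zero`,
where `L` and `R` are the two translations by `zero`; `l x` and `r x` are the left and right
translations of the loop. -/
structure DistributiveIsotope (Q : Type*) where
  zero : Q
  l : Q → Equiv.Perm Q
  r : Q → Equiv.Perm Q
  L : Equiv.Perm Q
  R : Equiv.Perm Q
  l_eq_r (x y : Q) : l x y = r y x
  l_zero_left (x : Q) : l zero x = x
  l_zero_right (x : Q) : l x zero = x
  distrib_left (x y z : Q) : l x (l y z) = l (l (R x) y) (l (L x) z)
  distrib_right (x y z : Q) : l (l x y) z = l (l x (R z)) (l y (L z))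
  map_L (x y : Q) : L (l x y) = l (L x) (L y)
  map_R (x y : Q) : R (l x y) = l (R x) (R y)

namespace DistributiveIsotope

open Equiv.Perm

theorem commute_of_braided {G : Type*} [Group G] {A B A' B' W : G} (h₁ : A * B = B' * A)
    (h₂ : A * B' = B' * A') (h₃ : A * B * A = W * B) (h₄ : A * B' * A = W * B') :
    Commute A A' := by
  obtain rfl : B' = A * B * A⁻¹ := eq_mul_inv_of_mul_eq h₁.symm
  obtain rfl : W = A * B * A * B⁻¹ := eq_mul_inv_of_mul_eq h₃.symm
  have hA' : A' = A * (B⁻¹ * A * B) * A⁻¹ := by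
    rw [← inv_mul_eq_iff_eq_mul.mpr h₂]; group
  have hconj : A * (B⁻¹ * A * B) = B⁻¹ * A * B * A := by
    have := congrArg (B⁻¹ * A⁻¹ * · * A) h₄
    simpa [mul_assoc] using this.symm
  rw [hconj, mul_inv_cancel_right] at hA'
  rw [hA']
  exact hconj

theorem commute_of_inv_mul_eq {G : Type*} [Group G] {A B Y : G} (hAB : Commute A B)
    (h : (A * B * Y * B⁻¹)⁻¹ = A⁻¹ * B⁻¹ * Y⁻¹ * B) : Commute Y (A * B * B) := by
  have h' : A * B * Y * B⁻¹ = B⁻¹ * Y * B * A := by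
    rw [← inv_inv (A * B * Y * B⁻¹), h]; group
  calc Y * (A * B * B) = B * (B⁻¹ * Y * B * A) * B := by rw [hAB.eq]; group
    _ = B * (A * B * Y * B⁻¹) * B := by rw [h']
    _ = A * B * B * Y := by rw [← mul_assoc, ← mul_assoc, ← mul_assoc, ← hAB.eq]; group

variable {Q : Type*} (c : DistributiveIsotope Q)

theorem l_eq_mul (x : Q) : c.l x = c.l (c.R x) * c.l (c.L x) := by
  ext z; simpa [c.l_zero_left, c.l_zero_right] using c.distrib_left x c.zero z

theorem commute_l_r (x : Q) : Commute (c.l x) (c.r x) := by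
  obtain ⟨x, rfl⟩ := c.R.surjective x
  have hl : c.l x = c.r (c.L x) * c.l (c.R x) := by
    ext z; simpa [c.l_zero_right, ← c.l_eq_r] using c.distrib_left x z c.zero
  have hr : c.r x = c.l (c.R x) * c.r (c.L x) := by
    ext y; simpa [c.l_zero_left, ← c.l_eq_r] using c.distrib_right c.zero y x
  have hr' : c.r x = c.r (c.L x) * c.r (c.R x) := by
    ext y; simpa [c.l_zero_left, c.l_zero_right, ← c.l_eq_r] using c.distrib_right y c.zero x
  have hW : c.l x * c.l (c.R x) = c.l (c.l (c.R x) (c.R x)) * c.l (c.L x) := by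
    ext z; exact c.distrib_left x (c.R x) z
  have hW' : c.r x * c.l (c.R x) = c.l (c.l (c.R x) (c.R x)) * c.r (c.L x) := by
    ext z; simpa [← c.l_eq_r] using c.distrib_right (c.R x) z x
  exact commute_of_braided (by rw [← c.l_eq_mul, hl]) (by rw [← hr, hr'])
    (by rw [← hW, ← c.l_eq_mul]) (by rw [← hW', ← hr])

/-- The map `c.swap u` carries `y + u` to `u + y`, so it measures the failure of commutativity. -/
def swap (u : Q) : Equiv.Perm Q := c.l u * (c.r u)⁻¹

theorem swap_apply_l (u y : Q) : c.swap u (c.l y u) = c.l u y := by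
  simp [swap, c.l_eq_r y u]

theorem swap_self (u : Q) : c.swap u u = u := by
  simpa [c.l_zero_left, c.l_zero_right] using c.swap_apply_l u c.zero

theorem swap_zero (u : Q) : c.swap u c.zero = c.zero := by
  have hcomm : Commute (c.swap u) (c.l u) :=
    (Commute.refl _).mul_left (c.commute_l_r u).symm.inv_left
  apply (c.l u).injective
  simpa [c.l_zero_right, c.swap_self] using (DFunLike.congr_fun hcomm.eq c.zero).symm

theorem swap_l_eq (u y z : Q) :
    c.swap u (c.l y z) = c.l (c.swap (c.R u) y) (c.swap (c.L u) z) := by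
  have hr : (c.r u)⁻¹ (c.l y z) = c.l ((c.r (c.R u))⁻¹ y) ((c.r (c.L u))⁻¹ z) := by
    rw [inv_eq_iff_eq, ← c.l_eq_r, c.distrib_right]
    simp [c.l_eq_r _ (c.R u), c.l_eq_r _ (c.L u)]
  rw [swap, mul_apply, hr, c.distrib_left]
  rfl

theorem swap_R (u : Q) : c.swap (c.R u) = c.swap u := by
  ext y; simpa [c.l_zero_right, c.swap_zero] using (c.swap_l_eq u y c.zero).symm

theorem swap_L (u : Q) : c.swap (c.L u) = c.swap u := by
  ext y; simpa [c.l_zero_left, c.swap_zero] using (c.swap_l_eq u c.zero y).symm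

theorem swap_l (u y z : Q) : c.swap u (c.l y z) = c.l (c.swap u y) (c.swap u z) := by
  rw [c.swap_l_eq, c.swap_R, c.swap_L]

theorem swap_swap_l_pow (y : Q) (n : ℕ) (u : Q) :
    c.swap u (c.swap y (c.l u ((c.l y ^ (n + 1)) c.zero))) = c.l u ((c.l y ^ (n + 1)) c.zero) := by
  have hy (u : Q) : c.swap u (c.swap y (c.l u y)) = c.l u y := by
    rw [c.swap_apply_l, c.swap_apply_l]
  induction n generalizing u with
  | zero => simpa [c.l_zero_right] using hy u
  | succ n ih =>
    have hyR := hy (c.R u)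
    have ihL := ih (c.L u)
    rw [c.swap_R] at hyR
    rw [c.swap_L] at ihL
    rw [pow_succ', mul_apply, c.distrib_left, c.swap_l, c.swap_l, hyR, ihL]

theorem l_comm [Finite Q] (x y : Q) : c.l x y = c.l y x := by
  have hswap (u y : Q) : c.swap y u = u := by
    have h := c.swap_swap_l_pow y (orderOf (c.l y) - 1) u
    rw [Nat.sub_add_cancel (orderOf_pos (c.l y)), pow_orderOf_eq_one, one_apply,
      c.l_zero_right] at h
    exact (c.swap u).injective (h.trans (c.swap_self u).symm)
  rw [← c.swap_apply_l, hswap]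

theorem l_zero : c.l c.zero = 1 := by ext y; exact c.l_zero_left y

theorem l_R_add (x y : Q) :
    c.l (c.l (c.R x) y) = c.l (c.R x) * c.l (c.L x) * c.l y * (c.l (c.L x))⁻¹ := by
  rw [eq_mul_inv_iff_mul_eq, ← c.l_eq_mul]
  ext z; exact (c.distrib_left x y z).symm

/-- The inverse in the loop. -/
def neg (x : Q) : Q := (c.l x)⁻¹ c.zero

theorem map_neg {f : Equiv.Perm Q} (hf : ∀ x y, f (c.l x y) = c.l (f x) (f y)) (x : Q) :
    f (c.neg x) = c.neg (f x) := by
  have hzero : f c.zero = c.zero := by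
    apply (c.l (f c.zero)).injective
    rw [← hf, c.l_zero_right, c.l_zero_right]
  rw [neg, neg, eq_inv_iff_eq, ← hf]
  simpa using hzero

section Moufang

variable [Finite Q]

theorem commute_l_R_l_L (x : Q) : Commute (c.l (c.R x)) (c.l (c.L x)) := by
  have hl : c.l x = c.l (c.L x) * c.l (c.R x) := by
    ext z
    simpa [c.l_zero_right, c.l_comm _ (c.L x)] using c.distrib_left x z c.zero
  exact (c.l_eq_mul x).symm.trans hl

theorem l_L_add (x y : Q) :
    c.l (c.l (c.L x) y) = c.l (c.L x) * c.l (c.R x) * c.l y * (c.l (c.R x))⁻¹ := by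
  rw [eq_mul_inv_iff_mul_eq, ← (c.commute_l_R_l_L x).eq, ← c.l_eq_mul]
  ext z
  simpa [c.l_comm z, c.l_comm (c.l (c.L x) y)] using (c.distrib_left x z y).symm

theorem l_neg (x : Q) : c.l (c.neg x) = (c.l x)⁻¹ := by
  obtain ⟨x, rfl⟩ := c.L.surjective x
  have h := c.l_L_add x (c.neg (c.L x))
  rw [show c.l (c.L x) (c.neg (c.L x)) = c.zero from Equiv.apply_symm_apply _ _, c.l_zero, eq_comm,
    mul_inv_eq_one, (c.commute_l_R_l_L x).symm.eq, mul_assoc, mul_eq_left] at h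
  exact eq_inv_of_mul_eq_one_right h

theorem neg_l (x y : Q) : c.neg (c.l x y) = c.l (c.neg x) (c.neg y) := by
  have hx : c.l (c.l x y) (c.neg y) = x := by
    rw [c.l_comm, l_neg, inv_eq_iff_eq, c.l_comm]
  have hy : c.l x (c.neg (c.l x y)) = c.neg y := by
    rw [c.l_comm, l_neg, inv_eq_iff_eq, hx]
  rw [← hy, l_neg]
  exact (Equiv.symm_apply_apply _ _).symm

theorem commute_l_R_L_L (x y : Q) :
    Commute (c.l y) (c.l (c.R x) * c.l (c.L x) * c.l (c.L x)) := by
  apply commute_of_inv_mul_eq (c.commute_l_R_l_L x)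
  have h := c.l_R_add (c.neg x) (c.neg y)
  rwa [c.map_neg c.map_R, c.map_neg c.map_L, ← neg_l, l_neg, l_neg, l_neg, l_neg, c.l_R_add,
    inv_inv] at h

theorem commute_l_L_R_R (x y : Q) :
    Commute (c.l y) (c.l (c.L x) * c.l (c.R x) * c.l (c.R x)) := by
  apply commute_of_inv_mul_eq (c.commute_l_R_l_L x).symm
  have h := c.l_L_add (c.neg x) (c.neg y)
  rwa [c.map_neg c.map_R, c.map_neg c.map_L, ← neg_l, l_neg, l_neg, l_neg, l_neg, c.l_L_add,
    inv_inv] at h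

theorem l_l (x y : Q) : c.l (c.l x y) = c.l x * c.l x * c.l y * (c.l x)⁻¹ := by
  obtain ⟨x, rfl⟩ := c.R.surjective x
  have hc := c.commute_l_R_l_L x
  have hR := c.commute_l_R_L_L x y
  have hL := c.commute_l_L_R_R x y
  rw [c.l_R_add]
  generalize c.l (c.R x) = A, c.l (c.L x) = B, c.l y = Y at *
  have hquot : Commute Y (A⁻¹ * B) := by
    have h : A⁻¹ * B = (B * A * A)⁻¹ * (A * B * B) := by
      rw [← hc.eq]; group
    rw [h]
    exact hL.inv_right.mul_right hR
  calc A * B * Y * B⁻¹ = A * A * (A⁻¹ * B * Y) * B⁻¹ := by group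
    _ = A * A * Y * A⁻¹ := by rw [← hquot.eq]; group

/-- The commutative Moufang loop whose translations are those of the isotope. -/
abbrev toCommMoufangLoop : CommMoufangLoop Q where
  add x y := c.l x y
  zero := c.zero
  neg := c.neg
  add_comm := c.l_comm
  zero_add := c.l_zero_left
  add_zero := c.l_zero_right
  neg_add_cancel_left x y := by
    change c.l (c.neg x) (c.l x y) = y
    rw [l_neg]
    exact Equiv.symm_apply_apply _ _
  moufang x y z := by
    change c.l (c.l x x) (c.l y z) = c.l (c.l x y) (c.l x z)
    simp [c.l_l x]

open CommMoufangLoop in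
theorem isCentral_add_L (x : Q) :
    letI := c.toCommMoufangLoop
    IsCentral (x + c.L x) := by
  let := c.toCommMoufangLoop
  have hl (x : Q) : c.l x = T x := Equiv.ext fun _ => rfl
  have h (y : Q) : Commute (T y) (T x * T (c.L x)) := by
    simpa only [← hl, ← c.l_eq_mul] using! c.commute_l_R_L_L x y
  simpa using isCentral_of_forall_commute h

end Moufang

end DistributiveIsotope

namespace Quasigroup

variable {Q : Type} {q : Quasigroup Q}

theorem Distributive.idempotent (hq : Distributive q) : Idempotent q :=
  fun x => ((q.rightBij (q.mul x x)).1 (hq.1 x x x)).symm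

/-- The isotope of a distributive quasigroup at the base point `o`. -/
noncomputable def Distributive.isotope (hq : Distributive q) (o : Q) : DistributiveIsotope Q :=
  let L : Equiv.Perm Q := Equiv.ofBijective _ (q.leftBij o)
  let R : Equiv.Perm Q := Equiv.ofBijective _ (q.rightBij o)
  have hL (x : Q) : q.mul o x = L x := rfl
  have hR (x : Q) : q.mul x o = R x := rfl
  have hLR (x : Q) : L (R x) = R (L x) := by simp only [← hL, ← hR, hq.1, hq.idempotent o]
  have hLR' (x : Q) : L.symm (R x) = R (L.symm x) := by rw [Equiv.symm_apply_eq, hLR]; simp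
  have hL'R (x : Q) : L (R.symm x) = R.symm (L x) := by rw [Equiv.eq_symm_apply, ← hLR]; simp
  have hL'R' (x : Q) : L.symm (R.symm x) = R.symm (L.symm x) := by
    rw [Equiv.symm_apply_eq, hL'R]; simp
  have map_L (x y : Q) : L (q.mul x y) = q.mul (L x) (L y) := hq.1 o x y
  have map_R (x y : Q) : R (q.mul x y) = q.mul (R x) (R y) := hq.2 x y o
  have map_L' (x y : Q) : L.symm (q.mul x y) = q.mul (L.symm x) (L.symm y) := by
    rw [Equiv.symm_apply_eq, map_L]; simp
  have map_R' (x y : Q) : R.symm (q.mul x y) = q.mul (R.symm x) (R.symm y) := by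
    rw [Equiv.symm_apply_eq, map_R]; simp
  { zero := o
    l := fun x => L.symm.trans (Equiv.ofBijective _ (q.leftBij (R.symm x)))
    r := fun y => R.symm.trans (Equiv.ofBijective _ (q.rightBij (L.symm y)))
    L := L
    R := R
    l_eq_r := fun x y => rfl
    l_zero_left := fun x => by
      have : R.symm o = o := by rw [Equiv.symm_apply_eq]; exact (hq.idempotent o).symm
      simp [this, hL]
    l_zero_right := fun x => by
      have : L.symm o = o := by rw [Equiv.symm_apply_eq]; exact (hq.idempotent o).symm
      simp [this, hR]
    distrib_left := fun x y z => by
      simp only [Equiv.trans_apply, Equiv.ofBijective_apply, map_R', map_L', ← hL'R,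
        Equiv.symm_apply_apply, hL'R']
      rw [hq.1]
    distrib_right := fun x y z => by
      simp only [Equiv.trans_apply, Equiv.ofBijective_apply, map_R', map_L', hLR',
        Equiv.symm_apply_apply, ← hL'R']
      rw [hq.2]
    map_L := fun x y => by simp [map_L, hL'R]
    map_R := fun x y => by simp [map_R, hLR'] }

open CommMoufangLoop in
/-- Belousov and Soublin. -/
theorem Distributive.exists_commMoufangLoop [Finite Q] [Nonempty Q] (hq : Distributive q) :
    ∃ (_ : CommMoufangLoop Q) (θ : Q → Q), (∀ x, IsCentral (θ x)) ∧
      (∀ x y, θ (x + y) = θ x + θ y) ∧ ∀ x y, q.mul x y = (x + (x + -y)) + (θ y + -θ x) := by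
  obtain ⟨o⟩ := ‹Nonempty Q›
  let := (hq.isotope o).toCommMoufangLoop
  let L := (hq.isotope o).L
  let R := (hq.isotope o).R
  have map_L (x y : Q) : L (x + y) = L x + L y := (hq.isotope o).map_L x y
  have hmul (x y : Q) : q.mul x y = R x + L y := by
    change _ = q.mul (R.symm (R x)) (L.symm (L y))
    rw [Equiv.symm_apply_apply, Equiv.symm_apply_apply]
  have hR (x : Q) : R x = x + -L x := by
    rw [← CommMoufangLoop.add_neg_cancel_right (R x) (L x), ← hmul, hq.idempotent]
  obtain ⟨θ, hθL⟩ : ∃ θ : Q → Q, ∀ x, θ x = x + L x := ⟨_, fun _ => rfl⟩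
  have hθ (x : Q) : IsCentral (θ x) := hθL x ▸ (hq.isotope o).isCentral_add_L x
  have hL (x : Q) : L x = θ x + -x := by
    rw [hθL, add_comm x, CommMoufangLoop.add_neg_cancel_right]
  refine ⟨_, θ, hθ, fun x y => ?_, fun x y => ?_⟩
  · have h : L (x + y) = (θ x + θ y) + -(x + y) := by
      rw [map_L, hL, hL y, (hθ x).add_assoc, (hθ y).add_left_comm, ← CommMoufangLoop.neg_add,
        ← (hθ x).add_assoc]
    rw [hθL (x + y), h, ((hθ x).add (hθ y)).add_left_comm, CommMoufangLoop.add_neg_self, add_zero]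
  · have hR' : R x = -θ x + (x + x) := by
      rw [hR, hL, CommMoufangLoop.neg_add, CommMoufangLoop.neg_neg, (hθ x).neg.add_left_comm]
    rw [hmul, hR', hL y, (hθ x).neg.add_assoc, (hθ y).add_left_comm, ← (hθ x).neg.add_assoc,
      add_self_add, add_comm, add_comm (-_)]

end Quasigroup

/-! ### Associators in loops of order at most 243 -/

namespace CommMoufangLoop

variable {Q : Type*} [CommMoufangLoop Q]

theorem T_pow_apply_zero (w : Q) (n : ℕ) : T ((T w ^ n) 0) = T w ^ n := by
  induction n with
  | zero => exact T_zero
  | succ n ih =>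
    rw [pow_succ', Equiv.Perm.mul_apply, T_apply, T_add, ih, mul_assoc, mul_assoc,
      ((Commute.refl (T w)).pow_left n).inv_right.eq, mul_inv_cancel_left, ← pow_succ']

theorem odd_orderOf_T (hQ : Odd (Nat.card Q)) (w : Q) : Odd (orderOf (T w)) := by
  have : Finite Q := Nat.finite_of_card_ne_zero hQ.pos.ne'
  have : Fintype Q := Fintype.ofFinite Q
  have : Fact (Nat.Prime 2) := ⟨Nat.prime_two⟩
  rw [← Nat.not_even_iff_odd, even_iff_two_dvd]
  rintro ⟨n, hn⟩
  have hcard : ¬ 2 ∣ Fintype.card Q := by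
    rwa [← Nat.card_eq_fintype_card, ← even_iff_two_dvd, Nat.not_even_iff_odd]
  have hinv : (T w ^ n) ^ 2 ^ 1 = 1 := by
    rw [pow_one, ← pow_mul, mul_comm, ← hn, pow_orderOf_eq_one]
  obtain ⟨u, hu⟩ := Equiv.Perm.exists_fixed_point_of_prime hcard hinv
  rw [← T_pow_apply_zero] at hu
  have hone : T w ^ n = 1 := by rw [← T_pow_apply_zero, eq_zero_of_add_eq_right hu, T_zero]
  have hpos : 0 < orderOf (T w) := orderOf_pos _
  have := Nat.le_of_dvd (by lia) (orderOf_dvd_of_pow_eq_one hone)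
  lia

theorem IsSubloop.mem_of_add_self_mem {S : Set Q} (hS : IsSubloop S) (hQ : Odd (Nat.card Q)) {w : Q}
    (h : w + w ∈ S) : w ∈ S := by
  obtain ⟨k, hk⟩ := odd_orderOf_T hQ w
  have hpow (n : ℕ) : (T (w + w) ^ n) 0 ∈ S := by
    induction n with
    | zero => exact hS.zero_mem
    | succ n ih => rw [pow_succ']; exact hS.add_mem h ih
  have hw : T (w + w) ^ (k + 1) = T w := by
    rw [T_add_self, ← pow_two, ← pow_mul, mul_add, mul_one,
      show 2 * k + 2 = (2 * k + 1) + 1 from rfl, pow_succ, ← hk, pow_orderOf_eq_one, one_mul]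
  simpa [hw] using hpow (k + 1)

theorem IsSubloop.mem_of_add_mem' {S : Set Q} (hS : IsSubloop S) {x y : Q} (hy : y ∈ S)
    (h : x + y ∈ S) : x ∈ S :=
  hS.mem_of_add_mem hy (add_comm x y ▸ h)

section OddOrder

variable (hQ : Odd (Nat.card Q))
include hQ

theorem IsSubloop.ncard_union_cosets {S : Set Q} (hS : IsSubloop S) {w : Q} (hw : w ∉ S) :
    (S ∪ (T w '' S ∪ T (-w) '' S)).ncard = 3 * S.ncard := by
  have : Finite Q := Nat.finite_of_card_ne_zero hQ.pos.ne'
  rw [Set.ncard_union_eq, Set.ncard_union_eq, Set.ncard_image_of_injective _ (T w).injective,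
    Set.ncard_image_of_injective _ (T (-w)).injective]
  · ring
  · rw [Set.disjoint_left]
    rintro _ ⟨s, hs, rfl⟩ ⟨t, ht, h⟩
    have hwws : (w + w) + s ∈ S := by
      rw [add_self_add, ← T_apply w s, ← h]
      simpa [add_neg_cancel_left] using ht
    exact hw (hS.mem_of_add_self_mem hQ (hS.mem_of_add_mem' hs hwws))
  · rw [Set.disjoint_left]
    rintro u hu (⟨s, hs, rfl⟩ | ⟨s, hs, rfl⟩)
    · exact hw (hS.mem_of_add_mem' hs hu)
    · exact hw (neg_neg w ▸ hS.neg_mem (hS.mem_of_add_mem' hs hu))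

theorem IsSubloop.three_mul_ncard_le {S U : Set Q} (hS : IsSubloop S) (hU : IsSubloop U)
    (h : S ⊆ U) {w : Q} (hw : w ∉ S) (hwU : w ∈ U) : 3 * S.ncard ≤ U.ncard := by
  have : Finite Q := Nat.finite_of_card_ne_zero hQ.pos.ne'
  rw [← hS.ncard_union_cosets hQ hw]
  refine Set.ncard_le_ncard ?_ (Set.toFinite _)
  rintro u (hu | ⟨s, hs, rfl⟩ | ⟨s, hs, rfl⟩)
  · exact h hu
  · exact hU.add_mem hwU (h hs)
  · exact hU.add_mem (hU.neg_mem hwU) (h hs)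

theorem IsSubloop.mem_or_neg_add_mem_or_add_mem {S : Set Q} (hS : IsSubloop S)
    (hindex : Nat.card Q ≤ 3 * S.ncard) {w : Q} (hw : w ∉ S) (u : Q) :
    u ∈ S ∨ -w + u ∈ S ∨ w + u ∈ S := by
  have : Finite Q := Nat.finite_of_card_ne_zero hQ.pos.ne'
  have hunion : S ∪ (T w '' S ∪ T (-w) '' S) = Set.univ := by
    apply Set.eq_of_subset_of_ncard_le (Set.subset_univ _)
    rwa [hS.ncard_union_cosets hQ hw, Set.ncard_univ]
  obtain hu | ⟨s, hs, rfl⟩ | ⟨s, hs, rfl⟩ := hunion.ge (Set.mem_univ u)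
  · exact .inl hu
  · exact .inr (.inl (by simpa [neg_add_cancel_left] using hs))
  · exact .inr (.inr (by simpa [add_neg_cancel_left] using hs))

theorem IsSubloop.mem_of_ncard_of_subset {S U : Set Q} (hS : IsSubloop S)
    (hindex : Nat.card Q ≤ 3 * S.ncard) (hU : IsSubloop U) (h : S ⊆ U) {w : Q} (hw : w ∉ S)
    (hwU : w ∈ U) (u : Q) : u ∈ U := by
  obtain hu | hu | hu := hS.mem_or_neg_add_mem_or_add_mem hQ hindex hw u
  · exact h hu
  · exact hU.mem_of_add_mem (hU.neg_mem hwU) (h hu)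
  · exact hU.mem_of_add_mem hwU (h hu)

theorem IsSubloop.three_mul_ncard_le_card {S : Set Q} (hS : IsSubloop S) {w : Q} (hw : w ∉ S) :
    3 * S.ncard ≤ Nat.card Q := by
  rw [← Set.ncard_univ]
  exact hS.three_mul_ncard_le hQ isSubloop_univ (Set.subset_univ _) hw trivial

theorem IsSubloop.three_le_ncard {S : Set Q} (hS : IsSubloop S) {a : Q} (ha : a ≠ 0)
    (haS : a ∈ S) : 3 ≤ S.ncard := by
  simpa using isSubloop_singleton_zero.three_mul_ncard_le hQ hS (by simpa using hS.zero_mem)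
    (w := a) (by simpa) haS

theorem nine_mul_ncard_le {Z U : Set Q} (hU : IsSubloop U) (hZ : IsSubloop Z) (h : Z ⊆ U)
    {x y z : Q} (hy : y ∈ U) (hz : z ∈ U) (hxyz : ¬ Associates x y z)
    (hxzZ : ∀ t ∈ Z, Associates x z t) (hxyZ : ∀ t ∈ Z, Associates x y t) :
    9 * Z.ncard ≤ U.ncard := by
  have hyZ : y ∉ Z := fun hyZ => hxyz (hxzZ y hyZ).swap_right
  have hzZ : z ∉ closure (insert y Z) := fun hzZ => hxyz <|
    (isSubloop_setOf_associates x y).closure_subset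
      (Set.insert_subset (inner_right x y) hxyZ) hzZ
  have h₁ := hZ.three_mul_ncard_le hQ (isSubloop_closure (insert y Z))
    ((Set.subset_insert _ _).trans (subset_closure _)) hyZ (subset_closure _ (Set.mem_insert _ _))
  have h₂ := (isSubloop_closure (insert y Z)).three_mul_ncard_le hQ hU
    (hU.closure_subset (Set.insert_subset hy h)) hzZ hz
  lia

theorem twentySeven_mul_ncard_le {Z U : Set Q} (hU : IsSubloop U) (hZ : IsSubloop Z) (h : Z ⊆ U)
    {x y z : Q} (hx : x ∈ U) (hy : y ∈ U) (hz : z ∈ U) (hxyz : ¬ Associates x y z)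
    (hyzZ : ∀ t ∈ Z, Associates y z t) (hxzZ : ∀ t ∈ Z, Associates x z t)
    (hxyZ : ∀ t ∈ Z, Associates x y t) : 27 * Z.ncard ≤ U.ncard := by
  have hxZ : x ∉ Z := fun hxZ => hxyz (hyzZ x hxZ).swap_right.swap_left
  have h₁ := hZ.three_mul_ncard_le hQ (isSubloop_closure (insert x Z))
    ((Set.subset_insert _ _).trans (subset_closure _)) hxZ (subset_closure _ (Set.mem_insert _ _))
  have h₂ := nine_mul_ncard_le hQ hU (isSubloop_closure (insert x Z))
    (hU.closure_subset (Set.insert_subset hx h)) hy hz hxyz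
    (fun _ ht => (isSubloop_setOf_associates x z).closure_subset
      (Set.insert_subset (inner_left x z) hxzZ) ht)
    (fun _ ht => (isSubloop_setOf_associates x y).closure_subset
      (Set.insert_subset (inner_left x y) hxyZ) ht)
  lia

theorem IsSubloop.eightyOne_le_ncard {U : Set Q} (hU : IsSubloop U) {x y z : Q} (hx : x ∈ U)
    (hy : y ∈ U) (hz : z ∈ U) (hxyz : ¬ Associates x y z) : 81 ≤ U.ncard := by
  have hassoc {u v : Q} (h : Associates u v (associator x y z)) :
      ∀ t ∈ closure {associator x y z}, Associates u v t := fun _ =>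
    ((isSubloop_setOf_associates u v).closure_subset (Set.singleton_subset_iff.mpr h) ·)
  have h₁ := twentySeven_mul_ncard_le hQ hU (isSubloop_closure {associator x y z})
    (hU.closure_subset (Set.singleton_subset_iff.mpr (hU.associator_mem hx hy hz))) hx hy hz hxyz
    (hassoc (inner_associator_right x y z)) (hassoc (inner_associator_outer x y z))
    (hassoc (inner_associator_left x y z))
  have h₂ := (isSubloop_closure {associator x y z}).three_le_ncard hQ
    (mt associates_iff.mpr hxyz) (subset_closure _ rfl)
  lia

end OddOrder

theorem map_inner {f : Equiv.Perm Q} (hf : ∀ x y, f (x + y) = f x + f y) (x y z : Q) :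
    f (inner x y z) = inner (f x) (f y) (f z) := by
  apply (T (f (x + y))).injective
  rw [T_apply, T_apply, ← hf, ← add_add_eq, hf, hf, hf, add_add_eq]

theorem Associates.map {f : Equiv.Perm Q} (hf : ∀ x y, f (x + y) = f x + f y) {x y z : Q}
    (h : Associates x y z) : Associates (f x) (f y) (f z) := by
  rw [Associates, ← map_inner hf, h]

/-- For a subloop `S` of index 3 and a map `D = inner x s` with `x, s ∈ S`, the alternative
`w + D w ∈ S` to the claim would put the pairwise sums of `w`, `D w`, `D² w` into `S`, hence
`w + w`, hence `w`. -/
theorem IsSubloop.associator_mem_of_index {S : Set Q} (hS : IsSubloop S) (hQ : Odd (Nat.card Q))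
    (hindex : Nat.card Q ≤ 3 * S.ncard) {x s : Q} (hx : x ∈ S) (hs : s ∈ S) (w : Q) :
    associator x s w ∈ S := by
  by_cases hw : w ∈ S
  · exact hS.associator_mem hx hs hw
  have hD {u : Q} (hu : u ∈ S) : inner x s u ∈ S := hS.inner_mem hx hs hu
  have hD3 : inner x s (inner x s (inner x s w)) = w := by
    simpa [pow_succ] using DFunLike.congr_fun (inner_pow_three x s) w
  obtain h | h | h := hS.mem_or_neg_add_mem_or_add_mem hQ hindex hw (inner x s w)
  · exact absurd (hD3 ▸ hD (hD h)) hw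
  · exact h
  · have h₁₂ := hD h
    have h₂₀ := hD h₁₂
    rw [inner_add] at h₁₂
    rw [inner_add, inner_add, hD3] at h₂₀
    have hmem := hS.add_mem h (add_comm w _ ▸ h₂₀)
    rw [← moufang] at hmem
    exact absurd (hS.mem_of_add_self_mem hQ (hS.mem_of_add_mem' h₁₂ hmem)) hw

theorem IsSubloop.inner_mem_of_index {S : Set Q} (hS : IsSubloop S) (hQ : Odd (Nat.card Q))
    (hindex : Nat.card Q ≤ 3 * S.ncard) {x s : Q} (hx : x ∈ S) (hs : s ∈ S) (w : Q) :
    inner x w s ∈ S := by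
  rw [inner_apply, associator_swap_right]
  exact hS.add_mem hs (hS.neg_mem (hS.associator_mem_of_index hQ hindex hx hs w))

theorem IsSubloop.inner_mem_of_index' {S : Set Q} (hS : IsSubloop S) (hQ : Odd (Nat.card Q))
    (hindex : Nat.card Q ≤ 3 * S.ncard) {x s : Q} (hx : x ∈ S) (hs : s ∈ S) (w : Q) :
    inner w x s ∈ S := by
  rw [inner_apply, ← associator_rotate]
  exact hS.add_mem hs (hS.associator_mem_of_index hQ hindex hx hs w)

theorem inner_mem_centralizer {S : Set Q} {x y a : Q} (h : ∀ s ∈ S, inner y x s ∈ S)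
    (ha : a ∈ centralizer S) : inner x y a ∈ centralizer S := fun s hs t ht => by
  simpa only [inner_inner] using (ha _ (h s hs) _ (h t ht)).map (inner_add x y)

/-- An automorphism of order 3 cannot invert an element of order 3. -/
theorem inner_apply_eq_self {x y a : Q} (ha : a + (a + a) = 0)
    (h : inner x y a ∈ ({0, a, -a} : Set Q)) : inner x y a = a := by
  have hcube : inner x y (inner x y (inner x y a)) = a := by
    simpa [pow_succ] using DFunLike.congr_fun (inner_pow_three x y) a
  obtain h | h | h := h
  · rw [h, ← (inner x y).injective (h.trans (inner_zero x y).symm)]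
  · exact h
  · rw [h, inner_neg, h, neg_neg, h] at hcube
    have haa : a + a = 0 := by nth_rw 1 [← hcube]; exact neg_add_self a
    rw [haa, add_zero] at ha
    rw [ha, inner_zero]

theorem IsSubloop.eq_of_ncard_le_three {S : Set Q} (hS : IsSubloop S) (hQ : Odd (Nat.card Q))
    (hcard : S.ncard ≤ 3) {a : Q} (ha : a ≠ 0) (haS : a ∈ S) : S = {0, a, -a} := by
  have : Finite Q := Nat.finite_of_card_ne_zero hQ.pos.ne'
  symm
  apply Set.eq_of_subset_of_ncard_le
  · rintro _ (rfl | rfl | rfl)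
    exacts [hS.zero_mem, haS, hS.neg_mem haS]
  · have hneg : a ≠ -a := fun h => ha <| by
      refine isSubloop_singleton_zero.mem_of_add_self_mem hQ ?_
      nth_rw 2 [h]
      exact add_neg_self a
    rwa [Set.ncard_eq_three.mpr ⟨0, a, -a, ha.symm, ?_, hneg, rfl⟩]
    exact fun h => ha (neg_injective (h.symm.trans neg_zero.symm))
  · exact Set.toFinite S

theorem isCentral_associator_of_index {S : Set Q} (hS : IsSubloop S) (hQ : Odd (Nat.card Q))
    (hindex : Nat.card Q ≤ 3 * S.ncard) {a : Q} (ha : a ≠ 0) (ha3 : a + (a + a) = 0) (haS : a ∈ S)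
    (hcentral : a ∈ centralizer S) (hcenter : (centralizer S ∩ S).ncard ≤ 3) : IsCentral a := by
  have hZ : centralizer S ∩ S = {0, a, -a} :=
    ((isSubloop_centralizer S).inter hS).eq_of_ncard_le_three hQ hcenter ha ⟨hcentral, haS⟩
  have hfix {x : Q} (hx : x ∈ S) (w : Q) : Associates x w a := by
    apply inner_apply_eq_self ha3
    rw [← hZ]
    exact ⟨inner_mem_centralizer (fun s hs => hS.inner_mem_of_index' hQ hindex hx hs w) hcentral,
      hS.inner_mem_of_index hQ hindex hx haS w⟩
  have houtside {w : Q} (hw : w ∉ S) (t : Q) : Associates a w t :=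
    .swap_left <| hS.mem_of_ncard_of_subset hQ hindex (isSubloop_setOf_associates w a)
      (fun x hx => (hfix hx w).rotate) hw (inner_left w a) t
  intro s t
  by_cases hs : s ∈ S
  · by_cases ht : t ∈ S
    exacts [hcentral s hs t ht, (houtside ht s).swap_right]
  · exact houtside hs t

/-- The associator is central in the subloop `S` generated by the triple, and `S` has index at
most 3. -/
theorem isCentral_associator (hQ : Odd (Nat.card Q)) (hcard : Nat.card Q ≤ 243) (x y z : Q) :
    IsCentral (associator x y z) := by
  by_cases hxyz : Associates x y z
  · rw [associates_iff.mp hxyz]; exact associates_zero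
  set S := closure {x, y, z}
  have hS : IsSubloop S := isSubloop_closure _
  have hx : x ∈ S := subset_closure _ (by simp)
  have hy : y ∈ S := subset_closure _ (by simp)
  have hz : z ∈ S := subset_closure _ (by simp)
  have hcentral : associator x y z ∈ centralizer S :=
    fun s hs t ht => associates_associator_of_mem_closure hs ht
  have h81 : 81 ≤ S.ncard := hS.eightyOne_le_ncard hQ hx hy hz hxyz
  by_cases hSu : ∃ w, w ∉ S
  · obtain ⟨w, hw⟩ := hSu
    have hindex := hS.three_mul_ncard_le_card hQ hw
    have hcenter := twentySeven_mul_ncard_le hQ hS ((isSubloop_centralizer S).inter hS)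
      Set.inter_subset_right hx hy hz hxyz (fun t ht => (ht.1 y hy z hz).rotate)
      (fun t ht => (ht.1 x hx z hz).rotate) (fun t ht => (ht.1 x hx y hy).rotate)
    exact isCentral_associator_of_index hS hQ (by lia) (mt associates_iff.mpr hxyz)
      (associator_add_associator_add_associator x y z) (hS.associator_mem hx hy hz) hcentral
      (by lia)
  · push Not at hSu
    exact fun s t => hcentral s (hSu s) t (hSu t)

end CommMoufangLoop

/-! ### Coordinates for the associator -/

/-- Vectors of length 3 over the field with three elements. -/
abbrev Vec3 := Fin 3 → ZMod 3

namespace Vec3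

/-- A cubic form whose coboundary is the determinant; it twists an abelian group into a commutative
Moufang loop. -/
def cubic (u v : Vec3) : ZMod 3 := (u 2 - v 2) * (u 0 * v 1 - u 1 * v 0)

/-- The determinant of three vectors. -/
def det (u v w : Vec3) : ZMod 3 :=
  u 0 * (v 1 * w 2 - v 2 * w 1) - u 1 * (v 0 * w 2 - v 2 * w 0) + u 2 * (v 0 * w 1 - v 1 * w 0)

theorem three_eq_zero : (3 : ZMod 3) = 0 := rfl

theorem det_add_cubic_add_cubic (u v w : Vec3) :
    det u v w + (cubic v w + cubic u (v + w)) = cubic u v + cubic (u + v) w := by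
  simp only [cubic, det, Pi.add_apply]
  linear_combination (-u 0 * v 2 * w 1 + u 1 * v 2 * w 0) * three_eq_zero

theorem det_swap_left (u v w : Vec3) : det v u w = -det u v w := by simp only [det]; ring

theorem det_swap_right (u v w : Vec3) : det u w v = -det u v w := by simp only [det]; ring

theorem det_add_right (u v w w' : Vec3) : det u v (w + w') = det u v w + det u v w' := by
  simp only [det, Pi.add_apply]; ring

theorem cubic_comm (u v : Vec3) : cubic u v = cubic v u := by simp only [cubic]; ring

theorem cubic_zero_left (u : Vec3) : cubic 0 u = 0 := by simp [cubic]

theorem cubic_self (u : Vec3) : cubic u u = 0 := by simp [cubic]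

theorem cubic_neg_self (u : Vec3) : cubic (-u) u = 0 := by simp only [cubic, Pi.neg_apply]; ring

theorem cubic_add_self_neg (u v : Vec3) : cubic (u + u) (-v) = -cubic u v := by
  simp only [cubic, Pi.add_apply, Pi.neg_apply]
  linear_combination -(u 2 + v 2) * (u 0 * v 1 - u 1 * v 0) * three_eq_zero

/-- The `i`-th standard basis vector. -/
abbrev basis (i : Fin 3) : Vec3 := Pi.single i 1

theorem addSubgroup_eq_top {M : AddSubgroup Vec3} (hM : ∀ i, basis i ∈ M) : M = ⊤ := by
  refine eq_top_iff.mpr fun v _ => ?_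
  have hv : v = ∑ i, v i • basis i := by
    ext j; simp [Finset.sum_apply, Pi.single_apply]
  rw [hv]
  exact M.sum_mem fun i _ => ZMod.smul_mem (hM i) _

end Vec3

namespace CommMoufangLoop

variable {Q : Type*} [CommMoufangLoop Q]

/-- A ternary relation sharing the formal properties of the vanishing of an alternating trilinear
form. -/
structure IsAlternatingRelation (P : Q → Q → Q → Prop) : Prop where
  isSubloop (x y : Q) : IsSubloop {z | P x y z}
  self (x y : Q) : P x x y
  swap_left {x y z : Q} : P x y z → P y x z
  swap_right {x y z : Q} : P x y z → P x z y

theorem isAlternatingRelation_associates : IsAlternatingRelation (Associates (Q := Q)) where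
  isSubloop := isSubloop_setOf_associates
  self x y := Associates.swap_right (show Associates x y x from inner_left x y)
  swap_left := .swap_left
  swap_right := .swap_right

theorem IsAlternatingRelation.rotate {P : Q → Q → Q → Prop} (hP : IsAlternatingRelation P)
    {x y z : Q} (h : P x y z) : P y z x :=
  hP.swap_right (hP.swap_left h)

theorem IsAlternatingRelation.of_closure_eq_univ {P : Q → Q → Q → Prop}
    (hP : IsAlternatingRelation P) {x y z : Q} {K : Set Q} (hgen : closure ({x, y, z} ∪ K) = .univ)
    (hK : ∀ k ∈ K, ∀ u v, P k u v) (hxyz : P x y z) (u v w : Q) : P u v w := by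
  have extend {u v : Q} (hx : P u v x) (hy : P u v y) (hz : P u v z) (w : Q) : P u v w := by
    refine (hP.isSubloop u v).closure_subset ?_ (hgen.ge (Set.mem_univ w))
    rintro _ ((rfl | rfl | rfl) | hk)
    exacts [hx, hy, hz, hP.rotate (hK _ hk u v)]
  have extend' {u : Q} (hx : ∀ w, P u x w) (hy : ∀ w, P u y w) (hz : ∀ w, P u z w) (v w : Q) :
      P u v w :=
    hP.swap_right <| extend (hP.swap_right (hx w)) (hP.swap_right (hy w)) (hP.swap_right (hz w)) v
  have self_outer (u v : Q) : P u v u := hP.swap_right (hP.self u v)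
  have self_right (u v : Q) : P u v v := hP.rotate (hP.rotate (hP.self v u))
  have hxy := extend (self_outer x y) (self_right x y) hxyz
  have hxz := extend (self_outer x z) (hP.swap_right hxyz) (self_right x z)
  have hyz := extend (hP.rotate hxyz) (self_outer y z) (self_right y z)
  have hx := extend' (hP.self x) hxy hxz
  have hy := extend' (fun w => hP.swap_left (hxy w)) (hP.self y) hyz
  have hz := extend' (fun w => hP.swap_left (hxz w)) (fun w => hP.swap_left (hyz w)) (hP.self z)
  exact hP.rotate <| hP.rotate <|
    extend (hP.rotate (hx v w)) (hP.rotate (hy v w)) (hP.rotate (hz v w)) u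

/-- A trilinear alternating form on a loop with values in the field with three elements. -/
structure IsAlternatingForm (f : Q → Q → Q → ZMod 3) : Prop where
  map_add_right (x y z z' : Q) : f x y (z + z') = f x y z + f x y z'
  map_swap_left (x y z : Q) : f y x z = -f x y z
  map_swap_right (x y z : Q) : f x z y = -f x y z

namespace IsAlternatingForm

variable {f g : Q → Q → Q → ZMod 3} (hf : IsAlternatingForm f)
include hf

theorem sub (hg : IsAlternatingForm g) : IsAlternatingForm fun x y z => f x y z - g x y z where
  map_add_right x y z z' := by rw [hf.map_add_right, hg.map_add_right]; ring
  map_swap_left x y z := by rw [hf.map_swap_left, hg.map_swap_left]; ring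
  map_swap_right x y z := by rw [hf.map_swap_right, hg.map_swap_right]; ring

theorem map_rotate (x y z : Q) : f y z x = f x y z := by
  rw [hf.map_swap_right, hf.map_swap_left, _root_.neg_neg]

theorem map_add_left (x x' y z : Q) : f (x + x') y z = f x y z + f x' y z := by
  simp only [← hf.map_rotate _ y z, hf.map_add_right]

theorem map_add_middle (x y y' z : Q) : f x (y + y') z = f x y z + f x y' z := by
  simp only [hf.map_swap_right x z, hf.map_add_right, _root_.neg_add]

theorem map_self_left (x y : Q) : f x x y = 0 := by
  have h : ∀ m : ZMod 3, m = -m → m = 0 := by decide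
  exact h _ (hf.map_swap_left x x y)

theorem map_self_right (x y : Q) : f x y y = 0 := by rw [← hf.map_rotate, hf.map_self_left]

theorem map_self_outer (x y : Q) : f x y x = 0 := by
  rw [hf.map_swap_right, hf.map_self_left, _root_.neg_zero]

theorem map_zero_right (x y : Q) : f x y 0 = 0 := by
  simpa using hf.map_add_right x y 0 0

theorem map_neg_right (x y z : Q) : f x y (-z) = -f x y z := by
  have h := hf.map_add_right x y z (-z)
  rw [add_neg_self, hf.map_zero_right] at h
  exact (neg_eq_of_add_eq_zero_right h.symm).symm

theorem isAlternatingRelation : IsAlternatingRelation fun x y z => f x y z = 0 where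
  isSubloop x y :=
    { zero_mem := hf.map_zero_right x y
      add_mem {z z'} hz hz' := by
        simp only [Set.mem_ofPred_eq] at *
        rw [hf.map_add_right, hz, hz', _root_.add_zero]
      neg_mem {z} hz := by
        simp only [Set.mem_ofPred_eq] at *
        rw [hf.map_neg_right, hz, _root_.neg_zero] }
  self := hf.map_self_left
  swap_left h := by rw [hf.map_swap_left, h, _root_.neg_zero]
  swap_right h := by rw [hf.map_swap_right, h, _root_.neg_zero]

end IsAlternatingForm

end CommMoufangLoop

namespace CommMoufangLoop

variable {Q : Type*} [CommMoufangLoop Q]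

section CyclicMap

/-- The homomorphism from the group with three elements to a loop that sends `1` to an element `a`
with `a + (a + a) = 0`. -/
def cyclicMap (a : Q) : ZMod 3 → Q := ![0, a, -a]

@[simp] theorem cyclicMap_zero (a : Q) : cyclicMap a 0 = 0 := rfl

theorem IsSubloop.cyclicMap_mem {S : Set Q} (hS : IsSubloop S) {a : Q} (ha : a ∈ S) (m : ZMod 3) :
    cyclicMap a m ∈ S := by
  fin_cases m
  exacts [hS.zero_mem, ha, hS.neg_mem ha]

variable {a : Q} (ha : a + (a + a) = 0)
include ha

theorem cyclicMap_add (m n : ZMod 3) : cyclicMap a (m + n) = cyclicMap a m + cyclicMap a n := by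
  have hadd : a + a = -a := by
    have h := neg_add_cancel_left a (a + a)
    rwa [ha, add_zero, eq_comm] at h
  have hneg : -a + -a = a := by rw [← neg_add, hadd, neg_neg]
  fin_cases m <;> fin_cases n
  exacts [(zero_add _).symm, (zero_add _).symm, (zero_add _).symm, (add_zero _).symm, hadd.symm,
    (add_neg_self a).symm, (add_zero _).symm, (neg_add_self a).symm, hneg.symm]

theorem cyclicMap_neg (m : ZMod 3) : cyclicMap a (-m) = -cyclicMap a m := by
  have h := neg_add_cancel_left (cyclicMap a m) (cyclicMap a (-m))
  rwa [← cyclicMap_add ha, _root_.add_neg_cancel, cyclicMap_zero, add_zero, eq_comm] at h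

theorem cyclicMap_injective (ha0 : a ≠ 0) : Function.Injective (cyclicMap a) := by
  have hinj (m : ZMod 3) (hm : cyclicMap a m = 0) : m = 0 := by
    fin_cases m
    · rfl
    · exact absurd hm ha0
    · exact absurd (neg_injective (hm.trans neg_zero.symm)) ha0
  intro m n h
  refine sub_eq_zero.mp (hinj _ ?_)
  rw [sub_eq_add_neg, cyclicMap_add ha, cyclicMap_neg ha, h, add_neg_self]

theorem isSubloop_range_cyclicMap : IsSubloop (Set.range (cyclicMap a)) where
  zero_mem := ⟨0, rfl⟩
  add_mem := by
    rintro _ _ ⟨m, rfl⟩ ⟨n, rfl⟩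
    exact ⟨m + n, cyclicMap_add ha m n⟩
  neg_mem := by
    rintro _ ⟨m, rfl⟩
    exact ⟨-m, cyclicMap_neg ha m⟩

theorem ncard_range_cyclicMap (ha0 : a ≠ 0) : (Set.range (cyclicMap a)).ncard = 3 := by
  rw [← Set.image_univ, Set.ncard_image_of_injective _ (cyclicMap_injective ha ha0),
    Set.ncard_univ, Nat.card_zmod]

end CyclicMap

section AssociatorForm

theorem associator_add_right (hc : ∀ x y z : Q, IsCentral (associator x y z)) (x y z z' : Q) :
    associator x y (z + z') = associator x y z + associator x y z' := by
  refine associator_eq_of_inner_apply ?_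
  rw [inner_add, inner_apply, inner_apply, add_comm z, add_comm z', add_comm (z + z')]
  rw [(hc x y z).add_assoc, (hc x y z').add_left_comm, ← (hc x y z).add_assoc]

theorem isAlternatingRelation_associator_mem (hc : ∀ x y z : Q, IsCentral (associator x y z))
    {S : Set Q} (hS : IsSubloop S) : IsAlternatingRelation fun x y z => associator x y z ∈ S where
  isSubloop x y :=
    { zero_mem := by
        rw [Set.mem_ofPred_eq, associates_iff.mp (inner_zero x y)]
        exact hS.zero_mem
      add_mem hz hz' := by
        simp only [Set.mem_ofPred_eq, associator_add_right hc] at *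
        exact hS.add_mem hz hz'
      neg_mem {z} hz := by
        refine hS.mem_of_add_mem hz ?_
        rw [← associator_add_right hc, add_neg_self, associates_iff.mp (inner_zero x y)]
        exact hS.zero_mem }
  self x y := by
    rw [associates_iff.mp (isAlternatingRelation_associates.self x y)]
    exact hS.zero_mem
  swap_left h := by rw [associator_swap_left]; exact hS.neg_mem h
  swap_right h := by rw [associator_swap_right]; exact hS.neg_mem h

variable (hQ : Odd (Nat.card Q)) (hcard : Nat.card Q ≤ 243) {x y z : Q}
  (hxyz : ¬ Associates x y z)
include hQ hcard hxyz

theorem closure_union_center (h9 : 9 ≤ {c : Q | IsCentral c}.ncard) :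
    closure ({x, y, z} ∪ {c : Q | IsCentral c}) = .univ := by
  have hS := isSubloop_closure ({x, y, z} ∪ {c : Q | IsCentral c})
  have hmem {u : Q} (hu : u ∈ ({x, y, z} : Set Q)) := subset_closure
    ({x, y, z} ∪ {c : Q | IsCentral c}) (.inl hu)
  have h := twentySeven_mul_ncard_le hQ hS isSubloop_setOf_isCentral
    (Set.subset_union_right.trans (subset_closure _)) (hmem (.inl rfl)) (hmem (.inr (.inl rfl)))
    (hmem (.inr (.inr rfl))) hxyz (fun c hc => (hc y z).rotate) (fun c hc => (hc x z).rotate)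
    fun c hc => (hc x y).rotate
  refine Set.eq_univ_of_forall fun w => by_contra fun hw => ?_
  have := hS.three_mul_ncard_le_card hQ hw
  lia

theorem associator_mem_range_cyclicMap (u v w : Q) :
    associator u v w ∈ Set.range (cyclicMap (associator x y z)) := by
  have hc := isCentral_associator hQ hcard
  have ha : associator x y z ≠ 0 := mt associates_iff.mpr hxyz
  have ha3 := associator_add_associator_add_associator x y z
  have hS := isSubloop_range_cyclicMap ha3
  by_contra huvw
  have h9 := hS.three_mul_ncard_le hQ isSubloop_setOf_isCentral
    (Set.range_subset_iff.mpr (isSubloop_setOf_isCentral.cyclicMap_mem (hc x y z))) huvw (hc u v w)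
  rw [ncard_range_cyclicMap ha3 ha] at h9
  refine huvw <| (isAlternatingRelation_associator_mem hc hS).of_closure_eq_univ
    (closure_union_center hQ hcard hxyz h9) (fun k hk u v => ?_) ⟨1, rfl⟩ u v w
  rw [associates_iff.mp (hk u v)]
  exact hS.zero_mem

theorem exists_isAlternatingForm : ∃ f, IsAlternatingForm f ∧
    ∀ u v w, associator u v w = cyclicMap (associator x y z) (f u v w) := by
  have ha3 := associator_add_associator_add_associator x y z
  have hinj := cyclicMap_injective ha3 (mt associates_iff.mpr hxyz)
  choose f hf using associator_mem_range_cyclicMap hQ hcard hxyz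
  refine ⟨f, ⟨fun u v w w' => hinj ?_, fun u v w => hinj ?_, fun u v w => hinj ?_⟩,
    fun u v w => (hf u v w).symm⟩
  · rw [cyclicMap_add ha3, hf, hf, hf, associator_add_right (isCentral_associator hQ hcard)]
  · rw [cyclicMap_neg ha3, hf, hf, associator_swap_left]
  · rw [cyclicMap_neg ha3, hf, hf, associator_swap_right]

end AssociatorForm

/-- The coordinates of `w` with respect to a triple on which the form `f` takes the value `1`. -/
def coordinates (f : Q → Q → Q → ZMod 3) (x y z w : Q) : Vec3 := ![f w y z, f x w z, f x y w]

namespace IsAlternatingForm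

variable {f : Q → Q → Q → ZMod 3} (hf : IsAlternatingForm f)

include hf in
theorem coordinates_add (x y z u v : Q) :
    coordinates f x y z (u + v) = coordinates f x y z u + coordinates f x y z v := by
  ext i
  fin_cases i
  exacts [hf.map_add_left u v y z, hf.map_add_middle x u v z, hf.map_add_right x y u v]

include hf in
theorem coordinates_zero (x y z : Q) : coordinates f x y z 0 = 0 := by
  simpa using hf.coordinates_add x y z 0 0

include hf in
theorem coordinates_neg (x y z u : Q) : coordinates f x y z (-u) = -coordinates f x y z u := by
  have h := hf.coordinates_add x y z u (-u)
  rw [add_neg_self, hf.coordinates_zero] at h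
  exact (neg_eq_of_add_eq_zero_right h.symm).symm

include hf in
theorem isSubloop_setOf_coordinates_eq_zero (x y z : Q) :
    IsSubloop {w | coordinates f x y z w = 0} where
  zero_mem := hf.coordinates_zero x y z
  add_mem hu hv := by
    simp only [Set.mem_ofPred_eq, hf.coordinates_add] at *
    rw [hu, hv, _root_.add_zero]
  neg_mem hu := by
    simp only [Set.mem_ofPred_eq, hf.coordinates_neg] at *
    rw [hu, _root_.neg_zero]

include hf in
theorem isAlternatingForm_det (x y z : Q) : IsAlternatingForm fun u v w =>
    Vec3.det (coordinates f x y z u) (coordinates f x y z v) (coordinates f x y z w) where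
  map_add_right u v w w' := by rw [hf.coordinates_add, Vec3.det_add_right]
  map_swap_left _ _ _ := Vec3.det_swap_left ..
  map_swap_right _ _ _ := Vec3.det_swap_right ..

variable {x y z : Q} (hxyz : f x y z = 1)
include hf hxyz

theorem exists_mem_closure_coordinates_eq (v : Vec3) :
    ∃ s ∈ closure {x, y, z}, coordinates f x y z s = v := by
  have hS := isSubloop_closure {x, y, z}
  let M : AddSubgroup Vec3 :=
    { carrier := coordinates f x y z '' closure {x, y, z}
      zero_mem' := ⟨0, hS.zero_mem, hf.coordinates_zero x y z⟩
      add_mem' := by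
        rintro _ _ ⟨s, hs, rfl⟩ ⟨t, ht, rfl⟩
        exact ⟨s + t, hS.add_mem hs ht, hf.coordinates_add x y z s t⟩
      neg_mem' := by
        rintro _ ⟨s, hs, rfl⟩
        exact ⟨-s, hS.neg_mem hs, hf.coordinates_neg x y z s⟩ }
  refine (Vec3.addSubgroup_eq_top (M := M) fun i => ?_).ge (AddSubgroup.mem_top v)
  refine ⟨![x, y, z] i, subset_closure _ (by fin_cases i <;> simp), ?_⟩
  ext j
  fin_cases i <;> fin_cases j <;>
    simp [coordinates, hxyz, hf.map_self_left, hf.map_self_right, hf.map_self_outer]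

theorem closure_union_setOf_coordinates_eq_zero :
    closure ({x, y, z} ∪ {w | coordinates f x y z w = 0}) = .univ := by
  have hS := isSubloop_closure ({x, y, z} ∪ {w | coordinates f x y z w = 0})
  refine Set.eq_univ_of_forall fun w => ?_
  obtain ⟨s, hs, hsw⟩ := hf.exists_mem_closure_coordinates_eq hxyz (coordinates f x y z w)
  refine hS.mem_of_add_mem (hS.neg_mem (hS.closure_subset
    (Set.subset_union_left.trans (subset_closure _)) hs)) (subset_closure _ (.inr ?_))
  rw [Set.mem_ofPred_eq, hf.coordinates_add, hf.coordinates_neg, hsw, _root_.neg_add_cancel]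

theorem eq_det_coordinates
    (hker : ∀ k, coordinates f x y z k = 0 → ∀ u v, f k u v = 0) (u v w : Q) :
    f u v w =
      Vec3.det (coordinates f x y z u) (coordinates f x y z v) (coordinates f x y z w) := by
  refine sub_eq_zero.mp <|
    (hf.sub (hf.isAlternatingForm_det x y z)).isAlternatingRelation.of_closure_eq_univ
      (hf.closure_union_setOf_coordinates_eq_zero hxyz) (fun k hk u v => ?_) ?_ u v w
  · rw [hker k hk, show coordinates f x y z k = 0 from hk]
    simp [Vec3.det]
  · simp [coordinates, Vec3.det, hxyz, hf.map_self_left, hf.map_self_right, hf.map_self_outer]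

end IsAlternatingForm

section KernelCentral

variable (hQ : Odd (Nat.card Q))
include hQ

theorem associates_of_ncard_le_nine {K : Set Q} (hK : IsSubloop K) (hK9 : K.ncard ≤ 9) {a : Q}
    (ha0 : a ≠ 0) (ha3 : a + (a + a) = 0) (ha : IsCentral a) (haK : a ∈ K) (u : Q) {s t : Q}
    (hs : s ∈ K) (ht : t ∈ K) : Associates u s t := by
  have : Finite Q := Nat.finite_of_card_ne_zero hQ.pos.ne'
  have hac (m : ZMod 3) : IsCentral (cyclicMap a m) :=
    isSubloop_setOf_isCentral.cyclicMap_mem ha m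
  have haK' : Set.range (cyclicMap a) ⊆ K := Set.range_subset_iff.mpr (hK.cyclicMap_mem haK)
  by_cases hsa : s ∈ Set.range (cyclicMap a)
  · obtain ⟨m, rfl⟩ := hsa
    exact (hac m u t).swap_left
  have h9 := (isSubloop_range_cyclicMap ha3).three_mul_ncard_le hQ
    (isSubloop_closure (insert s (Set.range (cyclicMap a))))
    ((Set.subset_insert _ _).trans (subset_closure _)) hsa (subset_closure _ (Set.mem_insert _ _))
  rw [ncard_range_cyclicMap ha3 ha0] at h9
  have hclosure : closure (insert s (Set.range (cyclicMap a))) = K :=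
    Set.eq_of_subset_of_ncard_le (hK.closure_subset (Set.insert_subset hs haK')) (hK9.trans h9)
  rw [← hclosure] at ht
  refine (isSubloop_setOf_associates u s).closure_subset (Set.insert_subset (inner_right u s) ?_) ht
  rintro _ ⟨m, rfl⟩
  exact (hac m u s).rotate

theorem isCentral_of_coordinates_eq_zero (hcard : Nat.card Q ≤ 243)
    {f : Q → Q → Q → ZMod 3} (hf : IsAlternatingForm f)
    (hassoc : ∀ {u v w}, f u v w = 0 ↔ Associates u v w) {x y z : Q} (hxyz : f x y z = 1) {k : Q}
    (hk : coordinates f x y z k = 0) : IsCentral k := by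
  have hK := hf.isSubloop_setOf_coordinates_eq_zero x y z
  have hxyz' : ¬ Associates x y z := by rw [← hassoc, hxyz]; decide
  have hKyz {k : Q} (hk : coordinates f x y z k = 0) : Associates k y z :=
    hassoc.mp (congrFun hk 0)
  have hKxz {k : Q} (hk : coordinates f x y z k = 0) : Associates k x z :=
    (hassoc.mp (congrFun hk 1)).swap_left
  have hKxy {k : Q} (hk : coordinates f x y z k = 0) : Associates k x y :=
    (hassoc.mp (congrFun hk 2)).rotate.rotate
  have hK9 := twentySeven_mul_ncard_le hQ isSubloop_univ hK (Set.subset_univ _) trivial trivial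
    trivial hxyz' (fun k hk => (hKyz hk).rotate) (fun k hk => (hKxz hk).rotate)
    fun k hk => (hKxy hk).rotate
  rw [Set.ncard_univ] at hK9
  have ha := isCentral_associator hQ hcard x y z
  have haK : coordinates f x y z (associator x y z) = 0 := by
    ext i
    fin_cases i
    exacts [hassoc.mpr (ha y z), hassoc.mpr (ha x z).swap_left,
      hassoc.mpr (ha x y).rotate]
  have hKK (u : Q) {s t : Q} (hs : coordinates f x y z s = 0) (ht : coordinates f x y z t = 0) :
      Associates u s t :=
    associates_of_ncard_le_nine hQ hK (by lia) (mt associates_iff.mpr hxyz')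
      (associator_add_associator_add_associator x y z) ha haK u hs ht
  have hgen := hf.closure_union_setOf_coordinates_eq_zero hxyz
  refine fun u v => associates_of_mem_closure ?_ (hgen.ge trivial) (hgen.ge trivial)
  have hxyz'' : ∀ s ∈ ({x, y, z} : Set Q), ∀ t ∈ ({x, y, z} : Set Q), Associates k s t := by
    rintro s (rfl | rfl | rfl) t (rfl | rfl | rfl)
    exacts [inner_right _ _, hKxy hk, hKxz hk, (hKxy hk).swap_right, inner_right _ _, hKyz hk,
      (hKxz hk).swap_right, (hKyz hk).swap_right, inner_right _ _]
  rintro s (hs | hs) t (ht | ht)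
  exacts [hxyz'' s hs t ht, (hKK s ht hk).rotate.rotate, (hKK t hk hs).rotate, (hKK k hs ht)]

theorem exists_coordinates (hcard : Nat.card Q ≤ 243) {x y z : Q} (hxyz : ¬ Associates x y z) :
    ∃ π : Q → Vec3, (∀ u v, π (u + v) = π u + π v) ∧ Function.Surjective π ∧
      (∀ u v w, associator u v w = cyclicMap (associator x y z) (Vec3.det (π u) (π v) (π w))) ∧
      ∀ c, IsCentral c → π c = 0 := by
  obtain ⟨f, hf, hfa⟩ := exists_isAlternatingForm hQ hcard hxyz
  have ha3 := associator_add_associator_add_associator x y z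
  have hinj := cyclicMap_injective ha3 (mt associates_iff.mpr hxyz)
  have hassoc {u v w : Q} : f u v w = 0 ↔ Associates u v w := by
    rw [associates_iff, hfa, ← hinj.eq_iff, cyclicMap_zero]
  have hf1 : f x y z = 1 := hinj (hfa x y z).symm
  have hcenter (c : Q) (hc : IsCentral c) : coordinates f x y z c = 0 := by
    ext i
    fin_cases i
    exacts [hassoc.mpr (hc y z), hassoc.mpr (hc x z).swap_left, hassoc.mpr (hc x y).rotate]
  refine ⟨coordinates f x y z, hf.coordinates_add x y z, fun v => ?_, fun u v w => ?_, hcenter⟩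
  · obtain ⟨s, -, hs⟩ := hf.exists_mem_closure_coordinates_eq hf1 v
    exact ⟨s, hs⟩
  · rw [hfa, hf.eq_det_coordinates hf1 fun k hk u v => hassoc.mpr
      (isCentral_of_coordinates_eq_zero hQ hcard hf hassoc hf1 hk u v)]

end KernelCentral

end CommMoufangLoop

/-! ### Affine data -/

/-- Data on an abelian group `G` that define a twisted affine quasigroup operation on `G`:
coordinates `π`, an endomorphism `θ`, and a subgroup of order 3 that contains the values of the
twist. -/
structure AffineDatum (G : Type*) [AddCommGroup G] where
  π : G →+ Vec3
  θ : G →+ G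
  ι : ZMod 3 →+ G
  surjective_π : Function.Surjective π
  injective_ι : Function.Injective ι
  π_ι (m : ZMod 3) : π (ι m) = 0
  θ_ι (m : ZMod 3) : θ (ι m) = 0
  π_θ (x : G) : π (θ x) = 0

/-- The operation `x + x - y - θ (x - y)`, twisted by the cubic form. -/
def AffineDatum.op {G : Type*} [AddCommGroup G] (d : AffineDatum G) (x y : G) : G :=
  x + x - y + (d.θ y - d.θ x) + d.ι (Vec3.cubic (d.π x) (d.π y))

section Existence

universe u

theorem exists_addCommGroup_equiv {Q : Type u} (add : Q → Q → Q) (zero : Q) (neg : Q → Q)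
    (add_assoc : ∀ x y z, add (add x y) z = add x (add y z)) (add_comm : ∀ x y, add x y = add y x)
    (zero_add : ∀ x, add zero x = x) (neg_add : ∀ x, add (neg x) x = zero) :
    ∃ (G : Type u) (_ : AddCommGroup G) (e : Q ≃ G), ∀ x y, e (add x y) = e x + e y :=
  letI : Add Q := ⟨add⟩
  letI : Zero Q := ⟨zero⟩
  letI : Neg Q := ⟨neg⟩
  ⟨Q, { AddGroup.ofLeftAxioms add_assoc zero_add neg_add with add_comm }, .refl Q, fun _ _ => rfl⟩

namespace CommMoufangLoop

section

variable {Q A : Type*} [CommMoufangLoop Q] [AddGroup A] {f : Q → A}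
  (hf : ∀ x y, f (x + y) = f x + f y)
include hf

theorem map_zero_of_map_add : f 0 = 0 := by simpa using hf 0 0

theorem map_neg_of_map_add (x : Q) : f (-x) = -f x :=
  eq_neg_of_add_eq_zero_left (by rw [← hf, neg_add_self, map_zero_of_map_add hf])

end

variable {Q : Type u} [CommMoufangLoop Q] {a : Q} {π : Q → Vec3}

theorem exists_addCommGroup (ha : a + (a + a) = 0) (hac : IsCentral a)
    (hπ : ∀ u v, π (u + v) = π u + π v) (hπ0 : ∀ c, IsCentral c → π c = 0)
    (hassoc : ∀ u v w, associator u v w = cyclicMap a (Vec3.det (π u) (π v) (π w))) :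
    ∃ (G : Type u) (_ : AddCommGroup G) (e : Q ≃ G),
      ∀ x y, e (cyclicMap a (Vec3.cubic (π x) (π y)) + (x + y)) = e x + e y := by
  have hc (m : ZMod 3) : IsCentral (cyclicMap a m) := isSubloop_setOf_isCentral.cyclicMap_mem hac m
  have hπz := map_zero_of_map_add hπ
  have hπn := map_neg_of_map_add hπ
  have hπc (m : ZMod 3) (x : Q) : π (cyclicMap a m + x) = π x := by
    rw [hπ, hπ0 _ (hc m), _root_.zero_add]
  refine exists_addCommGroup_equiv _ 0 Neg.neg (fun x y z => ?_) (fun x y => ?_) (fun x => ?_)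
    fun x => ?_
  · rw [hπc, hπc, hπ, hπ, (hc _).add_assoc, (hc _).add_left_comm x, ← (hc _).add_assoc _ (_ + _),
      ← (hc _).add_assoc _ (_ + _), ← cyclicMap_add ha, ← cyclicMap_add ha, add_add_eq x y z,
      inner_apply]
    rw [hassoc, add_comm z (cyclicMap a _), (hc _).add_left_comm (x + y),
      ← (hc (_ + _)).add_assoc (cyclicMap a _), ← cyclicMap_add ha]
    congr 2
    linear_combination -Vec3.det_add_cubic_add_cubic (π x) (π y) (π z)
  · rw [Vec3.cubic_comm, add_comm x]
  · rw [hπz, Vec3.cubic_zero_left, cyclicMap_zero, zero_add, zero_add]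
  · rw [hπn, Vec3.cubic_neg_self, cyclicMap_zero, zero_add, neg_add_self]

theorem map_associator_eq_zero {θ : Q → Q} (hθ : ∀ x y, θ (x + y) = θ x + θ y)
    (hθc : ∀ x, IsCentral (θ x)) (x y z : Q) : θ (associator x y z) = 0 := by
  have h := congrArg θ (add_add_eq x y z)
  rw [inner_apply, hθ, hθ, hθ, hθ, hθ, ← (hθc x).add_assoc,
    ← ((hθc x).add (hθc y)).add_assoc] at h
  exact eq_zero_of_add_eq_right (y := θ x + θ y + θ z) (by rw [add_comm, ← h])

theorem map_cyclicMap_eq_zero {θ : Q → Q} (hθ : ∀ x y, θ (x + y) = θ x + θ y) (hθa : θ a = 0)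
    (m : ZMod 3) : θ (cyclicMap a m) = 0 := by
  have h0 : θ 0 = 0 := eq_zero_of_add_eq_right (by rw [← hθ, add_zero])
  have hneg : θ (-a) = 0 := by
    simpa [add_neg_self, hθa, h0] using (hθ a (-a)).symm
  fin_cases m
  exacts [h0, hθa, hneg]

theorem exists_affineDatum {θ : Q → Q} (ha : a + (a + a) = 0) (ha0 : a ≠ 0) (hac : IsCentral a)
    (hπ : ∀ u v, π (u + v) = π u + π v) (hπ_surj : Function.Surjective π)
    (hπ0 : ∀ c, IsCentral c → π c = 0)
    (hassoc : ∀ u v w, associator u v w = cyclicMap a (Vec3.det (π u) (π v) (π w)))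
    (hθ : ∀ x y, θ (x + y) = θ x + θ y) (hθc : ∀ x, IsCentral (θ x)) (hθa : θ a = 0) :
    ∃ (G : Type u) (_ : AddCommGroup G) (d : AffineDatum G) (e : Q ≃ G),
      ∀ x y, e ((x + (x + -y)) + (θ y + -θ x)) = d.op (e x) (e y) := by
  obtain ⟨G, _, e, he⟩ := exists_addCommGroup ha hac hπ hπ0 hassoc
  have hc (m : ZMod 3) : IsCentral (cyclicMap a m) := isSubloop_setOf_isCentral.cyclicMap_mem hac m
  have he_central {c : Q} (hc : IsCentral c) (x : Q) : e (c + x) = e c + e x := by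
    rw [← he, hπ0 c hc, Vec3.cubic_zero_left, cyclicMap_zero, zero_add]
  have he_add (x y : Q) : e (x + y) = e x + e y - e (cyclicMap a (Vec3.cubic (π x) (π y))) := by
    rw [← he, he_central (hc _), add_sub_cancel_left]
  have he_zero : e 0 = 0 := by simpa using he_central (hc 0) 0
  have symm_add (g h : G) : e.symm (g + h) = cyclicMap a (Vec3.cubic (π (e.symm g))
      (π (e.symm h))) + (e.symm g + e.symm h) := by
    rw [e.symm_apply_eq, he, e.apply_symm_apply, e.apply_symm_apply]
  have hθι := map_cyclicMap_eq_zero hθ hθa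
  let d : AffineDatum G :=
    { π := AddMonoidHom.mk' (fun g => π (e.symm g)) fun g h => by
        rw [symm_add, hπ, hπ, hπ0 _ (hc _), _root_.zero_add]
      θ := AddMonoidHom.mk' (fun g => e (θ (e.symm g))) fun g h => by
        rw [symm_add, hθ, hθ, hθι, zero_add, he_central (hθc _)]
      ι := AddMonoidHom.mk' (fun m => e (cyclicMap a m)) fun m n => by
        rw [cyclicMap_add ha, he_central (hc m)]
      surjective_π := hπ_surj.comp e.symm.surjective
      injective_ι := e.injective.comp (cyclicMap_injective ha ha0)
      π_ι m := by simp [hπ0 _ (hc m)]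
      θ_ι m := by simp [hθι, he_zero]
      π_θ g := by simp [hπ0 _ (hθc _)] }
  have he_neg (x : Q) : e (-x) = -e x := by
    have h := he_add (-x) x
    rw [neg_add_self, map_neg_of_map_add hπ, Vec3.cubic_neg_self, cyclicMap_zero, he_zero,
      sub_zero] at h
    exact eq_neg_of_add_eq_zero_left h.symm
  refine ⟨G, _, d, e, fun x y => ?_⟩
  rw [← add_self_add, add_comm, he_central ((hθc y).add (hθc x).neg), he_central (hθc y), he_neg,
    he_add (x + x), he_add x x, he_neg, hπ, map_neg_of_map_add hπ, Vec3.cubic_self,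
    Vec3.cubic_add_self_neg, cyclicMap_neg ha, he_neg, cyclicMap_zero, he_zero]
  simp only [AffineDatum.op, d, AddMonoidHom.mk'_apply, e.symm_apply_apply]
  abel

theorem medial_of_forall_associates {Q : Type} [CommMoufangLoop Q] {q : Quasigroup Q} {θ : Q → Q}
    (h : ∀ x y z : Q, Associates x y z) (hθ : ∀ x y, θ (x + y) = θ x + θ y)
    (hq : ∀ x y, q.mul x y = (x + (x + -y)) + (θ y + -θ x)) : q.Medial := by
  obtain ⟨G, _, e, he⟩ := exists_addCommGroup_equiv (fun x y : Q => x + y) 0 Neg.neg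
    (fun x y z => associates_iff_add_assoc.mp (h x y z)) add_comm zero_add neg_add_self
  have he_neg := map_neg_of_map_add he
  have hθ_neg (x : Q) : e (θ (-x)) = -e (θ x) :=
    map_neg_of_map_add (f := e ∘ θ) (fun x y => by simp [hθ, he]) x
  intro x y u v
  apply e.injective
  simp only [hq, hθ, he, he_neg, hθ_neg, _root_.neg_add, _root_.neg_neg]
  abel

end CommMoufangLoop

theorem Quasigroup.Distributive.exists_affineDatum {Q : Type} {q : Quasigroup Q}
    (hq : q.Distributive) (hmed : ¬ q.Medial) (hQ : Odd (Nat.card Q)) (hcard : Nat.card Q ≤ 243) :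
    ∃ (G : Type) (_ : AddCommGroup G) (d : AffineDatum G) (e : Q ≃ G),
      ∀ x y, e (q.mul x y) = d.op (e x) (e y) := by
  have : Finite Q := Nat.finite_of_card_ne_zero hQ.pos.ne'
  have : Nonempty Q := (Nat.card_pos_iff.mp hQ.pos).1
  obtain ⟨_, θ, hθc, hθ, hmul⟩ := hq.exists_commMoufangLoop
  obtain ⟨x, y, z, hxyz⟩ : ∃ x y z : Q, ¬ CommMoufangLoop.Associates x y z := by
    by_contra! h
    exact hmed (CommMoufangLoop.medial_of_forall_associates h hθ hmul)
  obtain ⟨π, hπ, hπ_surj, hassoc, hπ0⟩ := CommMoufangLoop.exists_coordinates hQ hcard hxyz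
  simp only [hmul]
  exact CommMoufangLoop.exists_affineDatum
    (CommMoufangLoop.associator_add_associator_add_associator x y z)
    (mt CommMoufangLoop.associates_iff.mpr hxyz)
    (CommMoufangLoop.isCentral_associator hQ hcard x y z) hπ hπ_surj hπ0 hassoc hθ hθc
    (CommMoufangLoop.map_associator_eq_zero hθ hθc x y z)

end Existence

namespace Vec3

theorem det_mulVec (g : Matrix (Fin 3) (Fin 3) (ZMod 3)) (u v w : Vec3) :
    det (g.mulVec u) (g.mulVec v) (g.mulVec w) = g.det * det u v w := by
  simp only [det, Matrix.mulVec, dotProduct, Fin.sum_univ_three, Matrix.det_fin_three]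
  ring

theorem det_zero_left (v w : Vec3) : det 0 v w = 0 := by simp [det]

theorem eq_zero_of_det_eq_zero {u : Vec3} (h : ∀ v w, det u v w = 0) : u = 0 := by
  ext i
  fin_cases i
  exacts [by simpa [det] using h (basis 1) (basis 2), by simpa [det] using h (basis 2) (basis 0),
    by simpa [det] using h (basis 0) (basis 1)]

theorem exists_cubic_mulVec {g : Matrix (Fin 3) (Fin 3) (ZMod 3)} (hg : g.det ≠ 0) :
    ∃ ρ : Vec3 → ZMod 3, ∀ u v, cubic (g.mulVec u) (g.mulVec v) =
      g.det * cubic u v + (ρ u + ρ v - ρ (u + v)) := by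
  refine Matrix.diagonal_transvection_induction_of_det_ne_zero (fun g => ∃ ρ : Vec3 → ZMod 3,
    ∀ u v, cubic (g.mulVec u) (g.mulVec v) = g.det * cubic u v + (ρ u + ρ v - ρ (u + v))) g hg
    (fun D _ => ⟨0, fun u v => ?_⟩) ?_ ?_
  · simp only [cubic, Matrix.mulVec_diagonal, Matrix.det_diagonal, Fin.prod_univ_three,
      Pi.zero_apply]
    ring
  · rintro ⟨i, j, hij, c⟩
    let m (x : Vec3) : ZMod 3 := ![![0, 0, -x 1], ![0, 0, x 0], ![-x 1, x 0, 0]] i j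
    refine ⟨fun x => c * x j ^ 2 * m x, fun u v => ?_⟩
    have hmul (x : Vec3) : (Matrix.transvection i j c).mulVec x = x + Pi.single i (c * x j) := by
      rw [Matrix.transvection, Matrix.add_mulVec, Matrix.one_mulVec, Matrix.single_mulVec]
      rfl
    rw [Matrix.TransvectionStruct.det, Matrix.TransvectionStruct.toMatrix, hmul, hmul, one_mul]
    have h : (m u + m v) * (c * u j * v j) * 3 = 0 := by rw [three_eq_zero, mul_zero]
    fin_cases i <;> fin_cases j <;> first
      | exact absurd rfl hij
      | simp only [m, cubic, Pi.add_apply, Pi.single_apply, Fin.isValue, Fin.reduceEq, if_true,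
          if_false, Fin.reduceFinMk, Fin.zero_eta, Fin.mk_one, Matrix.cons_val] at h ⊢
        linear_combination (exp := 1) h
  · rintro A B - - ⟨ρ, hρ⟩ ⟨σ, hσ⟩
    refine ⟨fun u => ρ (B.mulVec u) + A.det * σ u, fun u v => ?_⟩
    simp only [← Matrix.mulVec_mulVec, hρ, hσ, Matrix.mulVec_add, Matrix.det_mul]
    ring

end Vec3

namespace AffineDatum

section

variable {G : Type*} [AddCommGroup G] (d : AffineDatum G)

@[simp] theorem map_π_op (x y : G) : d.π (d.op x y) = -(d.π x + d.π y) := by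
  have h : d.π x + d.π x + d.π x = 0 := by
    ext i; simp only [Pi.add_apply, Pi.zero_apply]; linear_combination d.π x i * Vec3.three_eq_zero
  simp only [op, map_add, map_sub, d.π_θ, d.π_ι]
  linear_combination (exp := 1) h

theorem map_θ_op (x y : G) : d.θ (d.op x y) =
    d.θ x + d.θ x - d.θ y + (d.θ (d.θ y) - d.θ (d.θ x)) := by
  simp only [op, map_add, map_sub, d.θ_ι, add_zero]

theorem op_op_left (x y z : G) : d.op x (d.op y z) = d.op (d.op x y) (d.op x z) := by
  have hcubic : ∀ u v w : Vec3, Vec3.cubic u (-(v + w)) - Vec3.cubic v w =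
      Vec3.cubic u v + Vec3.cubic u v - Vec3.cubic u w + Vec3.cubic (-(u + v)) (-(u + w)) := by
    intro u v w
    simp only [Vec3.cubic, Pi.neg_apply, Pi.add_apply]
    linear_combination (u 2 * (u 1 * v 0 - u 0 * v 1) + w 2 * (u 1 * w 0 - u 0 * w 1)) *
      Vec3.three_eq_zero
  have h := congrArg d.ι (hcubic (d.π x) (d.π y) (d.π z))
  simp only [map_add, map_sub] at h
  rw [op, map_π_op, map_θ_op, op, op, map_π_op, map_π_op, map_θ_op, map_θ_op, op, op]
  linear_combination (norm := abel) h

theorem op_op_right (x y z : G) : d.op (d.op x y) z = d.op (d.op x z) (d.op y z) := by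
  have hcubic : ∀ u v w : Vec3, Vec3.cubic (-(u + v)) w + (Vec3.cubic u v + Vec3.cubic u v) =
      Vec3.cubic u w + Vec3.cubic u w - Vec3.cubic v w + Vec3.cubic (-(u + w)) (-(v + w)) := by
    intro u v w
    simp only [Vec3.cubic, Pi.neg_apply, Pi.add_apply]
    linear_combination (u 2 * (u 0 * v 1 - u 1 * v 0) - v 2 * (u 0 * v 1 - u 1 * v 0) +
      v 2 * (v 0 * w 1 - v 1 * w 0) + w 2 * (u 0 * w 1 - u 1 * w 0)) * Vec3.three_eq_zero
  have h := congrArg d.ι (hcubic (d.π x) (d.π y) (d.π z))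
  simp only [map_add, map_sub] at h
  rw [op, map_π_op, map_θ_op, op, op, map_π_op, map_π_op, map_θ_op, map_θ_op, op, op]
  linear_combination (norm := abel) h

theorem op_zero_left (y : G) : d.op 0 y = d.θ y - y := by
  simp [op, Vec3.cubic_zero_left]; abel

theorem op_zero_right (x : G) : d.op x 0 = x + x - d.θ x := by
  simp [op, Vec3.cubic_comm _ 0, Vec3.cubic_zero_left]; abel

section Injective

variable {d} (hθ : ∀ x, d.θ (d.θ (d.θ x)) = 0)
include hθ

theorem injective_op_right (x : G) : Function.Injective (d.op x) := by
  intro y z h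
  have hπ : d.π y = d.π z := by simpa using congrArg d.π h
  have hyz : d.θ (y - z) = y - z := by
    rw [op, op, hπ] at h
    rw [map_sub]
    linear_combination (norm := abel) h
  have h0 := hθ (y - z)
  rwa [hyz, hyz, hyz, sub_eq_zero] at h0

theorem injective_op_left (hG : Odd (Nat.card G)) (y : G) : Function.Injective (d.op · y) := by
  intro x z h
  have hπ : d.π x = d.π z := by simpa using congrArg d.π h
  have hxz : d.θ (x - z) = 2 • (x - z) := by
    simp only [op, hπ] at h
    rw [map_sub]
    linear_combination (norm := abel) -h
  have h0 := hθ (x - z)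
  simp only [hxz, map_nsmul] at h0
  have hinj := (Nat.Coprime.nsmul_right_bijective hG.coprime_two_right).injective
  have hzero (w : G) (hw : 2 • w = 0) : w = 0 := hinj (hw.trans (nsmul_zero 2).symm)
  exact sub_eq_zero.mp (hzero _ (hzero _ (hzero _ h0)))

end Injective

end

section Quasigroup

variable {G : Type} [AddCommGroup G] [Finite G] (d : AffineDatum G)
  (hθ : ∀ x, d.θ (d.θ (d.θ x)) = 0) (hG : Odd (Nat.card G))

/-- The quasigroup defined by a datum with nilpotent `θ`. -/
def quasigroup : Quasigroup G where
  mul := d.op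
  leftBij x := Finite.injective_iff_bijective.mp (injective_op_right hθ x)
  rightBij y := Finite.injective_iff_bijective.mp (injective_op_left hθ hG y)

theorem distributive_quasigroup : (d.quasigroup hθ hG).Distributive :=
  ⟨d.op_op_left, d.op_op_right⟩

theorem not_medial_quasigroup : ¬ (d.quasigroup hθ hG).Medial := fun h => by
  obtain ⟨x, hx⟩ := d.surjective_π (Vec3.basis 0)
  obtain ⟨y, hy⟩ := d.surjective_π (Vec3.basis 1)
  obtain ⟨z, hz⟩ := d.surjective_π (Vec3.basis 2)
  have h : d.op (d.op x y) (d.op z 0) = d.op (d.op x z) (d.op y 0) := h x y z 0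
  rw [op, map_θ_op, map_θ_op, map_π_op, map_π_op, op, op, op, map_θ_op, map_θ_op, map_π_op,
    map_π_op, op, op, hx, hy, hz] at h
  simp only [Vec3.cubic, Fin.isValue, ne_eq, Fin.reduceEq, not_false_eq_true,
    Pi.single_eq_of_ne, sub_self, Pi.single_eq_same, mul_one, one_ne_zero, zero_ne_one, mul_zero,
    sub_zero, map_zero, add_zero, zero_sub, Pi.zero_apply, Pi.neg_apply, Pi.add_apply, neg_zero,
    sub_neg_eq_add, zero_add, mul_neg, neg_neg, map_neg] at h
  have hι : d.ι 1 = d.ι 0 := by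
    rw [map_zero]
    linear_combination (norm := abel) h
  exact one_ne_zero (d.injective_ι hι)

end Quasigroup

end AffineDatum

namespace AffineDatum

variable {G G' : Type*} [AddCommGroup G] [AddCommGroup G']

/-- An equivalence of data; it may act on the coordinates by any invertible matrix. -/
structure Equiv (d : AffineDatum G) (d' : AffineDatum G') extends G ≃+ G' where
  matrix : Matrix (Fin 3) (Fin 3) (ZMod 3)
  det_ne_zero : matrix.det ≠ 0
  map_π (x : G) : d'.π (toAddEquiv x) = matrix.mulVec (d.π x)
  map_θ (x : G) : toAddEquiv (d.θ x) = d'.θ (toAddEquiv x)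
  map_ι (m : ZMod 3) : toAddEquiv (d.ι m) = d'.ι (matrix.det * m)

variable {d : AffineDatum G} {d' : AffineDatum G'}

variable (d) in
/-- The translation of `x` by a function of its coordinates. -/
def shear (k : Vec3 → ZMod 3) : G ≃ G where
  toFun x := x + d.ι (k (d.π x))
  invFun x := x - d.ι (k (d.π x))
  left_inv x := by simp [d.π_ι]
  right_inv x := by simp [d.π_ι]

theorem Equiv.exists_map_op (F : d.Equiv d') :
    ∃ f : G ≃ G', ∀ x y, f (d.op x y) = d'.op (f x) (f y) := by
  obtain ⟨ρ, hρ⟩ := Vec3.exists_cubic_mulVec F.det_ne_zero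
  have hρ_neg (u : Vec3) : ρ (-u) = -ρ u := by
    have h0 := hρ 0 0
    have h := hρ (-u) u
    rw [Matrix.mulVec_neg, Vec3.cubic_neg_self, Vec3.cubic_neg_self, neg_add_cancel] at h
    rw [Matrix.mulVec_zero, Vec3.cubic_zero_left, add_zero] at h0
    linear_combination -h0 - h
  let f := (d.shear fun u => F.matrix.det⁻¹ * ρ u).trans F.toEquiv
  have hf (x : G) : f x = F.toAddEquiv x + d'.ι (ρ (d.π x)) := by
    change F.toAddEquiv (x + d.ι (F.matrix.det⁻¹ * ρ (d.π x))) = _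
    rw [map_add, F.map_ι, mul_inv_cancel_left₀ F.det_ne_zero]
  refine ⟨f, fun x y => ?_⟩
  have h3 : d'.ι (ρ (d.π x)) + d'.ι (ρ (d.π x)) + d'.ι (ρ (d.π x)) = 0 := by
    rw [← map_add, ← map_add, ← map_zero d'.ι]
    congr 1
    linear_combination ρ (d.π x) * Vec3.three_eq_zero
  rw [hf, map_π_op, hρ_neg, hf, hf, op, op]
  simp only [map_add, map_sub, map_neg, F.map_θ, F.map_ι, d'.θ_ι, F.map_π, d'.π_ι, add_zero, hρ]
  linear_combination (norm := abel) -h3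

variable (d) in
/-- The sum of `x` and `y` in the commutative Moufang loop isotopic to the quasigroup of `d`. -/
def loopAdd (x y : G) : G := x + y - d.ι (Vec3.cubic (d.π x) (d.π y))

theorem loopAdd_op_zero_op_zero (x y : G) : d.loopAdd (d.op x 0) (d.op 0 y) = d.op x y := by
  have h : Vec3.cubic (-d.π x) (-d.π y) = -Vec3.cubic (d.π x) (d.π y) := by
    simp only [Vec3.cubic, Pi.neg_apply]; ring
  rw [loopAdd, map_π_op, map_π_op, map_zero, add_zero, zero_add, h, op_zero_left, op_zero_right, op,
    map_neg]
  abel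

theorem loopAdd_of_π_eq_zero {x y : G} (hy : d.π y = 0) : d.loopAdd x y = x + y := by
  rw [loopAdd, hy, Vec3.cubic_comm, Vec3.cubic_zero_left, map_zero, sub_zero]

theorem π_loopAdd (x y : G) : d.π (d.loopAdd x y) = d.π x + d.π y := by
  rw [loopAdd, map_sub, d.π_ι, sub_zero, map_add]

theorem loopAdd_loopAdd (x y z : G) : d.loopAdd x (d.loopAdd y z) =
    d.loopAdd (d.loopAdd x y) z + d.ι (Vec3.det (d.π x) (d.π y) (d.π z)) := by
  have h := congrArg d.ι (Vec3.det_add_cubic_add_cubic (d.π x) (d.π y) (d.π z))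
  simp only [map_add] at h
  rw [loopAdd, loopAdd.eq_def d (d.loopAdd x y), π_loopAdd, π_loopAdd, loopAdd, loopAdd]
  linear_combination (norm := abel) -h

theorem loopAdd_left_cancel {x y z : G} (h : d.loopAdd x y = d.loopAdd x z) : y = z := by
  have hπ : d.π y = d.π z := by simpa [π_loopAdd] using congrArg d.π h
  simpa [loopAdd, hπ] using h

theorem loopAdd_self (x : G) : d.loopAdd x x = x + x := by
  rw [loopAdd, Vec3.cubic_self, map_zero, sub_zero]

theorem loopAdd_neg_self (x : G) : d.loopAdd x (-x) = 0 := by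
  rw [loopAdd, map_neg, Vec3.cubic_comm, Vec3.cubic_neg_self, map_zero, add_neg_cancel, sub_zero]

theorem loopAdd_neg_θ (x : G) : d.loopAdd (d.loopAdd x x) (-d.θ x) = d.op x 0 := by
  rw [loopAdd_of_π_eq_zero (by rw [map_neg, d.π_θ, neg_zero]), loopAdd_self, op_zero_right,
    sub_eq_add_neg]

section LoopEquiv

variable {f : G ≃ G'} (hf : ∀ x y, f (d.loopAdd x y) = d'.loopAdd (f x) (f y))
include hf

theorem map_zero_of_map_loopAdd : f 0 = 0 := by
  simpa [loopAdd_self] using hf 0 0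

theorem map_neg_of_map_loopAdd (x : G) : f (-x) = -f x := by
  refine loopAdd_left_cancel (d := d') (x := f x) ?_
  rw [← hf, loopAdd_neg_self, loopAdd_neg_self, map_zero_of_map_loopAdd hf]

theorem map_ι_det_of_map_loopAdd (x y z : G) :
    f (d.ι (Vec3.det (d.π x) (d.π y) (d.π z))) =
      d'.ι (Vec3.det (d'.π (f x)) (d'.π (f y)) (d'.π (f z))) := by
  refine loopAdd_left_cancel (d := d') (x := f (d.loopAdd (d.loopAdd x y) z)) ?_
  rw [← hf, loopAdd_of_π_eq_zero (d.π_ι _), ← loopAdd_loopAdd, hf, hf, loopAdd_loopAdd,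
    loopAdd_of_π_eq_zero (d'.π_ι _), hf, hf]

theorem π_map_eq_zero_of_map_loopAdd {x : G} (hx : d.π x = 0) : d'.π (f x) = 0 := by
  have hdet (v w : Vec3) : Vec3.det (d'.π (f x)) v w = 0 := by
    obtain ⟨y, rfl⟩ := d'.surjective_π.comp f.surjective v
    obtain ⟨z, rfl⟩ := d'.surjective_π.comp f.surjective w
    refine d'.injective_ι ((map_ι_det_of_map_loopAdd hf x y z).symm.trans ?_)
    rw [hx, Vec3.det_zero_left, d.ι.map_zero, d'.ι.map_zero, map_zero_of_map_loopAdd hf]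
  exact Vec3.eq_zero_of_det_eq_zero hdet

theorem map_add_of_map_loopAdd (x y : G) :
    f (x + y) = f x + f y - d'.ι (Vec3.cubic (d'.π (f x)) (d'.π (f y))) +
      f (d.ι (Vec3.cubic (d.π x) (d.π y))) := by
  have h : x + y = d.loopAdd (d.loopAdd x y) (d.ι (Vec3.cubic (d.π x) (d.π y))) := by
    rw [loopAdd_of_π_eq_zero (d.π_ι _), loopAdd, sub_add_cancel]
  rw [h, hf, hf, loopAdd_of_π_eq_zero (π_map_eq_zero_of_map_loopAdd hf (d.π_ι _)), loopAdd]

theorem exists_matrix_of_map_loopAdd : ∃ A : Matrix (Fin 3) (Fin 3) (ZMod 3),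
    (∀ x, d'.π (f x) = A.mulVec (d.π x)) ∧ A.det ≠ 0 ∧ ∀ m, f (d.ι m) = d'.ι (A.det * m) := by
  let φ : G →+ Vec3 := AddMonoidHom.mk' (fun x => d'.π (f x)) fun x y => by
    rw [map_add_of_map_loopAdd hf, map_add, map_sub, map_add, d'.π_ι,
      π_map_eq_zero_of_map_loopAdd hf (d.π_ι _), sub_zero, add_zero]
  let g : Vec3 →+ Vec3 := d.π.liftOfSurjective d.surjective_π
    ⟨φ, fun x hx => π_map_eq_zero_of_map_loopAdd hf hx⟩
  let A := LinearMap.toMatrix' (g.toZModLinearMap 3)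
  have hA (x : G) : d'.π (f x) = A.mulVec (d.π x) := by
    rw [LinearMap.toMatrix'_mulVec]
    exact (d.π.liftOfRightInverse_comp_apply _ (Function.rightInverse_surjInv d.surjective_π)
      ⟨φ, fun x hx => π_map_eq_zero_of_map_loopAdd hf hx⟩ x).symm
  have hι (m : ZMod 3) : f (d.ι m) = d'.ι (A.det * m) := by
    obtain ⟨x, hx⟩ := d.surjective_π (m • Vec3.basis 0)
    obtain ⟨y, hy⟩ := d.surjective_π (Vec3.basis 1)
    obtain ⟨z, hz⟩ := d.surjective_π (Vec3.basis 2)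
    have h := map_ι_det_of_map_loopAdd hf x y z
    have hm : Vec3.det (m • Vec3.basis 0) (Vec3.basis 1) (Vec3.basis 2) = m := by
      simp [Vec3.det]
    rwa [hA, hA, hA, Vec3.det_mulVec, hx, hy, hz, hm] at h
  refine ⟨A, hA, fun h0 => one_ne_zero (d.injective_ι (f.injective ?_)), hι⟩
  rw [hι, h0, zero_mul, map_zero, map_zero, map_zero_of_map_loopAdd hf]

theorem nonempty_equiv_of_map_loopAdd (hθ : ∀ x, f (d.θ x) = d'.θ (f x)) :
    Nonempty (d.Equiv d') := by
  obtain ⟨A, hA, hA0, hι⟩ := exists_matrix_of_map_loopAdd hf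
  obtain ⟨ρ, hρ⟩ := Vec3.exists_cubic_mulVec hA0
  have hρ0 : ρ 0 = 0 := by simpa [Vec3.cubic_zero_left] using (hρ 0 0).symm
  let F := (d.shear fun u => -A.det⁻¹ * ρ u).trans f
  have hF (x : G) : F x = f x - d'.ι (ρ (d.π x)) := by
    change f (x + d.ι (-A.det⁻¹ * ρ (d.π x))) = _
    rw [← loopAdd_of_π_eq_zero (d.π_ι _), hf, hι, loopAdd_of_π_eq_zero (d'.π_ι _), neg_mul, mul_neg,
      mul_inv_cancel_left₀ hA0, map_neg, sub_eq_add_neg]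
  have hF_add (x y : G) : F (x + y) = F x + F y := by
    rw [hF, hF, hF, map_add_of_map_loopAdd hf, hι, hA, hA, hρ, map_add d.π]
    simp only [map_add, map_sub]
    abel
  exact ⟨{
    toAddEquiv := { F with map_add' := hF_add }
    matrix := A
    det_ne_zero := hA0
    map_π := fun x => by
      change d'.π (F x) = _
      rw [hF, map_sub, d'.π_ι, sub_zero, hA]
    map_θ := fun x => by
      change F (d.θ x) = d'.θ (F x)
      rw [hF, hF, d.π_θ, hρ0, map_zero, sub_zero, hθ, map_sub, d'.θ_ι, sub_zero]
    map_ι := fun m => by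
      change F (d.ι m) = _
      rw [hF, d.π_ι, hρ0, map_zero, sub_zero, hι] }⟩

end LoopEquiv

theorem map_loopAdd_of_map_op {f : G ≃ G'} (hf : ∀ x y, f (d.op x y) = d'.op (f x) (f y))
    (hf0 : f 0 = 0) (hl : Function.Surjective (d.op 0)) (hr : Function.Surjective (d.op · 0))
    (x y : G) : f (d.loopAdd x y) = d'.loopAdd (f x) (f y) := by
  obtain ⟨x, rfl⟩ := hr x
  obtain ⟨y, rfl⟩ := hl y
  dsimp only
  rw [loopAdd_op_zero_op_zero, hf, hf, hf, hf0, loopAdd_op_zero_op_zero]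

theorem map_θ_of_map_op {f : G ≃ G'} (hf : ∀ x y, f (d.op x y) = d'.op (f x) (f y))
    (hf_add : ∀ x y, f (d.loopAdd x y) = d'.loopAdd (f x) (f y)) (x : G) :
    f (d.θ x) = d'.θ (f x) := by
  refine neg_injective ?_
  rw [← map_neg_of_map_loopAdd hf_add]
  refine loopAdd_left_cancel (d := d') (x := d'.loopAdd (f x) (f x)) ?_
  rw [← hf_add, ← hf_add (d.loopAdd x x), loopAdd_neg_θ, hf_add, loopAdd_neg_θ, hf,
    map_zero_of_map_loopAdd hf_add]

theorem exists_map_op_iff (hl : ∀ x, Function.Bijective (d.op x))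
    (hr : ∀ y, Function.Surjective (d.op · y)) :
    (∃ f : G ≃ G', ∀ x y, f (d.op x y) = d'.op (f x) (f y)) ↔ Nonempty (d.Equiv d') := by
  refine ⟨fun ⟨f, hf⟩ => ?_, fun ⟨F⟩ => F.exists_map_op⟩
  obtain ⟨a, ha⟩ := hr 0 (f.symm 0)
  let f' := (Equiv.ofBijective _ (hl a)).trans f
  have hf' (x y : G) : f' (d.op x y) = d'.op (f' x) (f' y) := by
    change f (d.op a (d.op x y)) = d'.op (f (d.op a x)) (f (d.op a y))
    rw [← hf, op_op_left]
  have hf'0 : f' 0 = 0 := by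
    change f (d.op a 0) = 0
    simpa using congrArg f ha
  have hf'_add := map_loopAdd_of_map_op hf' hf'0 (hl 0).surjective (hr 0)
  exact nonempty_equiv_of_map_loopAdd hf'_add (map_θ_of_map_op hf' hf'_add)

end AffineDatum

/-! ### Presentations -/

/-- Integers describing the relations between the generators `e₀, e₁, e₂, b, c` of a datum `d` of
order 243, where the `eᵢ` lift the standard basis, `b` lies in the kernel of `d.π` and `c = d.ι 1`:
`3 b = δ c`, `θ b = ε c`, `3 eᵢ = αᵢ b + βᵢ c` and `θ eᵢ = γᵢ b + ρᵢ c`. -/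
structure Presentation where
  δ : ℤ
  ε : ℤ
  α : Fin 3 → ℤ
  β : Fin 3 → ℤ
  γ : Fin 3 → ℤ
  ρ : Fin 3 → ℤ
  compat : δ • γ = ε • α

namespace Presentation

/-- The free abelian group on the generators `e₀, e₁, e₂, b, c`. -/
abbrev Free : Type := (Fin 3 → ℤ) × ℤ × ℤ

variable (p : Presentation)

/-- The relator `3 w - α·w b - β·w c`, plus `k` times `3 b - δ c`, plus `l` times `3 c`. -/
def relator : Free →+ Free where
  toFun x := ((3 : ℤ) • x.1, 3 * x.2.1 - p.α ⬝ᵥ x.1, 3 * x.2.2 - p.β ⬝ᵥ x.1 - p.δ * x.2.1)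
  map_zero' := by simp
  map_add' x y := by
    simp only [Prod.fst_add, Prod.snd_add, dotProduct_add, Prod.mk_add_mk, smul_add, Prod.mk.injEq,
      true_and]
    constructor <;> ring

/-- The abelian group defined by the presentation. -/
abbrev Group : Type := Free ⧸ p.relator.range

/-- The endomorphism of the free group that induces `θ`. -/
def freeθ : Free →+ Free where
  toFun x := (0, p.γ ⬝ᵥ x.1, p.ρ ⬝ᵥ x.1 + p.ε * x.2.1)
  map_zero' := by simp
  map_add' x y := by
    simp only [Prod.fst_add, Prod.snd_add, dotProduct_add, Prod.mk_add_mk, zero_add, Prod.mk.injEq,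
      true_and]
    ring

theorem freeθ_relator (x : Free) : p.freeθ (p.relator x) =
    p.relator (0, p.γ ⬝ᵥ x.1, p.ρ ⬝ᵥ x.1 + p.ε * x.2.1) := by
  have h : p.δ * p.γ ⬝ᵥ x.1 = p.ε * p.α ⬝ᵥ x.1 := by
    rw [← smul_eq_mul, ← smul_dotProduct, p.compat, smul_dotProduct, smul_eq_mul]
  ext
  · simp [freeθ, relator]
  · simp only [freeθ, relator, AddMonoidHom.coe_mk, ZeroHom.coe_mk, dotProduct_smul, smul_eq_mul,
      dotProduct_zero, sub_zero]
  · simp only [freeθ, relator, AddMonoidHom.coe_mk, ZeroHom.coe_mk, dotProduct_smul, smul_eq_mul,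
      dotProduct_zero]
    linear_combination h

/-- Coordinates modulo 3 on the free group. -/
def freeπ : Free →+ Vec3 :=
  ((Int.castAddHom (ZMod 3)).compLeft (Fin 3)).comp (AddMonoidHom.fst _ _)

theorem freeπ_relator (x : Free) : freeπ (p.relator x) = 0 := by
  ext i
  simp [freeπ, relator, show (3 : ZMod 3) = 0 from rfl]

theorem freeπ_freeθ (x : Free) : freeπ (p.freeθ x) = 0 := by
  ext i
  simp [freeπ, freeθ]

theorem three_zsmul_mem_range_relator : (0, 0, 3) ∈ p.relator.range :=
  ⟨(0, 0, 1), by simp [relator]⟩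

theorem three_dvd_of_mem_range_relator {n : ℤ} (h : (0, 0, n) ∈ p.relator.range) : 3 ∣ n := by
  obtain ⟨⟨w, k, l⟩, h⟩ := h
  simp only [relator, AddMonoidHom.coe_mk, ZeroHom.coe_mk, Prod.mk.injEq, smul_eq_zero,
    OfNat.ofNat_ne_zero, false_or] at h
  obtain ⟨rfl, hk, hl⟩ := h
  rw [dotProduct_zero] at hk hl
  obtain rfl : k = 0 := by lia
  exact ⟨l, by linear_combination -hl⟩

/-- The multiples of the generator `c`. -/
def ιHom : ZMod 3 →+ p.Group :=
  ZMod.lift 3 ⟨(QuotientAddGroup.mk' _).comp ((AddMonoidHom.inr _ _).comp (AddMonoidHom.inr _ _)),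
    (QuotientAddGroup.eq_zero_iff _).mpr p.three_zsmul_mem_range_relator⟩

theorem ιHom_intCast (n : ℤ) : p.ιHom n = ((0, 0, n) : Free) := ZMod.lift_coe _ _ _

/-- The datum defined by the presentation. -/
def datum : AffineDatum p.Group where
  π := QuotientAddGroup.lift _ freeπ (by rintro _ ⟨x, rfl⟩; exact p.freeπ_relator x)
  θ := QuotientAddGroup.map _ _ p.freeθ (by
    rintro _ ⟨x, rfl⟩; exact ⟨_, (p.freeθ_relator x).symm⟩)
  ι := p.ιHom
  surjective_π v := ⟨((fun i => (v i).val, 0, 0) : Free), by ext i; simp [freeπ]⟩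
  injective_ι := (ZMod.lift_injective 3).mpr fun n hn => by
    rw [ZMod.intCast_zmod_eq_zero_iff_dvd]
    exact p.three_dvd_of_mem_range_relator ((QuotientAddGroup.eq_zero_iff _).mp hn)
  π_ι := ZMod.intCast_surjective.forall.mpr fun n => by
    rw [ιHom_intCast]
    ext i
    simp [freeπ]
  θ_ι := ZMod.intCast_surjective.forall.mpr fun n => by
    rw [ιHom_intCast, QuotientAddGroup.map_mk]
    simp [freeθ, ← Prod.zero_eq_mk]
  π_θ x := by
    induction x using QuotientAddGroup.induction_on with
    | H x => exact p.freeπ_freeθ x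

theorem datum_π_mk (x : Free) : p.datum.π x = freeπ x := rfl

theorem datum_θ_mk (x : Free) : p.datum.θ x = p.freeθ x := rfl

theorem datum_θ_θ_θ (x : p.Group) : p.datum.θ (p.datum.θ (p.datum.θ x)) = 0 := by
  induction x using QuotientAddGroup.induction_on with
  | H x =>
    rw [datum_θ_mk, datum_θ_mk, datum_θ_mk]
    simp [freeθ, ← Prod.zero_eq_mk]

/-- The class of an element of the free group with coordinates in `{0, 1, 2}`. -/
def ofResidues (x : (Fin 3 → Fin 3) × Fin 3 × Fin 3) : p.Group :=
  ((fun i => ((x.1 i : ℕ) : ℤ), ((x.2.1 : ℕ) : ℤ), ((x.2.2 : ℕ) : ℤ)) : Free)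

theorem injective_ofResidues : Function.Injective p.ofResidues := by
  rintro ⟨z, m, n⟩ ⟨z', m', n'⟩ h
  obtain ⟨⟨w, k, l⟩, h⟩ := QuotientAddGroup.eq.mp h
  simp only [relator, AddMonoidHom.coe_mk, ZeroHom.coe_mk, Prod.neg_mk, Prod.mk_add_mk,
    Prod.mk.injEq, funext_iff, Pi.smul_apply, Pi.add_apply, Pi.neg_apply, smul_eq_mul] at h
  obtain ⟨hw, hk, hl⟩ := h
  have eq_of_dvd {a b : Fin 3} {c : ℤ} (h : 3 * c = -((a : ℕ) : ℤ) + ((b : ℕ) : ℤ)) :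
      c = 0 ∧ a = b := by
    have := a.isLt
    have := b.isLt
    exact ⟨by omega, Fin.ext (by omega)⟩
  obtain rfl : w = 0 := funext fun i => (eq_of_dvd (hw i)).1
  rw [dotProduct_zero, sub_zero] at hk hl
  obtain ⟨rfl, rfl⟩ := eq_of_dvd hk
  rw [mul_zero, sub_zero] at hl
  rw [(eq_of_dvd hl).2, funext fun i => (eq_of_dvd (hw i)).2]

theorem surjective_ofResidues : Function.Surjective p.ofResidues := by
  let residue (a : ℤ) : Fin 3 := ⟨(a % 3).toNat, by lia⟩
  have hresidue (a : ℤ) : ((residue a : ℕ) : ℤ) = a - 3 * (a / 3) := by simp only [residue]; lia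
  refine fun x => QuotientAddGroup.induction_on x fun ⟨z, m, n⟩ => ?_
  let w (i : Fin 3) : ℤ := z i / 3
  let k := (m + p.α ⬝ᵥ w) / 3
  let l := (n + p.β ⬝ᵥ w + p.δ * k) / 3
  refine ⟨(fun i => residue (z i), residue (m + p.α ⬝ᵥ w),
    residue (n + p.β ⬝ᵥ w + p.δ * k)), QuotientAddGroup.eq.mpr ⟨(w, k, l), ?_⟩⟩
  simp only [relator, AddMonoidHom.coe_mk, ZeroHom.coe_mk, Prod.neg_mk, Prod.mk_add_mk, hresidue,
    Prod.mk.injEq, funext_iff, Pi.smul_apply, Pi.add_apply, Pi.neg_apply, smul_eq_mul, w, k, l]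
  refine ⟨fun i => ?_, ?_, ?_⟩ <;> ring

theorem card_group : Nat.card p.Group = 243 := by
  rw [← Nat.card_eq_of_bijective _ ⟨p.injective_ofResidues, p.surjective_ofResidues⟩]
  simp

instance : Finite p.Group := Nat.finite_of_card_ne_zero (by rw [p.card_group]; simp)

end Presentation

namespace AffineDatum

variable {G : Type*} [AddCommGroup G]

/-- Elements of `G` that satisfy the relations of a presentation `p` and generate `G`. -/
structure Frame (d : AffineDatum G) (p : Presentation) where
  e : Fin 3 → G
  b : G
  π_e (i : Fin 3) : d.π (e i) = Vec3.basis i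
  π_b : d.π b = 0
  exists_eq (x : G) : d.π x = 0 → ∃ m n : ℤ, x = m • b + d.ι n
  three_b : (3 : ℤ) • b = d.ι p.δ
  θ_b : d.θ b = d.ι p.ε
  three_e (i : Fin 3) : (3 : ℤ) • e i = p.α i • b + d.ι (p.β i)
  θ_e (i : Fin 3) : d.θ (e i) = p.γ i • b + d.ι (p.ρ i)

namespace Frame

variable {d : AffineDatum G} {p : Presentation} (F : d.Frame p)

/-- The homomorphism from the free group that sends its generators to the frame. -/
def freeHom : Presentation.Free →+ G where
  toFun x := ∑ i, x.1 i • F.e i + x.2.1 • F.b + d.ι x.2.2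
  map_zero' := by simp
  map_add' x y := by
    simp only [Prod.fst_add, Prod.snd_add, Pi.add_apply, add_smul, Finset.sum_add_distrib,
      Int.cast_add, map_add]
    abel

theorem freeHom_apply (x : Presentation.Free) :
    F.freeHom x = ∑ i, x.1 i • F.e i + x.2.1 • F.b + d.ι x.2.2 := rfl

theorem sum_smul_add_ι (w u v : Fin 3 → ℤ) :
    ∑ i, w i • (u i • F.b + d.ι (v i)) = (u ⬝ᵥ w) • F.b + d.ι (v ⬝ᵥ w : ℤ) := by
  simp only [smul_add, ← mul_smul, Finset.sum_add_distrib, ← Finset.sum_smul, dotProduct,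
    Int.cast_sum, map_sum, Int.cast_mul, ← zsmul_eq_mul', map_zsmul]
  simp only [mul_comm]

theorem freeHom_relator (x : Presentation.Free) : F.freeHom (p.relator x) = 0 := by
  have he : ∑ i, ((3 : ℤ) • x.1) i • F.e i = (p.α ⬝ᵥ x.1) • F.b + d.ι (p.β ⬝ᵥ x.1 : ℤ) := by
    rw [← F.sum_smul_add_ι]
    refine Finset.sum_congr rfl fun i _ => ?_
    rw [← F.three_e, Pi.smul_apply, smul_eq_mul, mul_comm, mul_smul]
  have hb : (3 * x.2.1) • F.b = d.ι (p.δ * x.2.1) := by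
    rw [mul_comm, mul_smul, F.three_b, ← map_zsmul, zsmul_eq_mul, mul_comm]
  have hc : ((3 : ℤ) : ZMod 3) = 0 := rfl
  simp only [freeHom_apply, Presentation.relator, AddMonoidHom.coe_mk, ZeroHom.coe_mk, he, sub_smul,
    hb, Int.cast_sub, Int.cast_mul, hc, zero_mul, map_sub, map_zero]
  abel

/-- The homomorphism from the presented group defined by a frame. -/
def hom : p.Group →+ G :=
  QuotientAddGroup.lift _ F.freeHom (by rintro _ ⟨x, rfl⟩; exact F.freeHom_relator x)

theorem hom_mk (x : Presentation.Free) : F.hom x = F.freeHom x := rfl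

theorem π_hom (x : p.Group) : d.π (F.hom x) = p.datum.π x := by
  induction x using QuotientAddGroup.induction_on with
  | H x =>
    rw [hom_mk, p.datum_π_mk, freeHom_apply]
    ext i
    simp [F.π_e, F.π_b, d.π_ι, Presentation.freeπ, Pi.single_apply]

theorem hom_θ (x : p.Group) : F.hom (p.datum.θ x) = d.θ (F.hom x) := by
  induction x using QuotientAddGroup.induction_on with
  | H x =>
    rw [p.datum_θ_mk, hom_mk, hom_mk, freeHom_apply, freeHom_apply]
    have hb : d.θ (x.2.1 • F.b) = d.ι (p.ε * x.2.1 : ℤ) := by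
      rw [map_zsmul, F.θ_b, ← map_zsmul, zsmul_eq_mul, Int.cast_mul, mul_comm]
    have he (i : Fin 3) : d.θ (x.1 i • F.e i) = x.1 i • (p.γ i • F.b + d.ι (p.ρ i)) := by
      rw [map_zsmul, F.θ_e]
    simp only [map_add, map_sum, he, F.sum_smul_add_ι, hb, d.θ_ι,
      Presentation.freeθ, AddMonoidHom.coe_mk, ZeroHom.coe_mk, Pi.zero_apply, zero_smul,
      Finset.sum_const_zero, zero_add, Int.cast_add, add_zero, add_assoc]

theorem hom_ι (m : ZMod 3) : F.hom (p.datum.ι m) = d.ι m := by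
  obtain ⟨n, rfl⟩ := ZMod.intCast_surjective m
  change F.hom (p.ιHom n) = _
  rw [p.ιHom_intCast, hom_mk, freeHom_apply]
  simp

theorem surjective_hom : Function.Surjective F.hom := fun x => by
  obtain ⟨y, hy⟩ := p.datum.surjective_π (d.π x)
  obtain ⟨m, n, h⟩ := F.exists_eq (x - F.hom y) (by rw [map_sub, F.π_hom, hy, sub_self])
  refine ⟨y + ((0, m, n) : Presentation.Free), ?_⟩
  rw [map_add, hom_mk, freeHom_apply]
  simp [← h]

include F in
theorem nonempty_equiv (hG : Nat.card G = 243) : Nonempty (p.datum.Equiv d) := by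
  have hbij := (Nat.bijective_iff_surjective_and_card F.hom).mpr
    ⟨F.surjective_hom, by rw [hG, p.card_group]⟩
  exact ⟨{
    toAddEquiv := AddEquiv.ofBijective F.hom hbij
    matrix := 1
    det_ne_zero := by simp
    map_π := by simpa using F.π_hom
    map_θ := F.hom_θ
    map_ι := by simpa using F.hom_ι }⟩

end Frame

end AffineDatum

namespace AffineDatum

variable {G : Type*} [AddCommGroup G] {d : AffineDatum G}

theorem range_ι_le_ker_π : d.ι.range ≤ d.π.ker := by
  rintro _ ⟨m, rfl⟩
  exact d.π_ι m

theorem relIndex_range_ι_ker_π (hG : Nat.card G = 243) : d.ι.range.relIndex d.π.ker = 3 := by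
  have hker : d.π.ker.index = 27 := by
    rw [AddSubgroup.index_ker, d.π.range_eq_top_of_surjective d.surjective_π,
      AddSubgroup.card_top]
    simp
  have hrange : Nat.card d.ι.range = 3 := by
    rw [← Nat.card_congr (AddMonoidHom.ofInjective d.injective_ι).toEquiv]
    simp
  have hmul := AddSubgroup.relIndex_mul_index d.range_ι_le_ker_π
  have hcard := d.ι.range.card_mul_index
  rw [hker] at hmul
  rw [hrange, hG] at hcard
  omega

theorem exists_π_eq_zero_notMem_range_ι (hG : Nat.card G = 243) :
    ∃ b, d.π b = 0 ∧ b ∉ d.ι.range := by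
  by_contra! h
  have := AddSubgroup.relIndex_eq_one.mpr (show d.π.ker ≤ d.ι.range from h)
  rw [relIndex_range_ι_ker_π hG] at this
  simp at this

theorem three_zsmul_mem_range_ι (hG : Nat.card G = 243) {x : G} (hx : d.π x = 0) :
    (3 : ℤ) • x ∈ d.ι.range := by
  have h := d.ι.range.nsmul_relIndex_mem (K := d.π.ker) hx
  rw [relIndex_range_ι_ker_π hG] at h
  exact_mod_cast h

theorem exists_eq_zsmul_add_ι (hG : Nat.card G = 243) {b : G} (hπ : d.π b = 0)
    (hι : b ∉ d.ι.range) {x : G} (hx : d.π x = 0) : ∃ m n : ℤ, x = m • b + d.ι n := by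
  let H := AddSubgroup.zmultiples b ⊔ d.ι.range
  have hH : H ≤ d.π.ker := sup_le (by simpa using hπ) d.range_ι_le_ker_π
  have hmul := AddSubgroup.relIndex_mul_relIndex _ _ _ (le_sup_right : d.ι.range ≤ H) hH
  rw [relIndex_range_ι_ker_π hG] at hmul
  have hone : d.ι.range.relIndex H ≠ 1 := fun h => hι
    (AddSubgroup.relIndex_eq_one.mp h (le_sup_left (a := AddSubgroup.zmultiples b) (by simp)))
  have hker : H.relIndex d.π.ker = 1 := by
    rw [(Nat.prime_three.eq_one_or_self_of_dvd _ ⟨_, hmul.symm⟩).resolve_left hone] at hmul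
    exact (Nat.mul_eq_left three_ne_zero).mp hmul
  obtain ⟨_, ⟨m, rfl⟩, _, ⟨k, rfl⟩, h⟩ :=
    AddSubgroup.mem_sup.mp (AddSubgroup.relIndex_eq_one.mp hker hx)
  obtain ⟨n, rfl⟩ := ZMod.intCast_surjective k
  exact ⟨m, n, h.symm⟩

theorem θ_mem_range_ι (hG : Nat.card G = 243) (hl : Function.Injective (d.op 0))
    (hr : Function.Injective (d.op · 0)) {x : G} (hx : d.π x = 0) : d.θ x ∈ d.ι.range := by
  by_cases hι : x ∈ d.ι.range
  · obtain ⟨m, rfl⟩ := hι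
    exact ⟨0, by rw [d.θ_ι, map_zero]⟩
  obtain ⟨m, n, h⟩ := exists_eq_zsmul_add_ι hG hx hι (d.π_θ x)
  have hmod : d.θ x - (m % 3) • x ∈ d.ι.range := by
    have : d.θ x - (m % 3) • x = (m / 3) • (3 : ℤ) • x + d.ι n := by
      nth_rw 1 [h, ← Int.emod_add_mul_ediv m 3]
      rw [add_smul, mul_comm, mul_smul]
      abel
    rw [this]
    exact add_mem (zsmul_mem (three_zsmul_mem_range_ι hG hx) _) ⟨n, rfl⟩
  obtain hm | hm | hm : m % 3 = 0 ∨ m % 3 = 1 ∨ m % 3 = 2 := by lia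
  · simpa [hm] using hmod
  · rw [hm, one_smul, ← op_zero_left] at hmod
    obtain ⟨k, hk⟩ := hmod
    refine absurd ⟨-k, hl ?_⟩ hι
    rw [← hk, op_zero_left, d.θ_ι, map_neg, zero_sub, neg_neg]
  · rw [hm, two_smul, ← neg_mem_iff, neg_sub, ← op_zero_right] at hmod
    obtain ⟨k, hk⟩ := hmod
    refine absurd ⟨-k, hr ?_⟩ hι
    simp only [← hk, op_zero_right, d.θ_ι, sub_zero, ← map_add]
    congr 1
    linear_combination -k * Vec3.three_eq_zero

end AffineDatum

/-! ### Invariants in order 243 -/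

/-- The vectors describing a datum of order 243 in suitable bases. In type I, one of `3` and `θ`,
the pivot, is nonzero on the kernel of `π`; in type II, both vanish there. -/
inductive Invariant
  | typeI (l : Option (ZMod 3)) (α μ : Vec3)
  | typeII (α γ β ρ : Vec3)
  deriving DecidableEq

namespace Invariant

open scoped Matrix

/-- The change of the rows `α, μ` or `α, γ, β, ρ` under a change of coordinates of `Vec3`. -/
def mulRight (h : Matrix (Fin 3) (Fin 3) (ZMod 3)) : Invariant → Invariant
  | typeI l α μ => typeI l (α ᵥ* h) (μ ᵥ* h)
  | typeII α γ β ρ => typeII (α ᵥ* h) (γ ᵥ* h) (β ᵥ* h) (ρ ᵥ* h)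

/-- The change of the rows of type II when a generator `b` of a complement of `ι` in the kernel of
`π` is replaced by `b'` with `b = σ b' + ι y`. -/
def shift (σ y : ZMod 3) : Invariant → Invariant
  | typeI l α μ => typeI l α μ
  | typeII α γ β ρ => typeII (σ • α) (σ • γ) (β + y • α) (ρ + y • γ)

end Invariant

namespace ZMod3

theorem mul_self_eq_one {a : ZMod 3} (h : a ≠ 0) : a * a = 1 := by
  revert a
  decide

theorem val_nsmul_map {A : Type*} [AddMonoid A] (φ : ZMod 3 →+ A) (m a : ZMod 3) :
    m.val • φ a = φ (m * a) := by
  rw [← map_nsmul, nsmul_eq_mul, ZMod.natCast_zmod_val]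

end ZMod3

namespace AffineDatum

variable {G G' : Type*} [AddCommGroup G] [AddCommGroup G']

/-- The endomorphism that is nonzero on the kernel of `π` in type I: `3` or `θ`. -/
def pivot (d : AffineDatum G) : Option (ZMod 3) → G →+ G
  | some _ => (3 : ℤ) • AddMonoidHom.id G
  | none => d.θ

/-- The combination of `3` and `θ`, independent of the pivot, that vanishes on the kernel of `π`. -/
def residue (d : AffineDatum G) : Option (ZMod 3) → G →+ G
  | some k => d.θ - (k.val : ℤ) • (3 : ℤ) • AddMonoidHom.id G
  | none => (3 : ℤ) • AddMonoidHom.id G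

/-- The datum `d` is described by the given coordinates. -/
def HasInvariant (d : AffineDatum G) : Invariant → Prop
  | .typeI l α μ => (∃ b, d.π b = 0 ∧ d.pivot l b = d.ι 1) ∧
      ∀ x, d.pivot l (d.pivot l x) = d.ι (α ⬝ᵥ d.π x) ∧ d.residue l x = d.ι (μ ⬝ᵥ d.π x)
  | .typeII α γ β ρ => ∃ κ : ZMod 3 →+ G, (∀ x, d.π x = 0 ↔ ∃ m n, x = κ m + d.ι n) ∧
      (∀ m n, κ m = d.ι n → m = 0) ∧
      ∀ x, (3 : ℤ) • x = κ (α ⬝ᵥ d.π x) + d.ι (β ⬝ᵥ d.π x) ∧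
        d.θ x = κ (γ ⬝ᵥ d.π x) + d.ι (ρ ⬝ᵥ d.π x)

variable {d : AffineDatum G} {d' : AffineDatum G'}

theorem exists_eq_dotProduct {κ : ZMod 3 →+ G} {f : G →+ G} (hker : ∀ x, d.π x = 0 → f x = 0)
    (hrange : ∀ x, ∃ m n, f x = κ m + d.ι n) :
    ∃ α β : Vec3, ∀ x, f x = κ (α ⬝ᵥ d.π x) + d.ι (β ⬝ᵥ d.π x) := by
  choose e he using fun i => d.surjective_π (Vec3.basis i)
  choose α β hf using fun i => hrange (e i)
  refine ⟨α, β, fun x => ?_⟩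
  have hx : f x = f (∑ i, (d.π x i).val • e i) := by
    refine eq_of_sub_eq_zero ?_
    rw [← map_sub]
    refine hker _ ?_
    ext j
    rw [map_sub, map_sum, Pi.sub_apply, Finset.sum_apply]
    simp [he, Pi.single_apply, -ZMod.natCast_val, ZMod.natCast_zmod_val]
  simp only [hx, map_sum, map_nsmul, hf, smul_add, ZMod3.val_nsmul_map, Finset.sum_add_distrib,
    dotProduct, mul_comm (d.π x _)]

theorem three_zsmul_ι (m : ZMod 3) : (3 : ℤ) • d.ι m = 0 := by
  rw [← map_zsmul, zsmul_eq_mul, ← map_zero d.ι]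
  congr 1
  linear_combination m * Vec3.three_eq_zero

theorem π_three_zsmul (x : G) : d.π ((3 : ℤ) • x) = 0 := by
  ext i
  simp [Vec3.three_eq_zero]

theorem pivot_ι (l : Option (ZMod 3)) (m : ZMod 3) : d.pivot l (d.ι m) = 0 := by
  cases l
  exacts [d.θ_ι m, three_zsmul_ι m]

theorem π_pivot (l : Option (ZMod 3)) (x : G) : d.π (d.pivot l x) = 0 := by
  cases l
  exacts [d.π_θ x, π_three_zsmul x]

theorem residue_ι (l : Option (ZMod 3)) (m : ZMod 3) : d.residue l (d.ι m) = 0 := by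
  cases l <;> simp [residue, d.θ_ι, three_zsmul_ι]

theorem π_residue (l : Option (ZMod 3)) (x : G) : d.π (d.residue l x) = 0 := by
  cases l
  · exact π_three_zsmul x
  · change d.π (d.θ x - (_ : ℤ) • (3 : ℤ) • x) = 0
    rw [map_sub, d.π_θ, map_zsmul, π_three_zsmul, smul_zero, sub_zero]

theorem pivot_residue (l : Option (ZMod 3)) (x : G) :
    d.pivot l (d.residue l x) = d.residue l (d.pivot l x) := by
  cases l with
  | none => exact map_zsmul d.θ 3 x
  | some k =>
    change (3 : ℤ) • (d.θ x - (_ : ℤ) • (3 : ℤ) • x) = d.θ ((3 : ℤ) • x) - _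
    rw [smul_sub, map_zsmul, smul_comm]
    rfl

section PivotGenerator

variable (hG : Nat.card G = 243) {l : Option (ZMod 3)} {b : G} (hb : d.π b = 0)
  (hpivot : d.pivot l b = d.ι 1)
include hG hb hpivot

theorem exists_eq_zsmul_add_ι_of_pivot {x : G} (hx : d.π x = 0) :
    ∃ m n : ℤ, x = m • b + d.ι n ∧ d.pivot l x = d.ι m := by
  obtain ⟨m, n, rfl⟩ := exists_eq_zsmul_add_ι hG hb (by
    rintro ⟨m, rfl⟩
    rw [pivot_ι, eq_comm, map_eq_zero_iff _ d.injective_ι] at hpivot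
    exact one_ne_zero hpivot) hx
  exact ⟨m, n, rfl, by
    rw [map_add, map_zsmul, hpivot, pivot_ι, add_zero, ← map_zsmul, zsmul_one]⟩

theorem mem_range_ι_of_pivot_eq_zero {x : G} (hx : d.π x = 0) (h : d.pivot l x = 0) :
    x ∈ d.ι.range := by
  obtain ⟨m, n, rfl, hm⟩ := exists_eq_zsmul_add_ι_of_pivot hG hb hpivot hx
  rw [h, eq_comm, map_eq_zero_iff _ d.injective_ι, ZMod.intCast_zmod_eq_zero_iff_dvd] at hm
  obtain ⟨k, rfl⟩ := hm
  rw [Nat.cast_ofNat, mul_comm, mul_smul]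
  exact add_mem (zsmul_mem (three_zsmul_mem_range_ι hG hb) k) ⟨n, rfl⟩

theorem exists_hasInvariant_typeI (hresidue : d.residue l b = 0) :
    ∃ α μ, d.HasInvariant (.typeI l α μ) := by
  have hpp {x : G} (hx : d.π x = 0) : d.pivot l (d.pivot l x) = 0 := by
    obtain ⟨m, -, -, hm⟩ := exists_eq_zsmul_add_ι_of_pivot hG hb hpivot hx
    rw [hm, pivot_ι]
  have hres {x : G} (hx : d.π x = 0) : d.residue l x = 0 := by
    obtain ⟨m, n, rfl, -⟩ := exists_eq_zsmul_add_ι_of_pivot hG hb hpivot hx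
    rw [map_add, map_zsmul, hresidue, residue_ι, smul_zero, add_zero]
  obtain ⟨_, α, hα⟩ := exists_eq_dotProduct (κ := 0) (f := (d.pivot l).comp (d.pivot l))
    (fun x hx => hpp hx) fun x => by
      obtain ⟨m, -, -, hm⟩ := exists_eq_zsmul_add_ι_of_pivot hG hb hpivot (d.π_pivot l x)
      exact ⟨0, m, by simpa using hm⟩
  obtain ⟨_, μ, hμ⟩ := exists_eq_dotProduct (κ := 0) (f := d.residue l) (fun x hx => hres hx)
    fun x => by
      obtain ⟨n, hn⟩ := mem_range_ι_of_pivot_eq_zero hG hb hpivot (d.π_residue l x)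
        (by rw [pivot_residue, hres (d.π_pivot l x)])
      exact ⟨0, n, by simpa using hn.symm⟩
  exact ⟨α, μ, ⟨b, hb, hpivot⟩, fun x => ⟨by simpa using hα x, by simpa using hμ x⟩⟩

end PivotGenerator

theorem exists_complement (hG : Nat.card G = 243) {b : G} (hb : d.π b = 0) (hb' : b ∉ d.ι.range)
    (h3 : (3 : ℤ) • b = 0) : ∃ κ : ZMod 3 →+ G, κ 1 = b ∧
      (∀ x, d.π x = 0 ↔ ∃ m n, x = κ m + d.ι n) ∧ ∀ m n, κ m = d.ι n → m = 0 := by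
  let κ : ZMod 3 →+ G := ZMod.lift 3 ⟨AddMonoidHom.mk' (· • b) (fun m n => add_smul m n b), h3⟩
  have hκ (m : ℤ) : κ m = m • b := ZMod.lift_coe _ _ _
  have hκ1 : κ 1 = b := by simpa using hκ 1
  refine ⟨κ, hκ1, fun x => ⟨fun hx => ?_, ?_⟩, fun m n hmn => ?_⟩
  · obtain ⟨m, n, rfl⟩ := exists_eq_zsmul_add_ι hG hb hb' hx
    exact ⟨m, n, by rw [hκ]⟩
  · rintro ⟨m, n, rfl⟩
    obtain ⟨m, rfl⟩ := ZMod.intCast_surjective m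
    rw [hκ, map_add, map_zsmul, hb, d.π_ι, smul_zero, add_zero]
  · refine of_not_not fun hm => hb' ⟨m⁻¹ * n, ?_⟩
    rw [← ZMod3.val_nsmul_map, ← hmn, ZMod3.val_nsmul_map, inv_mul_cancel₀ hm, hκ1]

theorem exists_hasInvariant_typeII (hG : Nat.card G = 243)
    (h3 : ∀ x, d.π x = 0 → (3 : ℤ) • x = 0) (hθ : ∀ x, d.π x = 0 → d.θ x = 0) :
    ∃ α γ β ρ, d.HasInvariant (.typeII α γ β ρ) := by
  obtain ⟨b, hb, hb'⟩ := exists_π_eq_zero_notMem_range_ι (d := d) hG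
  obtain ⟨κ, -, hker, hdisj⟩ := exists_complement hG hb hb' (h3 b hb)
  obtain ⟨α, β, hα⟩ := exists_eq_dotProduct (κ := κ) (f := (3 : ℤ) • AddMonoidHom.id G) h3
    fun x => (hker _).mp (π_three_zsmul x)
  obtain ⟨γ, ρ, hγ⟩ := exists_eq_dotProduct (κ := κ) (f := d.θ) hθ fun x => (hker _).mp (d.π_θ x)
  exact ⟨α, γ, β, ρ, κ, hker, hdisj, fun x => ⟨hα x, hγ x⟩⟩

theorem exists_hasInvariant (hG : Nat.card G = 243) (hl : Function.Injective (d.op 0))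
    (hr : Function.Injective (d.op · 0)) : ∃ s, d.HasInvariant s := by
  by_cases! hpivot : ∃ l b, d.π b = 0 ∧ d.pivot l b ≠ 0 ∧ d.residue l b = 0
  · obtain ⟨l, b, hb, hpivot, hresidue⟩ := hpivot
    obtain ⟨m, hm⟩ : d.pivot l b ∈ d.ι.range := by
      cases l
      exacts [θ_mem_range_ι hG hl hr hb, three_zsmul_mem_range_ι hG hb]
    have hm0 : m ≠ 0 := by
      rintro rfl
      exact hpivot (by rw [← hm, map_zero])
    obtain ⟨α, μ, h⟩ := exists_hasInvariant_typeI (b := m⁻¹.val • b) hG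
      (by rw [map_nsmul, hb, smul_zero])
      (by rw [map_nsmul, ← hm, ZMod3.val_nsmul_map, inv_mul_cancel₀ hm0])
      (by rw [map_nsmul, hresidue, smul_zero])
    exact ⟨_, h⟩
  · have h3 (x : G) (hx : d.π x = 0) : (3 : ℤ) • x = 0 := by
      by_contra h
      obtain ⟨m, hm⟩ := three_zsmul_mem_range_ι hG hx
      obtain ⟨n, hn⟩ := θ_mem_range_ι hG hl hr hx
      have hm0 : m ≠ 0 := by
        rintro rfl
        exact h (by rw [← hm, map_zero])
      refine hpivot (some (n * m⁻¹)) x hx h ?_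
      change d.θ x - (_ : ℤ) • (3 : ℤ) • x = 0
      rw [← hm, ← hn, natCast_zsmul, ZMod3.val_nsmul_map, inv_mul_cancel_right₀ hm0, sub_self]
    have hθ (x : G) (hx : d.π x = 0) : d.θ x = 0 :=
      of_not_not fun h => hpivot none x hx h (h3 x hx)
    obtain ⟨α, γ, β, ρ, h⟩ := exists_hasInvariant_typeII hG h3 hθ
    exact ⟨_, h⟩

section

open scoped Matrix

namespace Equiv

variable (F : d.Equiv d')

theorem map_pivot (l : Option (ZMod 3)) (x : G) :
    F.toAddEquiv (d.pivot l x) = d'.pivot l (F.toAddEquiv x) := by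
  cases l
  exacts [F.map_θ x, map_zsmul _ _ _]

theorem map_residue (l : Option (ZMod 3)) (x : G) :
    F.toAddEquiv (d.residue l x) = d'.residue l (F.toAddEquiv x) := by
  cases l <;> simp [residue, F.map_θ]

theorem π_eq_zero_iff (x : G) : d'.π (F.toAddEquiv x) = 0 ↔ d.π x = 0 := by
  refine ⟨fun h => ?_, fun h => by rw [F.map_π, h, Matrix.mulVec_zero]⟩
  exact Matrix.eq_zero_of_mulVec_eq_zero F.det_ne_zero (F.map_π x ▸ h)

theorem map_ι_det_mul (m : ZMod 3) : F.toAddEquiv (d.ι (F.matrix.det * m)) = d'.ι m := by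
  rw [F.map_ι, ← mul_assoc, ZMod3.mul_self_eq_one F.det_ne_zero, one_mul]

theorem det_mul_dotProduct (u : Vec3) (x : G) :
    F.matrix.det * ((u ᵥ* (F.matrix.det • F.matrix)) ⬝ᵥ d.π x) = u ⬝ᵥ d'.π (F.toAddEquiv x) := by
  rw [F.map_π, Matrix.dotProduct_mulVec, Matrix.vecMul_smul, smul_dotProduct, smul_eq_mul,
    ← mul_assoc, ZMod3.mul_self_eq_one F.det_ne_zero, one_mul]

theorem map_ι_dotProduct (u : Vec3) (x : G) :
    F.toAddEquiv (d.ι ((u ᵥ* (F.matrix.det • F.matrix)) ⬝ᵥ d.π x)) =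
      d'.ι (u ⬝ᵥ d'.π (F.toAddEquiv x)) := by
  rw [F.map_ι, F.det_mul_dotProduct]

end Equiv

end

theorem HasInvariant.comap {t : Invariant} (h : d'.HasInvariant t) (F : d.Equiv d') :
    d.HasInvariant (t.mulRight (F.matrix.det • F.matrix)) := by
  cases t with
  | typeI l α μ =>
    obtain ⟨⟨b, hb, hpivot⟩, h⟩ := h
    obtain ⟨b, rfl⟩ := F.toAddEquiv.surjective b
    refine ⟨⟨F.matrix.det.val • b, ?_, ?_⟩, fun x => ⟨?_, ?_⟩⟩
    · rw [map_nsmul, (F.π_eq_zero_iff b).mp hb, smul_zero]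
    · apply F.toAddEquiv.injective
      rw [map_nsmul, map_nsmul, F.map_pivot, hpivot, ← F.map_ι_det_mul, mul_one, ← map_nsmul,
        ZMod3.val_nsmul_map, ZMod3.mul_self_eq_one F.det_ne_zero]
    · apply F.toAddEquiv.injective
      rw [F.map_pivot, F.map_pivot, (h _).1, F.map_ι_dotProduct]
    · apply F.toAddEquiv.injective
      rw [F.map_residue, (h _).2, F.map_ι_dotProduct]
  | typeII α γ β ρ =>
    obtain ⟨κ, hker, hdisj, h⟩ := h
    let κ' := F.toAddEquiv.symm.toAddMonoidHom.comp (κ.comp (AddMonoidHom.mulLeft F.matrix.det))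
    have hκ' (m : ZMod 3) : F.toAddEquiv (κ' m) = κ (F.matrix.det * m) :=
      F.toAddEquiv.apply_symm_apply _
    refine ⟨κ', fun x => ?_, fun m n hmn => ?_, fun x => ⟨?_, ?_⟩⟩
    · rw [← F.π_eq_zero_iff, hker]
      constructor
      · rintro ⟨m, n, h⟩
        refine ⟨F.matrix.det * m, F.matrix.det * n, F.toAddEquiv.injective ?_⟩
        rw [h, map_add, hκ', F.map_ι_det_mul, ← mul_assoc, ZMod3.mul_self_eq_one F.det_ne_zero,
          one_mul]
      · rintro ⟨m, n, rfl⟩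
        exact ⟨_, _, by rw [map_add, hκ', F.map_ι]⟩
    · have := hdisj _ _ (by rw [← hκ', hmn, F.map_ι])
      exact (mul_eq_zero.mp this).resolve_left F.det_ne_zero
    · apply F.toAddEquiv.injective
      rw [map_zsmul, (h _).1, map_add, hκ', F.det_mul_dotProduct, F.map_ι_dotProduct]
    · apply F.toAddEquiv.injective
      rw [F.map_θ, (h _).2, map_add, hκ', F.det_mul_dotProduct, F.map_ι_dotProduct]

theorem eq_of_dotProduct_π_eq {u v : Vec3} (h : ∀ x, u ⬝ᵥ d.π x = v ⬝ᵥ d.π x) : u = v :=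
  dotProduct_eq u v (d.surjective_π.forall.mpr h)

theorem HasInvariant.shift {s : Invariant} (hs : d.HasInvariant s) {σ : ZMod 3} (hσ : σ ≠ 0)
    (y : ZMod 3) : d.HasInvariant (s.shift σ y) := by
  obtain _ | ⟨α, γ, β, ρ⟩ := s
  · exact hs
  obtain ⟨κ, hker, hdisj, hs⟩ := hs
  let κ' := κ.comp (.mulLeft σ) - d.ι.comp (.mulLeft (y * σ))
  have hκ' (m : ZMod 3) : κ' (σ * m) = κ m - d.ι (y * m) := by
    change κ (σ * (σ * m)) - d.ι (y * σ * (σ * m)) = _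
    rw [mul_assoc, ← mul_assoc σ, ZMod3.mul_self_eq_one hσ, one_mul]
  have hκ'' (m : ZMod 3) : ∃ n, κ' m = κ n - d.ι (y * n) := ⟨σ * m, by
    rw [← hκ', ← mul_assoc, ZMod3.mul_self_eq_one hσ, one_mul]⟩
  have hdecomp (u v : Vec3) (x : G) : κ (u ⬝ᵥ d.π x) + d.ι (v ⬝ᵥ d.π x) =
      κ' ((σ • u) ⬝ᵥ d.π x) + d.ι ((v + y • u) ⬝ᵥ d.π x) := by
    rw [smul_dotProduct, smul_eq_mul, hκ', add_dotProduct, smul_dotProduct, smul_eq_mul, map_add]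
    abel
  refine ⟨κ', fun x => (hker x).trans ⟨?_, ?_⟩, fun m n hmn => ?_, fun x => ?_⟩
  · rintro ⟨m, n, rfl⟩
    exact ⟨σ * m, n + y * m, by rw [hκ', map_add]; abel⟩
  · rintro ⟨m, n, rfl⟩
    obtain ⟨k, hk⟩ := hκ'' m
    exact ⟨k, n - y * k, by rw [hk, map_sub]; abel⟩
  · have := hdisj (σ * m) (n + y * (σ * m)) (by
      rw [map_add, ← hmn, ← sub_eq_iff_eq_add, ← hκ', ← mul_assoc, ZMod3.mul_self_eq_one hσ,
        one_mul])
    exact (mul_eq_zero.mp this).resolve_left hσ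
  · rw [(hs x).1, (hs x).2, hdecomp, hdecomp]
    exact ⟨rfl, rfl⟩

theorem pivot_unique {l l' : Option (ZMod 3)} {b : G} (hpivot : d.pivot l b = d.ι 1)
    (hl : d.residue l b = 0) (hl' : d.residue l' b = 0) : l' = l := by
  have hι : d.ι 1 ≠ 0 := (map_ne_zero_iff _ d.injective_ι).mpr one_ne_zero
  have hresidue {k : ZMod 3} (h : d.residue (some k) b = 0) :
      d.θ b = (k.val : ℤ) • (3 : ℤ) • b := sub_eq_zero.mp h
  cases l with
  | none => cases l' with
    | none => rfl
    | some k' =>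
      have hb : (3 : ℤ) • b = 0 := hl
      have hθ : d.θ b = d.ι 1 := hpivot
      rw [hresidue hl', hb, smul_zero] at hθ
      exact absurd hθ.symm hι
  | some k =>
    have hb : (3 : ℤ) • b = d.ι 1 := hpivot
    cases l' with
    | none => exact absurd (hb.symm.trans hl') hι
    | some k' =>
      have h := (hresidue hl').symm.trans (hresidue hl)
      rw [hb, natCast_zsmul, natCast_zsmul, ZMod3.val_nsmul_map, ZMod3.val_nsmul_map, mul_one,
        mul_one] at h
      rw [d.injective_ι h]

theorem HasInvariant.three_zsmul_eq_zero {α γ β ρ : Vec3} (h : d.HasInvariant (.typeII α γ β ρ))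
    {x : G} (hx : d.π x = 0) : (3 : ℤ) • x = 0 := by
  obtain ⟨κ, -, -, h⟩ := h
  simp [h x, hx]

theorem HasInvariant.θ_eq_zero {α γ β ρ : Vec3} (h : d.HasInvariant (.typeII α γ β ρ))
    {x : G} (hx : d.π x = 0) : d.θ x = 0 := by
  obtain ⟨κ, -, -, h⟩ := h
  simp [h x, hx]

theorem not_hasInvariant_typeII {l : Option (ZMod 3)} {α μ α' γ β ρ : Vec3}
    (h : d.HasInvariant (.typeI l α μ)) : ¬d.HasInvariant (.typeII α' γ β ρ) := by
  intro h'
  obtain ⟨⟨b, hb, hpivot⟩, -⟩ := h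
  have hzero : d.pivot l b = 0 := by
    cases l
    exacts [h'.θ_eq_zero hb, h'.three_zsmul_eq_zero hb]
  rw [hzero, eq_comm, map_eq_zero_iff _ d.injective_ι] at hpivot
  exact one_ne_zero hpivot

theorem HasInvariant.exists_eq_shift_of_typeII {α γ β ρ α' γ' β' ρ' : Vec3}
    (hs : d.HasInvariant (.typeII α γ β ρ)) (ht : d.HasInvariant (.typeII α' γ' β' ρ')) :
    ∃ σ y, σ ≠ 0 ∧ Invariant.typeII α' γ' β' ρ' = (Invariant.typeII α γ β ρ).shift σ y := by
  obtain ⟨κ, hker, hdisj, hs⟩ := hs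
  obtain ⟨κ', hker', hdisj', ht⟩ := ht
  obtain ⟨σ, y, hσ⟩ := (hker' (κ 1)).mp ((hker _).mpr ⟨1, 0, by simp⟩)
  have hκ (m : ZMod 3) : κ m = κ' (σ * m) + d.ι (y * m) := by
    rw [mul_comm σ, mul_comm y, ← ZMod3.val_nsmul_map, ← ZMod3.val_nsmul_map, ← smul_add, ← hσ,
      ZMod3.val_nsmul_map, mul_one]
  have hσ0 : σ ≠ 0 := by
    rintro rfl
    exact one_ne_zero (hdisj 1 y (by simp [hσ]))
  have heq {u v u' v' : Vec3} (h : ∀ x, κ (u ⬝ᵥ d.π x) + d.ι (v ⬝ᵥ d.π x) =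
      κ' (u' ⬝ᵥ d.π x) + d.ι (v' ⬝ᵥ d.π x)) : u' = σ • u ∧ v' = v + y • u := by
    have hu : u' = σ • u := eq_of_dotProduct_π_eq (d := d) fun x => by
      refine sub_eq_zero.mp (hdisj' _ ((v + y • u - v') ⬝ᵥ d.π x) ?_)
      have := h x
      simp only [hκ, sub_dotProduct, add_dotProduct, smul_dotProduct, smul_eq_mul, map_sub,
        map_add] at this ⊢
      linear_combination (norm := abel) -this
    refine ⟨hu, eq_of_dotProduct_π_eq (d := d) fun x => d.injective_ι ?_⟩
    have := h x
    simp only [hu, hκ, add_dotProduct, smul_dotProduct, smul_eq_mul, map_add] at this ⊢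
    linear_combination (norm := abel) -this
  obtain ⟨rfl, rfl⟩ := heq fun x => (hs x).1.symm.trans (ht x).1
  obtain ⟨rfl, rfl⟩ := heq fun x => (hs x).2.symm.trans (ht x).2
  exact ⟨σ, y, hσ0, rfl⟩

theorem HasInvariant.exists_eq_shift {s t : Invariant} (hs : d.HasInvariant s)
    (ht : d.HasInvariant t) : ∃ σ y, σ ≠ 0 ∧ t = s.shift σ y := by
  match s, t with
  | .typeI l α μ, .typeI l' α' μ' =>
    obtain ⟨⟨b, hb, hpivot⟩, hs⟩ := hs
    obtain ⟨-, ht⟩ := ht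
    obtain rfl : l' = l := pivot_unique hpivot (by simp [(hs b).2, hb]) (by simp [(ht b).2, hb])
    obtain rfl : α' = α := eq_of_dotProduct_π_eq fun x =>
      d.injective_ι ((ht x).1.symm.trans (hs x).1)
    obtain rfl : μ' = μ := eq_of_dotProduct_π_eq fun x =>
      d.injective_ι ((ht x).2.symm.trans (hs x).2)
    exact ⟨1, 0, one_ne_zero, rfl⟩
  | .typeI .., .typeII .. => exact absurd ht (not_hasInvariant_typeII hs)
  | .typeII .., .typeI .. => exact absurd hs (not_hasInvariant_typeII ht)
  | .typeII .., .typeII .. => exact hs.exists_eq_shift_of_typeII ht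

end AffineDatum

/-- The presentation of a group of order 243 with a datum that has the given coordinates. -/
def Invariant.presentation : Invariant → Presentation
  | .typeI (some k) α μ =>
    { δ := 1, ε := k.val, α i := (α i).val, β := 0, γ i := k.val * (α i).val, ρ i := (μ i).val
      compat := by ext i; simp }
  | .typeI none α μ =>
    { δ := 0, ε := 1, α := 0, β i := (μ i).val, γ i := (α i).val, ρ := 0
      compat := by simp }
  | .typeII α γ β ρ =>
    { δ := 0, ε := 0, α i := (α i).val, β i := (β i).val, γ i := (γ i).val, ρ i := (ρ i).val
      compat := by simp }

namespace AffineDatum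

variable {G : Type*} [AddCommGroup G] {d : AffineDatum G}

theorem residue_some_eq_iff {k : ZMod 3} {x y : G} :
    d.residue (some k) x = y ↔ d.θ x = k.val • d.pivot (some k) x + y := by
  change d.θ x - (k.val : ℤ) • (3 : ℤ) • x = y ↔ _ = k.val • (3 : ℤ) • x + y
  rw [sub_eq_iff_eq_add', natCast_zsmul]

theorem exists_lift_basis (hG : Nat.card G = 243) {l : Option (ZMod 3)} {α μ : Vec3}
    (h : d.HasInvariant (.typeI l α μ)) : ∃ (e : Fin 3 → G) (b : G),
      (∀ i, d.π (e i) = Vec3.basis i) ∧ d.π b = 0 ∧ d.pivot l b = d.ι 1 ∧ d.residue l b = 0 ∧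
      ∀ i, d.pivot l (e i) = (α i).val • b ∧ d.residue l (e i) = d.ι (μ i) := by
  obtain ⟨⟨b, hb, hpivot⟩, h⟩ := h
  have hresidue : d.residue l b = 0 := by rw [(h b).2, hb, dotProduct_zero, map_zero]
  have hlift (i : Fin 3) : ∃ e, d.π e = Vec3.basis i ∧ d.pivot l e = (α i).val • b := by
    obtain ⟨e, he⟩ := d.surjective_π (Vec3.basis i)
    obtain ⟨s, hs⟩ : d.pivot l e - (α i).val • b ∈ d.ι.range := by
      refine mem_range_ι_of_pivot_eq_zero hG hb hpivot ?_ ?_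
      · rw [map_sub, map_nsmul, hb, π_pivot, smul_zero, sub_zero]
      · rw [map_sub, (h e).1, map_nsmul, hpivot, ZMod3.val_nsmul_map, he, dotProduct_single,
          sub_self]
    refine ⟨e - s.val • b, by rw [map_sub, map_nsmul, hb, smul_zero, sub_zero, he], ?_⟩
    rw [map_sub, map_nsmul, hpivot, ZMod3.val_nsmul_map, mul_one, hs]
    abel
  choose e he hpe using hlift
  refine ⟨e, b, he, hb, hpivot, hresidue, fun i => ⟨hpe i, ?_⟩⟩
  rw [(h _).2, he, dotProduct_single, mul_one]

theorem HasInvariant.nonempty_frame_typeI (hG : Nat.card G = 243) {l : Option (ZMod 3)}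
    {α μ : Vec3} (h : d.HasInvariant (.typeI l α μ)) :
    Nonempty (d.Frame (Invariant.typeI l α μ).presentation) := by
  obtain ⟨e, b, he, hb, hpivot, hresidue, h⟩ := exists_lift_basis hG h
  have hexists (x : G) (hx : d.π x = 0) : ∃ m n : ℤ, x = m • b + d.ι n := by
    obtain ⟨m, n, hmn, -⟩ := exists_eq_zsmul_add_ι_of_pivot hG hb hpivot hx
    exact ⟨m, n, hmn⟩
  cases l with
  | none =>
    refine ⟨⟨e, b, he, hb, hexists, ?_, ?_, fun i => ?_, fun i => ?_⟩⟩ <;>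
      simp only [Invariant.presentation, Int.cast_natCast, ZMod.natCast_zmod_val, natCast_zsmul,
        Int.cast_zero, Int.cast_one, map_zero, Pi.zero_apply, zero_smul, zero_add, add_zero]
    exacts [hresidue, hpivot, (h i).2, (h i).1]
  | some k =>
    simp only [residue_some_eq_iff] at hresidue h
    refine ⟨⟨e, b, he, hb, hexists, ?_, ?_, fun i => ?_, fun i => ?_⟩⟩ <;>
      simp only [Invariant.presentation, Int.cast_natCast, ZMod.natCast_zmod_val, natCast_zsmul,
        Int.cast_zero, Int.cast_one, map_zero, Pi.zero_apply, add_zero, mul_smul]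
    · exact hpivot
    · rw [hresidue, hpivot, ZMod3.val_nsmul_map, mul_one, add_zero]
    · exact (h i).1
    · rw [(h i).2, (h i).1]

theorem HasInvariant.nonempty_frame_typeII {α γ β ρ : Vec3}
    (h : d.HasInvariant (.typeII α γ β ρ)) :
    Nonempty (d.Frame (Invariant.typeII α γ β ρ).presentation) := by
  obtain ⟨κ, hker, -, h⟩ := h
  choose e he using fun i => d.surjective_π (Vec3.basis i)
  have hκ (m : ZMod 3) : κ m = m.val • κ 1 := by rw [ZMod3.val_nsmul_map, mul_one]
  have hb : d.π (κ 1) = 0 := (hker _).mpr ⟨1, 0, by rw [map_zero, add_zero]⟩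
  refine ⟨⟨e, κ 1, he, hb, fun x hx => ?_, ?_, ?_, fun i => ?_, fun i => ?_⟩⟩
  · obtain ⟨m, n, rfl⟩ := (hker x).mp hx
    exact ⟨m.val, n.val, by rw [natCast_zsmul, ← hκ, Int.cast_natCast, ZMod.natCast_zmod_val]⟩
  · rw [(h _).1, hb]
    simp [Invariant.presentation]
  · rw [(h _).2, hb]
    simp [Invariant.presentation]
  · rw [(h _).1, he, hκ]
    simp only [Invariant.presentation, dotProduct_single, mul_one, natCast_zsmul, Int.cast_natCast,
      ZMod.natCast_zmod_val]
  · rw [(h _).2, he, hκ]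
    simp only [Invariant.presentation, dotProduct_single, mul_one, natCast_zsmul, Int.cast_natCast,
      ZMod.natCast_zmod_val]

theorem HasInvariant.nonempty_frame (hG : Nat.card G = 243) {s : Invariant}
    (h : d.HasInvariant s) : Nonempty (d.Frame s.presentation) :=
  match s with
  | .typeI .. => h.nonempty_frame_typeI hG
  | .typeII .. => h.nonempty_frame_typeII

end AffineDatum

namespace AffineDatum

namespace Frame

variable {G H : Type*} [AddCommGroup G] [AddCommGroup H] {d : AffineDatum G} {p : Presentation}
  (F : d.Frame p)

include F in
theorem addMonoidHom_ext {f g : G →+ H} (he : ∀ i, f (F.e i) = g (F.e i)) (hb : f F.b = g F.b)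
    (hι : ∀ m, f (d.ι m) = g (d.ι m)) : f = g := by
  ext x
  obtain ⟨x, rfl⟩ := F.surjective_hom x
  induction x using QuotientAddGroup.induction_on with
  | H x => simp only [F.hom_mk, F.freeHom_apply, map_add, map_sum, map_zsmul, he, hb, hι]

theorem b_notMem_range_ι (hG : Nat.card G = 243) : F.b ∉ d.ι.range := by
  rintro ⟨m, hm⟩
  obtain ⟨x, hx, hx'⟩ := exists_π_eq_zero_notMem_range_ι (d := d) hG
  obtain ⟨k, n, rfl⟩ := F.exists_eq x hx
  exact hx' (add_mem (zsmul_mem (hm ▸ ⟨m, rfl⟩) k) ⟨n, rfl⟩)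

theorem eq_map_dotProduct {κ : ZMod 3 →+ G} {f : G →+ G} {u v : Vec3}
    (he : ∀ i, f (F.e i) = κ (u i) + d.ι (v i)) (hb : f F.b = 0) (hι : ∀ m, f (d.ι m) = 0) (x : G) :
    f x = κ (u ⬝ᵥ d.π x) + d.ι (v ⬝ᵥ d.π x) := by
  let dot (w : Vec3) : Vec3 →+ ZMod 3 := .mk' (w ⬝ᵥ ·) (dotProduct_add w)
  refine DFunLike.congr_fun (F.addMonoidHom_ext
    (g := (κ.comp (dot u) + d.ι.comp (dot v)).comp d.π) (fun i => ?_) ?_ fun m => ?_) x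
  · simp [he, F.π_e, dot]
  · simp [hb, F.π_b, dot]
  · simp [hι, d.π_ι, dot]

theorem hasInvariant_typeI {l : Option (ZMod 3)} {α μ : Vec3}
    (F : d.Frame (Invariant.typeI l α μ).presentation) : d.HasInvariant (.typeI l α μ) := by
  have h3 := F.three_b
  have hθ := F.θ_b
  have hb : d.pivot l F.b = d.ι 1 ∧ d.residue l F.b = 0 := by
    cases l with
    | none =>
      simp only [Invariant.presentation, Int.cast_zero, Int.cast_one, map_zero] at h3 hθ
      exact ⟨hθ, h3⟩
    | some k =>
      simp only [Invariant.presentation, Int.cast_natCast, ZMod.natCast_zmod_val,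
        Int.cast_one] at h3 hθ
      refine ⟨h3, residue_some_eq_iff.mpr ?_⟩
      rw [hθ, add_zero, show d.pivot (some k) F.b = d.ι 1 from h3, ZMod3.val_nsmul_map, mul_one]
  have he (i : Fin 3) : d.pivot l (F.e i) = (α i).val • F.b ∧ d.residue l (F.e i) = d.ι (μ i) := by
    cases l with
    | none =>
      have h3 := F.three_e i
      have hθ := F.θ_e i
      simp only [Invariant.presentation, natCast_zsmul, Int.cast_natCast, ZMod.natCast_zmod_val,
        Pi.zero_apply, Int.cast_zero, zero_smul, map_zero, add_zero, zero_add] at h3 hθ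
      exact ⟨hθ, h3⟩
    | some k =>
      have h3 := F.three_e i
      have hθ := F.θ_e i
      simp only [Invariant.presentation, natCast_zsmul, Int.cast_natCast, ZMod.natCast_zmod_val,
        Pi.zero_apply, Int.cast_zero, map_zero, add_zero, mul_smul] at h3 hθ
      exact ⟨h3, residue_some_eq_iff.mpr (hθ.trans (congrArg (k.val • · + _) h3.symm))⟩
  refine ⟨⟨F.b, F.π_b, hb.1⟩, fun x => ⟨?_, ?_⟩⟩
  · have := F.eq_map_dotProduct (κ := 0) (f := (d.pivot l).comp (d.pivot l)) (u := 0) (v := α)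
      (fun i => ?_) ?_ (fun m => ?_) x
    · simpa using this
    · simp [he, hb, ZMod3.val_nsmul_map]
    · simp [hb, pivot_ι]
    · simp [pivot_ι]
  · have := F.eq_map_dotProduct (κ := 0) (f := d.residue l) (u := 0) (v := μ)
      (fun i => by simp [he]) hb.2 (residue_ι l) x
    simpa using this

theorem hasInvariant_typeII {α γ β ρ : Vec3} (hG : Nat.card G = 243)
    (F : d.Frame (Invariant.typeII α γ β ρ).presentation) :
    d.HasInvariant (.typeII α γ β ρ) := by
  have h3 : (3 : ℤ) • F.b = 0 := by simpa [Invariant.presentation] using F.three_b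
  have hθ : d.θ F.b = 0 := by simpa [Invariant.presentation] using F.θ_b
  obtain ⟨κ, hκ, hker, hdisj⟩ := exists_complement hG F.π_b (F.b_notMem_range_ι hG) h3
  have hval (m : ZMod 3) : m.val • F.b = κ m := by rw [← hκ, ZMod3.val_nsmul_map, mul_one]
  refine ⟨κ, hker, hdisj, fun x => ⟨?_, ?_⟩⟩
  · refine F.eq_map_dotProduct (f := (3 : ℤ) • AddMonoidHom.id G) (fun i => ?_) h3 three_zsmul_ι x
    have := F.three_e i
    simpa [Invariant.presentation, hval, -ZMod.natCast_val, ZMod.natCast_zmod_val] using this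
  · refine F.eq_map_dotProduct (fun i => ?_) hθ d.θ_ι x
    have := F.θ_e i
    simpa [Invariant.presentation, hval, -ZMod.natCast_val, ZMod.natCast_zmod_val] using this

theorem hasInvariant (hG : Nat.card G = 243) {s : Invariant} (F : d.Frame s.presentation) :
    d.HasInvariant s :=
  match s with
  | .typeI .. => F.hasInvariant_typeI
  | .typeII .. => F.hasInvariant_typeII hG

end Frame

end AffineDatum

theorem Presentation.datum_ι_intCast (p : Presentation) (n : ℤ) :
    p.datum.ι n = ((0, 0, n) : Free) := p.ιHom_intCast n

/-- The generators of the presented group. -/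
def Presentation.frame (p : Presentation) : p.datum.Frame p where
  e i := ((Pi.single i 1, 0, 0) : Free)
  b := ((0, 1, 0) : Free)
  π_e i := by
    ext j
    simp [datum_π_mk, freeπ, Pi.single_apply]
  π_b := by
    ext j
    simp [datum_π_mk, freeπ]
  exists_eq x hx := by
    induction x using QuotientAddGroup.induction_on with
    | H x =>
      have hdvd (i : Fin 3) : 3 ∣ x.1 i :=
        (ZMod.intCast_zmod_eq_zero_iff_dvd _ 3).mp (congrFun hx i)
      choose w hw using hdvd
      refine ⟨x.2.1 + p.α ⬝ᵥ w, x.2.2 + p.β ⬝ᵥ w, ?_⟩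
      rw [datum_ι_intCast, ← QuotientAddGroup.mk_zsmul, ← QuotientAddGroup.mk_add]
      refine QuotientAddGroup.eq.mpr ⟨(-w, 0, 0), ?_⟩
      ext i <;> simp [relator, hw]
  three_b := by
    rw [datum_ι_intCast]
    exact QuotientAddGroup.eq.mpr ⟨(0, -1, 0), by ext i <;> simp [relator]⟩
  θ_b := by
    rw [datum_ι_intCast, datum_θ_mk]
    simp [freeθ]
  three_e i := by
    rw [datum_ι_intCast, ← QuotientAddGroup.mk_zsmul, ← QuotientAddGroup.mk_zsmul,
      ← QuotientAddGroup.mk_add]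
    refine QuotientAddGroup.eq.mpr ⟨(-Pi.single i 1, 0, 0), ?_⟩
    ext i <;> simp [relator]
  θ_e i := by
    rw [datum_ι_intCast, datum_θ_mk, ← QuotientAddGroup.mk_zsmul, ← QuotientAddGroup.mk_add]
    simp [freeθ]

theorem Invariant.hasInvariant_datum (s : Invariant) : s.presentation.datum.HasInvariant s :=
  s.presentation.frame.hasInvariant (Presentation.card_group _)

/-- The relation between the coordinates of isomorphic data. -/
def Invariant.Related (s t : Invariant) : Prop :=
  ∃ (h : Matrix (Fin 3) (Fin 3) (ZMod 3)) (σ y : ZMod 3), h.det = 1 ∧ σ ≠ 0 ∧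
    s = (t.mulRight h).shift σ y

namespace AffineDatum

variable {G G' : Type*} [AddCommGroup G] [AddCommGroup G'] {d : AffineDatum G} {d' : AffineDatum G'}
  {s t : Invariant}

theorem HasInvariant.related (hs : d.HasInvariant s) (ht : d'.HasInvariant t) (F : d.Equiv d') :
    s.Related t := by
  obtain ⟨σ, y, hσ, h⟩ := (ht.comap F).exists_eq_shift hs
  refine ⟨_, σ, y, ?_, hσ, h⟩
  rw [Matrix.det_smul, Fintype.card_fin, ← pow_succ, show 3 + 1 = 2 * 2 from rfl, pow_mul,
    sq F.matrix.det, ZMod3.mul_self_eq_one F.det_ne_zero, one_pow]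

noncomputable section

/-- The datum `d` in the coordinates of `Vec3` changed by `h⁻¹`. -/
def twist (d : AffineDatum G) {h : Matrix (Fin 3) (Fin 3) (ZMod 3)} (hh : h.det = 1) :
    AffineDatum G where
  π := h⁻¹.mulVecLin.toAddMonoidHom.comp d.π
  θ := d.θ
  ι := d.ι
  surjective_π v := by
    obtain ⟨x, hx⟩ := d.surjective_π (h.mulVec v)
    exact ⟨x, by simp [hx, hh]⟩
  injective_ι := d.injective_ι
  π_ι := by simp [d.π_ι]
  θ_ι := d.θ_ι
  π_θ := by simp [d.π_θ]

/-- The identity as an equivalence from a twisted datum. -/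
def twistEquiv (d : AffineDatum G) {h : Matrix (Fin 3) (Fin 3) (ZMod 3)} (hh : h.det = 1) :
    (d.twist hh).Equiv d where
  toAddEquiv := .refl G
  matrix := h
  det_ne_zero := by simp [hh]
  map_π x := by simp [twist, hh]
  map_θ _ := rfl
  map_ι := by simp [hh, twist]

end

theorem HasInvariant.exists_map_op (hG : Nat.card G = 243) (hG' : Nat.card G' = 243)
    (hs : d.HasInvariant s) (ht : d'.HasInvariant t) (hst : s.Related t) :
    ∃ f : G ≃ G', ∀ x y, f (d.op x y) = d'.op (f x) (f y) := by
  obtain ⟨h, σ, y, hh, hσ, rfl⟩ := hst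
  have ht' : (d'.twist hh).HasInvariant (t.mulRight h) := by
    simpa [twistEquiv, hh] using ht.comap (d'.twistEquiv hh)
  obtain ⟨F⟩ := hs.nonempty_frame hG
  obtain ⟨F'⟩ := (ht'.shift hσ y).nonempty_frame hG'
  obtain ⟨E⟩ := F.nonempty_equiv hG
  obtain ⟨E'⟩ := F'.nonempty_equiv hG'
  obtain ⟨f, hf⟩ := E.exists_map_op
  obtain ⟨f', hf'⟩ := E'.exists_map_op
  obtain ⟨g, hg⟩ := (d'.twistEquiv hh).exists_map_op
  refine ⟨(f.symm.trans f').trans g, fun x y => ?_⟩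
  obtain ⟨x, rfl⟩ := f.surjective x
  obtain ⟨y, rfl⟩ := f.surjective y
  simp [← hf, hf', hg]

end AffineDatum

/-! ### Orbits of lists of row vectors -/

namespace Vec3

open scoped Matrix

/-- The list of all vectors. -/
def all : List Vec3 :=
  let k : List (ZMod 3) := [0, 1, 2]
  k.flatMap fun a => k.flatMap fun b => k.map fun c => ![a, b, c]

theorem mem_all : ∀ v : Vec3, v ∈ all := by decide

/-- The vector `v` lies in the span of the first `p` vectors of the standard basis. -/
def InSpan (p : ℕ) (v : Vec3) : Prop := ∀ i : Fin 3, p ≤ i → v i = 0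

instance (p : ℕ) : DecidablePred (InSpan p) := fun _ => inferInstanceAs (Decidable (∀ _, _))

theorem InSpan.mono {p q : ℕ} {v : Vec3} (h : InSpan p v) (hpq : p ≤ q) : InSpan q v :=
  fun i hi => h i (hpq.trans hi)

/-- The values of the first vector outside the span of the first `p` basis vectors in a reduced
list. Matrices of determinant 1 cannot change the sign of the last pivot. -/
def pivots : ℕ → List Vec3
  | 0 => [basis 0]
  | 1 => [basis 1]
  | 2 => [basis 2, -basis 2]
  | _ => []

theorem inSpan_succ_of_mem_pivots {p : ℕ} {v : Vec3} (h : v ∈ pivots p) : InSpan (p + 1) v := by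
  match p with
  | 0 | 1 | 2 => revert v; decide
  | _ + 3 => cases h

theorem not_inSpan_of_mem_pivots {p : ℕ} {v : Vec3} (h : v ∈ pivots p) : ¬InSpan p v := by
  match p with
  | 0 | 1 | 2 => revert v; decide
  | _ + 3 => cases h

/-- A matrix of determinant 1 that fixes the first `p` basis vectors and sends `v`, which is not in
their span, to a pivot. Its entries use that nonzero elements of `ZMod 3` are self-inverse. -/
def pivotMatrix (p : ℕ) (v : Vec3) : Matrix (Fin 3) (Fin 3) (ZMod 3) :=
  match p with
  | 0 =>
    if v 0 ≠ 0 then !![v 0, -v 1, -(v 0 * v 2); 0, v 0, 0; 0, 0, 1]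
    else if v 1 ≠ 0 then !![0, -v 1, 0; v 1, 0, -(v 1 * v 2); 0, 0, 1]
    else !![0, 0, -v 2; 0, 1, 0; v 2, 0, 0]
  | 1 =>
    if v 1 ≠ 0 then !![1, 0, 0; -(v 0 * v 1), v 1, -v 2; 0, 0, v 1]
    else !![1, 0, 0; 0, 0, -v 2; -(v 0 * v 2), v 2, 0]
  | _ => !![1, 0, 0; 0, 1, 0; -(v 0 * v 2), -(v 1 * v 2), 1]

/-- The matrix `h`, acting on row vectors, fixes the first `p` basis vectors. -/
def Fixes (p : ℕ) (h : Matrix (Fin 3) (Fin 3) (ZMod 3)) : Prop :=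
  ∀ i : Fin 3, i < p → h.row i = basis i

instance (p : ℕ) : DecidablePred (Fixes p) := fun _ =>
  inferInstanceAs (Decidable (∀ _, _))

theorem pivotMatrix_spec {p : ℕ} {v : Vec3} (hp : p < 3) (h : ¬InSpan p v) :
    (pivotMatrix p v).det = 1 ∧ Fixes p (pivotMatrix p v) ∧ v ᵥ* pivotMatrix p v ∈ pivots p := by
  rw [Matrix.det_fin_three]
  interval_cases p <;> revert v <;> decide

theorem Fixes.vecMul_eq {p : ℕ} {h : Matrix (Fin 3) (Fin 3) (ZMod 3)} (hh : Fixes p h) {v : Vec3}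
    (hv : InSpan p v) : v ᵥ* h = v := by
  have hrow (i : Fin 3) : v i • h.row i = v i • basis i := by
    obtain hi | hi := lt_or_ge (i : ℕ) p
    · rw [hh i hi]
    · rw [hv i hi, zero_smul, zero_smul]
  calc v ᵥ* h = ∑ i, v i • h.row i := Matrix.vecMul_eq_sum v h
    _ = ∑ i, v i • basis i := Finset.sum_congr rfl fun i _ => hrow i
    _ = v := (pi_eq_sum_univ' v).symm

theorem inSpan_vecMul_iff {p : ℕ} {h : Matrix (Fin 3) (Fin 3) (ZMod 3)} (hh : Fixes p h)
    (hdet : h.det = 1) (v : Vec3) : InSpan p (v ᵥ* h) ↔ InSpan p v := by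
  refine ⟨fun hv => ?_, fun hv => by rwa [hh.vecMul_eq hv]⟩
  have hunit : IsUnit h := (Matrix.isUnit_iff_isUnit_det h).mpr (hdet ▸ isUnit_one)
  rwa [← Matrix.vecMul_injective_of_isUnit hunit (hh.vecMul_eq hv)]

/-- The first vector of `l` outside the span of the first `p` basis vectors, if any. -/
def firstOutside (p : ℕ) (l : List Vec3) : Option Vec3 := l.find? (¬InSpan p ·)

theorem firstOutside_map {p : ℕ} {h : Matrix (Fin 3) (Fin 3) (ZMod 3)} (hh : Fixes p h)
    (hdet : h.det = 1) (l : List Vec3) :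
    firstOutside p (l.map (· ᵥ* h)) = (firstOutside p l).map (· ᵥ* h) := by
  simp only [firstOutside, List.find?_map, Function.comp_def, inSpan_vecMul_iff hh hdet]

/-- A list of vectors is reduced from `p` on if its first vectors outside the spans of the first
`q ≥ p` basis vectors are pivots. -/
def IsReduced (p : ℕ) (l : List Vec3) : Prop := ∀ q ≥ p, ∀ v ∈ firstOutside q l, v ∈ pivots q

theorem isReduced_cons {p : ℕ} {v : Vec3} {l : List Vec3} : IsReduced p (v :: l) ↔
    InSpan p v ∧ IsReduced p l ∨ v ∈ pivots p ∧ IsReduced (p + 1) l := by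
  have hskip {q : ℕ} (h : InSpan q v) : firstOutside q (v :: l) = firstOutside q l :=
    List.find?_cons_of_neg (by simpa using h)
  have hhead {q : ℕ} (h : ¬InSpan q v) : firstOutside q (v :: l) = some v :=
    List.find?_cons_of_pos (by simpa using h)
  have htail {q : ℕ} (h : InSpan q v) : IsReduced q (v :: l) ↔ IsReduced q l :=
    forall₂_congr fun r hr => by rw [hskip (h.mono hr)]
  by_cases hv : InSpan p v
  · have : v ∉ pivots p := fun h => not_inSpan_of_mem_pivots h hv
    simp [htail hv, hv, this]
  · simp only [hv, false_and, false_or]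
    refine ⟨fun h => ?_, fun ⟨hvp, h⟩ q hq => ?_⟩
    · have hvp : v ∈ pivots p := h p le_rfl v (hhead hv)
      exact ⟨hvp, (htail (inSpan_succ_of_mem_pivots hvp)).mp fun q hq => h q (Nat.le_of_lt hq)⟩
    · obtain rfl | hq := hq.eq_or_lt
      · simpa [hhead hv] using hvp
      · exact (htail (inSpan_succ_of_mem_pivots hvp)).mpr h q hq

/-- The list of the lists of length `n` that are reduced from `p` on. -/
def reducedLists (p : ℕ) : ℕ → List (List Vec3)
  | 0 => [[]]
  | n + 1 => (all.filter (InSpan p)).flatMap (fun v => (reducedLists p n).map (v :: ·)) ++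
      (pivots p).flatMap fun v => (reducedLists (p + 1) n).map (v :: ·)

theorem mem_reducedLists {p n : ℕ} {l : List Vec3} :
    l ∈ reducedLists p n ↔ l.length = n ∧ IsReduced p l := by
  induction n generalizing p l with
  | zero => simp +contextual [reducedLists, IsReduced, firstOutside]
  | succ n ih =>
    cases l with
    | nil => simp [reducedLists]
    | cons v l =>
      simp only [reducedLists, List.mem_append, List.mem_flatMap, List.mem_filter, mem_all,
        List.mem_map, ih, decide_eq_true_eq, List.cons.injEq, exists_eq_right_right, true_and,
        List.length_cons, add_left_inj, isReduced_cons]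
      grind

/-- The list `l`, transformed so that its first vector outside the span of the first `p` basis
vectors is a pivot. -/
def eliminate (p : ℕ) (l : List Vec3) : List Vec3 :=
  match firstOutside p l with
  | none => l
  | some v => l.map (· ᵥ* pivotMatrix p v)

theorem eliminate_spec {p : ℕ} (hp : p < 3) (l : List Vec3) :
    ∃ h : Matrix (Fin 3) (Fin 3) (ZMod 3), h.det = 1 ∧ Fixes p h ∧
      eliminate p l = l.map (· ᵥ* h) ∧ ∀ v ∈ firstOutside p (eliminate p l), v ∈ pivots p := by
  cases hl : firstOutside p l with
  | none =>
    exact ⟨1, Matrix.det_one, fun i _ => funext fun _ => Matrix.one_eq_pi_single,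
      by simp [eliminate, hl], by simp [eliminate, hl]⟩
  | some v =>
    have hv : ¬InSpan p v := by simpa using List.find?_some hl
    obtain ⟨hdet, hfix, hpivot⟩ := pivotMatrix_spec hp hv
    refine ⟨pivotMatrix p v, hdet, hfix, by simp [eliminate, hl], ?_⟩
    simpa [eliminate, hl, firstOutside_map hfix hdet] using hpivot

/-- The reduced list obtained from `l` by an elimination. -/
def normalForm (l : List Vec3) : List Vec3 := eliminate 2 (eliminate 1 (eliminate 0 l))

theorem mem_pivots_firstOutside_map {p q : ℕ} (hqp : q < p)
    {h : Matrix (Fin 3) (Fin 3) (ZMod 3)} (hh : Fixes p h) (hdet : h.det = 1) {l : List Vec3}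
    (hl : ∀ v ∈ firstOutside q l, v ∈ pivots q) :
    ∀ v ∈ firstOutside q (l.map (· ᵥ* h)), v ∈ pivots q := by
  rw [firstOutside_map (fun i hi => hh i (hi.trans hqp)) hdet]
  intro w hw
  obtain ⟨v, hv, rfl⟩ := Option.mem_map.mp hw
  rw [hh.vecMul_eq ((inSpan_succ_of_mem_pivots (hl v hv)).mono hqp)]
  exact hl v hv

theorem exists_normalForm_eq_map (l : List Vec3) :
    ∃ h : Matrix (Fin 3) (Fin 3) (ZMod 3), h.det = 1 ∧ normalForm l = l.map (· ᵥ* h) := by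
  obtain ⟨h₀, hdet₀, -, heq₀, -⟩ := eliminate_spec (p := 0) (by simp) l
  obtain ⟨h₁, hdet₁, -, heq₁, -⟩ := eliminate_spec (p := 1) (by simp) (eliminate 0 l)
  obtain ⟨h₂, hdet₂, -, heq₂, -⟩ := eliminate_spec (p := 2) (by simp) (eliminate 1 (eliminate 0 l))
  refine ⟨h₀ * h₁ * h₂, by simp [hdet₀, hdet₁, hdet₂], ?_⟩
  rw [normalForm, heq₂, heq₁, heq₀]
  simp

theorem isReduced_normalForm (l : List Vec3) : IsReduced 0 (normalForm l) := by
  obtain ⟨_, -, -, -, hl₀⟩ := eliminate_spec (p := 0) (by simp) l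
  obtain ⟨h₁, hdet₁, hfix₁, heq₁, hl₁⟩ := eliminate_spec (p := 1) (by simp) (eliminate 0 l)
  obtain ⟨h₂, hdet₂, hfix₂, heq₂, hl₂⟩ :=
    eliminate_spec (p := 2) (by simp) (eliminate 1 (eliminate 0 l))
  intro q hq
  match q with
  | 0 =>
    rw [normalForm, heq₂, heq₁]
    exact mem_pivots_firstOutside_map (by simp) hfix₂ hdet₂
      (mem_pivots_firstOutside_map (by simp) hfix₁ hdet₁ hl₀)
  | 1 =>
    rw [normalForm, heq₂]
    exact mem_pivots_firstOutside_map (by simp) hfix₂ hdet₂ hl₁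
  | 2 => exact hl₂
  | q + 3 =>
    intro v hv
    have : ¬InSpan (q + 3) v := by simpa using List.find?_some hv
    exact absurd (fun i hi => by omega) this

theorem Fixes.succ {p : ℕ} {h : Matrix (Fin 3) (Fin 3) (ZMod 3)} (hh : Fixes p h)
    (hdet : h.det = 1) {v : Vec3} (hv : v ∈ pivots p) (hvh : v ᵥ* h ∈ pivots p) :
    Fixes (p + 1) h := by
  suffices ∀ i : Fin 3, (i : ℕ) = p → h.row i = basis i from
    fun i hi => (Nat.lt_succ_iff_lt_or_eq.mp hi).elim (hh i) (this i)
  rintro i rfl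
  fin_cases i
  · simp_all [pivots]
  · simp_all [pivots]
  · have h0 : h.row 0 = basis 0 := hh 0 (by simp)
    have h1 : h.row 1 = basis 1 := hh 1 (by simp)
    have h2 : h.row 2 = basis 2 ∨ h.row 2 = -basis 2 := by
      obtain rfl | rfl : v = basis 2 ∨ v = -basis 2 := by simpa [pivots] using hv
      · simpa [pivots] using hvh
      · simpa [pivots, Matrix.neg_vecMul, or_comm, neg_eq_iff_eq_neg] using hvh
    refine h2.resolve_right fun h2 => ?_
    have hh : h = .of ![basis 0, basis 1, -basis 2] := by
      ext i
      fin_cases i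
      exacts [congrFun h0 _, congrFun h1 _, congrFun h2 _]
    exact absurd (hh ▸ hdet) (by decide)

theorem map_vecMul_eq_self {h : Matrix (Fin 3) (Fin 3) (ZMod 3)} (hdet : h.det = 1) {l : List Vec3}
    (hl : IsReduced 0 l) (hlh : IsReduced 0 (l.map (· ᵥ* h))) : l.map (· ᵥ* h) = l := by
  have hself {p : ℕ} (hh : Fixes p h) (hp : ∀ v ∈ l, InSpan p v) : l.map (· ᵥ* h) = l :=
    (List.map_congr_left fun v hv => hh.vecMul_eq (hp v hv)).trans (List.map_id l)
  have hfix (p : ℕ) : l.map (· ᵥ* h) = l ∨ Fixes p h := by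
    induction p with
    | zero => exact .inr fun i hi => absurd hi (Nat.not_lt_zero _)
    | succ p ih =>
      obtain heq | hh := ih
      · exact .inl heq
      cases hfirst : firstOutside p l with
      | none => exact .inl (hself hh (by simpa [firstOutside] using hfirst))
      | some v =>
        have hvh : firstOutside p (l.map (· ᵥ* h)) = some (v ᵥ* h) := by
          rw [firstOutside_map hh hdet, hfirst, Option.map_some]
        exact .inr (hh.succ hdet (hl p p.zero_le v hfirst) (hlh p p.zero_le _ hvh))
  exact (hfix 3).elim id fun hh => hself hh fun v _ i hi => by omega

theorem normalForm_map_vecMul {h : Matrix (Fin 3) (Fin 3) (ZMod 3)} (hdet : h.det = 1)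
    (l : List Vec3) : normalForm (l.map (· ᵥ* h)) = normalForm l := by
  obtain ⟨g, hg, heq⟩ := exists_normalForm_eq_map l
  obtain ⟨g', hg', heq'⟩ := exists_normalForm_eq_map (l.map (· ᵥ* h))
  have hmap : (normalForm l).map (· ᵥ* (g⁻¹ * h * g')) = normalForm (l.map (· ᵥ* h)) := by
    rw [heq, heq']
    simp [hg, ← mul_assoc]
  rw [← hmap]
  exact map_vecMul_eq_self (by simp [hg, hg', hdet]) (isReduced_normalForm l)
    (hmap ▸ isReduced_normalForm _)

theorem normalForm_eq_self {l : List Vec3} (hl : IsReduced 0 l) : normalForm l = l := by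
  obtain ⟨h, hdet, heq⟩ := exists_normalForm_eq_map l
  rw [heq]
  exact map_vecMul_eq_self hdet hl (heq ▸ isReduced_normalForm l)

/-- The number with the ternary digits `v 0, v 1, v 2`. -/
def code (v : Vec3) : ℕ := (v 0).val + 3 * (v 1).val + 9 * (v 2).val

theorem injective_code : Function.Injective code := by decide

end Vec3

/-! ### Counting orbits of invariants -/

namespace Invariant

open Vec3
open scoped Matrix

theorem mulRight_mulRight (s : Invariant) (g h : Matrix (Fin 3) (Fin 3) (ZMod 3)) :
    (s.mulRight g).mulRight h = s.mulRight (g * h) := by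
  cases s <;> simp [mulRight]

theorem shift_mulRight (s : Invariant) (σ y : ZMod 3) (h : Matrix (Fin 3) (Fin 3) (ZMod 3)) :
    (s.mulRight h).shift σ y = (s.shift σ y).mulRight h := by
  cases s <;> simp [mulRight, shift, Matrix.smul_vecMul, Matrix.add_vecMul]

theorem shift_shift (s : Invariant) (σ y σ' y' : ZMod 3) :
    (s.shift σ y).shift σ' y' = s.shift (σ' * σ) (y + y' * σ) := by
  cases s <;> simp [shift, smul_smul, add_smul, add_assoc]

theorem Related.symm {s t : Invariant} : s.Related t → t.Related s := by
  rintro ⟨h, σ, y, hh, hσ, rfl⟩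
  refine ⟨h⁻¹, σ, -(y * σ), by simp [hh], hσ, ?_⟩
  rw [← shift_mulRight, shift_shift, mulRight_mulRight, Matrix.mul_nonsing_inv h (by simp [hh]),
    ZMod3.mul_self_eq_one hσ, neg_mul, mul_assoc, ZMod3.mul_self_eq_one hσ, mul_one,
    add_neg_cancel]
  cases t <;> simp [mulRight, shift]

/-- The rows of the coordinates, as a list. -/
def rows : Invariant → List Vec3
  | typeI _ α μ => [α, μ]
  | typeII α γ β ρ => [α, γ, β, ρ]

theorem rows_mulRight (s : Invariant) (h : Matrix (Fin 3) (Fin 3) (ZMod 3)) :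
    (s.mulRight h).rows = s.rows.map (· ᵥ* h) := by
  cases s <;> rfl

/-- The coordinates with given rows. -/
def ofRows : List Vec3 → List Invariant
  | [α, μ] => [none, some 0, some 1, some 2].map (typeI · α μ)
  | [α, γ, β, ρ] => [typeII α γ β ρ]
  | _ => []

theorem mem_ofRows {s : Invariant} {l : List Vec3} : s ∈ ofRows l ↔ s.rows = l := by
  have hmem (k : Option (ZMod 3)) : k ∈ [none, some 0, some 1, some 2] := by revert k; decide
  unfold ofRows
  split <;> cases s <;>
    simp only [List.mem_map, hmem, true_and, List.mem_singleton, rows, typeI.injEq] <;> grind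

/-- The normal form of the rows of `s` is the least one of the orbit of `s` under shifts. -/
def IsMinimal (s : Invariant) : Prop :=
  ∀ σ y : ZMod 3, σ ≠ 0 → s.rows.map code ≤ (normalForm (s.shift σ y).rows).map code

instance : DecidablePred IsMinimal := fun _ => inferInstanceAs (Decidable (∀ _, _))

/-- Coordinates that represent the classes of `Related`. -/
def representatives : List Invariant :=
  ((reducedLists 0 2 ++ reducedLists 0 4).flatMap ofRows).filter IsMinimal

theorem length_representatives_and_nodup :
    representatives.length = 92 ∧ representatives.Nodup := by
  decide +kernel

theorem mem_representatives {s : Invariant} :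
    s ∈ representatives ↔ IsReduced 0 s.rows ∧ s.IsMinimal := by
  have hlength : s.rows.length = 2 ∨ s.rows.length = 4 := by cases s <;> simp [rows]
  simp only [representatives, List.mem_filter, List.mem_flatMap, List.mem_append, mem_reducedLists,
    mem_ofRows, decide_eq_true_eq, ← or_and_right, exists_eq_right', hlength, true_and]

theorem IsMinimal.map_code_le {s t : Invariant} (ht : t.IsMinimal) (hs : IsReduced 0 s.rows)
    (hst : s.Related t) : t.rows.map code ≤ s.rows.map code := by
  obtain ⟨h, σ, y, hh, hσ, rfl⟩ := hst
  rw [shift_mulRight, rows_mulRight] at hs ⊢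
  have := ht σ y hσ
  rwa [← normalForm_map_vecMul hh, normalForm_eq_self hs] at this

theorem Related.eq_of_rows_eq {s t : Invariant} (hst : s.Related t) (h : s.rows = t.rows) :
    s = t := by
  obtain ⟨h, σ, y, -, -, rfl⟩ := hst
  cases t <;> simp_all [mulRight, shift, rows]

theorem Related.eq_of_mem_representatives {s t : Invariant} (hst : s.Related t)
    (hs : s ∈ representatives) (ht : t ∈ representatives) : s = t := by
  rw [mem_representatives] at hs ht
  exact hst.eq_of_rows_eq <| injective_code.list_map <|
    (hs.2.map_code_le ht.1 hst.symm).antisymm (ht.2.map_code_le hs.1 hst)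

theorem exists_related_mem_representatives (s : Invariant) :
    ∃ t ∈ representatives, s.Related t := by
  have : Nonempty {σ : ZMod 3 // σ ≠ 0} := ⟨1, by decide⟩
  obtain ⟨⟨⟨σ, hσ⟩, y⟩, hmin⟩ := Finite.exists_min fun x : {σ : ZMod 3 // σ ≠ 0} × ZMod 3 =>
    (normalForm (s.shift x.1 x.2).rows).map code
  obtain ⟨h, hh, heq⟩ := exists_normalForm_eq_map (s.shift σ y).rows
  rw [← rows_mulRight] at heq
  refine ⟨(s.shift σ y).mulRight h, mem_representatives.mpr ⟨heq ▸ isReduced_normalForm _, ?_⟩,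
    Related.symm ⟨h, σ, y, hh, hσ, (shift_mulRight ..).symm⟩⟩
  intro σ' y' hσ'
  rw [← heq, shift_mulRight, shift_shift, rows_mulRight, normalForm_map_vecMul hh]
  exact hmin ⟨⟨σ' * σ, mul_ne_zero hσ' hσ⟩, y + y' * σ⟩

theorem exists_representatives : ∃ r : Fin 92 → Invariant,
    (∀ i j, (r i).Related (r j) → i = j) ∧ ∀ s : Invariant, ∃ i, s.Related (r i) := by
  obtain ⟨hlength, hnodup⟩ := length_representatives_and_nodup
  refine ⟨fun i => representatives.get (i.cast hlength.symm), fun i j hij => ?_, fun s => ?_⟩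
  · have := hij.eq_of_mem_representatives (List.get_mem ..) (List.get_mem ..)
    simpa using hnodup.injective_get this
  · obtain ⟨t, ht, hst⟩ := s.exists_related_mem_representatives
    obtain ⟨i, rfl⟩ := List.get_of_mem ht
    exact ⟨i.cast hlength, hst⟩

end Invariant

namespace Quasigroup

section Iso

variable {Q Q' Q'' : Type} {q : Quasigroup Q} {q' : Quasigroup Q'} {q'' : Quasigroup Q''}

theorem Iso.symm (h : q.Iso q') : q'.Iso q := by
  obtain ⟨f, hf⟩ := h
  exact ⟨f.symm, fun x y => f.injective (by simp [hf])⟩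

theorem Iso.trans (h : q.Iso q') (h' : q'.Iso q'') : q.Iso q'' := by
  obtain ⟨f, hf⟩ := h
  obtain ⟨f', hf'⟩ := h'
  exact ⟨f.trans f', fun x y => by simp [hf, hf']⟩

theorem Iso.distributive (h : q.Iso q') (hq : q.Distributive) : q'.Distributive := by
  obtain ⟨f, hf⟩ := h
  constructor <;> refine f.surjective.forall₃.mpr fun x y z => ?_
  · simp only [← hf, hq.1 x y z]
  · simp only [← hf, hq.2 x y z]

theorem Iso.medial (h : q.Iso q') (hq : q.Medial) : q'.Medial := by
  obtain ⟨f, hf⟩ := h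
  refine f.surjective.forall₂.mpr fun x y => f.surjective.forall₂.mpr fun u v => ?_
  simp only [← hf, hq x y u v]

theorem exists_iso_of_equiv (q : Quasigroup Q) (e : Q ≃ Q') : ∃ q' : Quasigroup Q', q.Iso q' :=
  ⟨{ mul := fun x y => e (q.mul (e.symm x) (e.symm y))
     leftBij := fun x => e.bijective.comp ((q.leftBij (e.symm x)).comp e.symm.bijective)
     rightBij := fun y => e.bijective.comp ((q.rightBij (e.symm y)).comp e.symm.bijective) },
    e, fun x y => by simp⟩

end Iso

end Quasigroup

namespace Invariant

/-- The quasigroup of order 243 with given coordinates. -/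
noncomputable def quasigroup (s : Invariant) : Quasigroup s.presentation.Group :=
  s.presentation.datum.quasigroup s.presentation.datum_θ_θ_θ
    (by rw [Presentation.card_group]; decide)

theorem quasigroup_iso_iff {s t : Invariant} : s.quasigroup.Iso t.quasigroup ↔ s.Related t := by
  refine ⟨fun h => ?_, s.hasInvariant_datum.exists_map_op (Presentation.card_group _)
    (Presentation.card_group _) t.hasInvariant_datum⟩
  obtain ⟨F⟩ := (AffineDatum.exists_map_op_iff s.quasigroup.leftBij
    fun y => (s.quasigroup.rightBij y).surjective).mp h
  exact s.hasInvariant_datum.related t.hasInvariant_datum F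

theorem Related.refl (s : Invariant) : s.Related s :=
  quasigroup_iso_iff.mp ⟨.refl _, fun _ _ => rfl⟩

end Invariant

theorem Quasigroup.Distributive.exists_iso_quasigroup {Q : Type} {q : Quasigroup Q}
    (hq : q.Distributive) (hmed : ¬q.Medial) (hQ : Nat.card Q = 243) :
    ∃ s : Invariant, q.Iso s.quasigroup := by
  obtain ⟨G, _, d, e, he⟩ := hq.exists_affineDatum hmed (hQ ▸ by decide) hQ.le
  have hG : Nat.card G = 243 := (Nat.card_congr e).symm.trans hQ
  obtain ⟨z, hz⟩ := e.surjective 0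
  have hl : Function.Injective (d.op 0) := by
    refine (Function.Injective.of_comp_iff' _ e.bijective).mp ?_
    simpa [Function.comp_def, ← hz, ← he] using e.injective.comp (q.leftBij z).injective
  have hr : Function.Injective (d.op · 0) := by
    refine (Function.Injective.of_comp_iff' _ e.bijective).mp ?_
    simpa [Function.comp_def, ← hz, ← he] using e.injective.comp (q.rightBij z).injective
  obtain ⟨s, hs⟩ := AffineDatum.exists_hasInvariant hG hl hr
  obtain ⟨f, hf⟩ := hs.exists_map_op hG (Presentation.card_group _) s.hasInvariant_datum (.refl s)
  exact ⟨s, e.trans f, fun x y => (congrArg f (he x y)).trans (hf _ _)⟩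

open Quasigroup in
/-- Up to isomorphism, there are exactly 92 distributive quasigroups of order 243
that are not medial. -/
theorem stmt :
    ∃ reps : Fin 92 → Quasigroup (Fin 243),
      (∀ i, (Distributive (reps i)) ∧ ¬ Medial (reps i)) ∧
      (∀ i j, i ≠ j → ¬ Iso (reps i) (reps j)) ∧
      (∀ (Q : Type) (q : Quasigroup Q), Nat.card Q = 243 →
        (Distributive q) → ¬ Medial q → ∃ i, Iso q (reps i)) := by
  obtain ⟨r, hr, hexists⟩ := Invariant.exists_representatives
  choose reps hreps using fun i =>
    (r i).quasigroup.exists_iso_of_equiv (Finite.equivFinOfCardEq (Presentation.card_group _))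
  refine ⟨reps, fun i => ⟨(hreps i).distributive ?_, fun h => ?_⟩, fun i j hij h => ?_,
    fun Q q hQ hq hmed => ?_⟩
  · exact AffineDatum.distributive_quasigroup ..
  · exact AffineDatum.not_medial_quasigroup _ _ _ ((hreps i).symm.medial h)
  · exact hij (hr i j (Invariant.quasigroup_iso_iff.mp
      ((hreps i).trans (h.trans (hreps j).symm))))
  · obtain ⟨s, hs⟩ := hq.exists_iso_quasigroup hmed hQ
    obtain ⟨i, hi⟩ := hexists s
    exact ⟨i, hs.trans ((Invariant.quasigroup_iso_iff.mpr hi).trans (hreps i))⟩
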